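/- Let G be a group, k a commutative G-ring, and ε ∈ k invertible. The morphism Tor_q^{GR_{n-1}(ε)}(𝟙,𝟙) → Tor_q^{GR_n(ε)}(𝟙,𝟙) induced by the inclusion GR_{n-1}(ε) → GR_n(ε) is an isomorphism for n ≥ 2q+2. -/

import Mathlib

open scoped TensorProduct

noncomputable section

/-! ### Bar-complex homology of an augmented algebra

For a `k`-algebra `A` with augmentation `ε : A →ₐ[k] k` (the algebra map corresponding to
the trivial module `𝟙 = k`), we form the (unnormalized) bar complex `C_q = A^{⊗ q}`
(tensors over `k`), with the usual differential
`d(a₁⊗…⊗a_q) = ε(a₁)(a₂⊗…) + Σ (-1)^i (…a_i a_{i+1}…) + (-1)^q ε(a_q)(a₁⊗…)`,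
whose homology is `Tor_*^A(𝟙,𝟙)`. -/

/-- The modules `A^{⊗ q}` of the bar complex. -/
def barC (k : Type) [CommRing k] (A : Type) [Ring A] [Algebra k A] : ℕ → ModuleCat k
  | 0 => ModuleCat.of k k
  | (q + 1) => ModuleCat.of k (A ⊗[k] (barC k A q))

variable (k : Type) [CommRing k] (A : Type) [Ring A] [Algebra k A] (ε : A →ₐ[k] k)

/-- Left multiplication of `A` on the leftmost bar factor (via `ε` in degree `0`). -/
def barAct : ∀ q : ℕ, A →ₗ[k] ((barC k A q : Type) →ₗ[k] (barC k A q : Type))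
  | 0 => (LinearMap.lsmul k k).comp ε.toLinearMap
  | (q + 1) =>
    show A →ₗ[k] ((A ⊗[k] (barC k A q : Type)) →ₗ[k] (A ⊗[k] (barC k A q : Type))) from
    { toFun := fun a => TensorProduct.map (LinearMap.mulLeft k a) LinearMap.id
      map_add' := by
        intro a b
        refine TensorProduct.ext' fun x y => ?_
        simp [add_mul, TensorProduct.add_tmul]
      map_smul' := by
        intro c a
        refine TensorProduct.ext' fun x y => ?_
        simp [TensorProduct.smul_tmul', smul_mul_assoc] }

/-- All terms of the bar differential except the first face. -/
def barB : ∀ q : ℕ, ((A ⊗[k] (barC k A q : Type)) →ₗ[k] (barC k A q : Type))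
  | 0 => - TensorProduct.lift ((LinearMap.lsmul k (barC k A 0 : Type)).comp ε.toLinearMap)
  | (q + 1) =>
    show (A ⊗[k] (A ⊗[k] (barC k A q : Type))) →ₗ[k] (A ⊗[k] (barC k A q : Type)) from
    TensorProduct.lift (LinearMap.mk₂ k
      (fun (a : A) (x : A ⊗[k] (barC k A q : Type)) =>
        -((show A →ₗ[k] ((A ⊗[k] (barC k A q : Type)) →ₗ[k] (A ⊗[k] (barC k A q : Type))) from
            barAct k A ε (q + 1)) a x) - a ⊗ₜ[k] (barB q x))
      (by intro a b x
          have key : ∀ f : A →ₗ[k] ((A ⊗[k] (barC k A q : Type)) →ₗ[k] (A ⊗[k] (barC k A q : Type))),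
              -(f (a + b) x) - (a + b) ⊗ₜ[k] (barB q x)
                = (-(f a x) - a ⊗ₜ[k] (barB q x)) + (-(f b x) - b ⊗ₜ[k] (barB q x)) := by
            intro f
            simp only [map_add, LinearMap.add_apply, TensorProduct.add_tmul]
            abel
          exact key (barAct k A ε (q + 1)))
      (by intro c a x
          have key : ∀ f : A →ₗ[k] ((A ⊗[k] (barC k A q : Type)) →ₗ[k] (A ⊗[k] (barC k A q : Type))),
              -(f (c • a) x) - (c • a) ⊗ₜ[k] (barB q x)
                = c • (-(f a x) - a ⊗ₜ[k] (barB q x)) := by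
            intro f
            simp only [map_smul, LinearMap.smul_apply, smul_sub, smul_neg,
              TensorProduct.smul_tmul']
          exact key (barAct k A ε (q + 1)))
      (by intro a x y
          simp only [map_add, LinearMap.map_add, TensorProduct.tmul_add]
          try abel)
      (by intro c a x
          simp only [map_smul, LinearMap.map_smul, TensorProduct.tmul_smul, smul_sub, smul_neg]
          try abel))

/-- The bar differential `C_{q+1} = A ⊗ C_q → C_q`. -/
def bard (q : ℕ) : (A ⊗[k] (barC k A q : Type)) →ₗ[k] (barC k A q : Type) :=
  TensorProduct.lift ((LinearMap.lsmul k (barC k A q : Type)).comp ε.toLinearMap)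
  + barB k A ε q

/-- Cycles of the bar complex. -/
def barCycles : ∀ q : ℕ, Submodule k (barC k A q : Type)
  | 0 => ⊤
  | (q + 1) =>
    show Submodule k (barC k A (q + 1) : Type) from LinearMap.ker (bard k A ε q)

/-- `Tor_q^A(𝟙, 𝟙)`, the homology of the algebra `A` with augmentation (trivial module) `ε`,
computed by the bar complex. -/
def barTor (q : ℕ) : Type :=
  (barCycles k A ε q) ⧸
    (Submodule.comap (barCycles k A ε q).subtype (LinearMap.range (bard k A ε q)))

instance (q : ℕ) : AddCommGroup (barTor k A ε q) :=
  inferInstanceAs (AddCommGroup ((barCycles k A ε q) ⧸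
    (Submodule.comap (barCycles k A ε q).subtype (LinearMap.range (bard k A ε q)))))

instance (q : ℕ) : Module k (barTor k A ε q) :=
  inferInstanceAs (Module k ((barCycles k A ε q) ⧸
    (Submodule.comap (barCycles k A ε q).subtype (LinearMap.range (bard k A ε q)))))

/-- The augmentation of a group algebra `k[G]`, corresponding to the trivial action of `G`
on `k`. -/
def groupAug (G : Type) [Group G] : MonoidAlgebra k G →ₐ[k] k :=
  MonoidAlgebra.lift k k G 1

/-- Group homology `H_*(G; k) = Tor_*^{k[G]}(k, k)` (with the trivial action on `k`). -/
abbrev groupTor (G : Type) [Group G] (q : ℕ) : Type :=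
  barTor k (MonoidAlgebra k G) (groupAug k G) q

section TorFunctoriality

variable (k : Type) [CommRing k]

/-- `barAct` in positive degrees, with its domain and codomain presented as tensor
products. -/
noncomputable abbrev barActT (A : Type) [Ring A] [Algebra k A] (ε : A →ₐ[k] k) (q : ℕ) :
    A →ₗ[k] ((A ⊗[k] (barC k A q : Type)) →ₗ[k] (A ⊗[k] (barC k A q : Type))) :=
  barAct k A ε (q + 1)

theorem barActT_tmul (A : Type) [Ring A] [Algebra k A] (ε : A →ₐ[k] k) (q : ℕ)
    (a b : A) (x : (barC k A q : Type)) :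
    barActT k A ε q a (b ⊗ₜ[k] x) = (a * b) ⊗ₜ[k] x := rfl

theorem barB_zero_apply (A : Type) [Ring A] [Algebra k A] (ε : A →ₐ[k] k)
    (a : A) (c : (barC k A 0 : Type)) :
    barB k A ε 0 (a ⊗ₜ[k] c) = -(ε a • c) := rfl

theorem barB_succ_apply (A : Type) [Ring A] [Algebra k A] (ε : A →ₐ[k] k) (q : ℕ)
    (a : A) (x : A ⊗[k] (barC k A q : Type)) :
    barB k A ε (q + 1) (a ⊗ₜ[k] x)
      = -(barActT k A ε q a x) - a ⊗ₜ[k] (barB k A ε q x) := by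
  rfl

variable {A₁ A₂ : Type} [Ring A₁] [Algebra k A₁] [Ring A₂] [Algebra k A₂]

/-- The chain map between bar complexes induced by an algebra map. -/
noncomputable def barMap (φ : A₁ →ₐ[k] A₂) :
    ∀ q : ℕ, (barC k A₁ q : Type) →ₗ[k] (barC k A₂ q : Type)
  | 0 => LinearMap.id
  | (q + 1) =>
    show (A₁ ⊗[k] (barC k A₁ q : Type)) →ₗ[k] (A₂ ⊗[k] (barC k A₂ q : Type)) from
      TensorProduct.map φ.toLinearMap (barMap φ q)

theorem barActT_comm (ε₁ : A₁ →ₐ[k] k) (ε₂ : A₂ →ₐ[k] k) (φ : A₁ →ₐ[k] A₂)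
    (q : ℕ) (a : A₁) :
    (barActT k A₂ ε₂ q (φ a)).comp (TensorProduct.map φ.toLinearMap (barMap k φ q))
      = (TensorProduct.map φ.toLinearMap (barMap k φ q)).comp (barActT k A₁ ε₁ q a) := by
  refine TensorProduct.ext' fun b y => ?_
  simp only [LinearMap.coe_comp, Function.comp_apply, TensorProduct.map_tmul]
  rw [barActT_tmul, barActT_tmul, TensorProduct.map_tmul]
  simp [map_mul]

theorem barB_comm (ε₁ : A₁ →ₐ[k] k) (ε₂ : A₂ →ₐ[k] k) (φ : A₁ →ₐ[k] A₂)
    (hφ : ε₂.comp φ = ε₁) : ∀ q : ℕ,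
    (barB k A₂ ε₂ q).comp (TensorProduct.map φ.toLinearMap (barMap k φ q))
      = (barMap k φ q).comp (barB k A₁ ε₁ q)
  | 0 => by
    have key : ∀ a : A₁, ε₂ (φ a) = ε₁ a := fun a => by
      have := AlgHom.congr_fun hφ a
      simpa using this
    refine TensorProduct.ext' fun a c => ?_
    simp only [LinearMap.coe_comp, Function.comp_apply, TensorProduct.map_tmul]
    rw [barB_zero_apply]
    show -(ε₂ (φ.toLinearMap a) • (barMap k φ 0 c)) = barMap k φ 0 (barB k A₁ ε₁ 0 (a ⊗ₜ[k] c))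
    rw [barB_zero_apply]
    show -(ε₂ (φ a) • c) = -(ε₁ a • c)
    rw [key a]
  | (q + 1) => by
    refine TensorProduct.ext' fun a (x : A₁ ⊗[k] (barC k A₁ q : Type)) => ?_
    have h1 := LinearMap.congr_fun (barActT_comm k ε₁ ε₂ φ q a) x
    simp only [LinearMap.coe_comp, Function.comp_apply] at h1
    have h2 := LinearMap.congr_fun (barB_comm ε₁ ε₂ φ hφ q) x
    simp only [LinearMap.coe_comp, Function.comp_apply] at h2
    refine (barB_succ_apply k A₂ ε₂ q (φ.toLinearMap a)
      (TensorProduct.map φ.toLinearMap (barMap k φ q) x)).trans ?_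
    refine Eq.trans ?_ (congrArg (TensorProduct.map φ.toLinearMap (barMap k φ q))
      (barB_succ_apply k A₁ ε₁ q a x).symm)
    show -(barActT k A₂ ε₂ q (φ.toLinearMap a)
            ((TensorProduct.map φ.toLinearMap (barMap k φ q)) x))
        - (φ.toLinearMap a) ⊗ₜ[k]
            (barB k A₂ ε₂ q ((TensorProduct.map φ.toLinearMap (barMap k φ q)) x))
      = TensorProduct.map φ.toLinearMap (barMap k φ q)
          (-(barActT k A₁ ε₁ q a x) - a ⊗ₜ[k] (barB k A₁ ε₁ q x))
    rw [map_sub, map_neg, TensorProduct.map_tmul]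
    simp only [AlgHom.toLinearMap_apply]
    rw [h1, h2]

/-- The chain map induced by an augmentation-preserving algebra map commutes with the
bar differential. -/
theorem barMap_comm (ε₁ : A₁ →ₐ[k] k) (ε₂ : A₂ →ₐ[k] k) (φ : A₁ →ₐ[k] A₂)
    (hφ : ε₂.comp φ = ε₁) (q : ℕ) :
    (bard k A₂ ε₂ q).comp (TensorProduct.map φ.toLinearMap (barMap k φ q))
      = (barMap k φ q).comp (bard k A₁ ε₁ q) := by
  have key : ∀ a : A₁, ε₂ (φ a) = ε₁ a := fun a => by
    have := AlgHom.congr_fun hφ a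
    simpa using this
  unfold bard
  rw [LinearMap.add_comp, LinearMap.comp_add, barB_comm k ε₁ ε₂ φ hφ q]
  congr 1
  refine TensorProduct.ext' fun a x => ?_
  simp only [LinearMap.coe_comp, Function.comp_apply, TensorProduct.map_tmul,
    TensorProduct.lift.tmul, LinearMap.lsmul_apply, AlgHom.toLinearMap_apply,
    LinearMap.map_smul]
  rw [key a]

theorem barMap_cycles (ε₁ : A₁ →ₐ[k] k) (ε₂ : A₂ →ₐ[k] k) (φ : A₁ →ₐ[k] A₂)
    (hφ : ε₂.comp φ = ε₁) (q : ℕ) :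
    ∀ x ∈ barCycles k A₁ ε₁ q, barMap k φ q x ∈ barCycles k A₂ ε₂ q := by
  intro x hx
  cases q with
  | zero => trivial
  | succ q =>
    show barMap k φ (q+1) x ∈ LinearMap.ker (bard k A₂ ε₂ q)
    have hx' : bard k A₁ ε₁ q x = 0 := hx
    have h := LinearMap.congr_fun (barMap_comm k ε₁ ε₂ φ hφ q) x
    simp only [LinearMap.coe_comp, Function.comp_apply] at h
    show bard k A₂ ε₂ q (TensorProduct.map φ.toLinearMap (barMap k φ q) x) = 0
    exact h.trans ((congrArg (barMap k φ q) hx').trans (map_zero _))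

/-- The map on `Tor_q(𝟙,𝟙)` induced by an augmentation-preserving algebra map. -/
noncomputable def torMap (ε₁ : A₁ →ₐ[k] k) (ε₂ : A₂ →ₐ[k] k) (φ : A₁ →ₐ[k] A₂)
    (hφ : ε₂.comp φ = ε₁) (q : ℕ) :
    barTor k A₁ ε₁ q →ₗ[k] barTor k A₂ ε₂ q := by
  refine Submodule.mapQ _ _
    ((barMap k φ q).restrict (barMap_cycles k ε₁ ε₂ φ hφ q)) ?_
  intro x hx
  simp only [Submodule.mem_comap, LinearMap.mem_range] at hx ⊢
  obtain ⟨y, hy⟩ := hx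
  refine ⟨TensorProduct.map φ.toLinearMap (barMap k φ q) y, ?_⟩
  have h := LinearMap.congr_fun (barMap_comm k ε₁ ε₂ φ hφ q) y
  simp only [LinearMap.coe_comp, Function.comp_apply] at h
  rw [h, hy]
  rfl

end TorFunctoriality

section GRsection

/-! The `G`-equivariant rook algebra `GR_n(ε)`: generators `s i` (transposition of
strands `i, i+1`), `p j` (deleted strand `j`) and `t g j` (identity with strand `j`
labelled `g : G`); a contractible middle component contributes the factor `ε`. -/

inductive GRGen (n : ℕ) (G : Type) : Type
  | s : Fin (n - 1) → GRGen n G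
  | p : Fin n → GRGen n G
  | t : G → Fin n → GRGen n G

variable (k G : Type) [CommRing k] [Group G] (n : ℕ) (ε : k)

abbrev GRs (i : Fin (n - 1)) : FreeAlgebra k (GRGen n G) := FreeAlgebra.ι k (GRGen.s i)
abbrev GRp (j : Fin n) : FreeAlgebra k (GRGen n G) := FreeAlgebra.ι k (GRGen.p j)
abbrev GRt (g : G) (j : Fin n) : FreeAlgebra k (GRGen n G) := FreeAlgebra.ι k (GRGen.t g j)

/-- The diagrammatic relations. -/
inductive GRRel : FreeAlgebra k (GRGen n G) → FreeAlgebra k (GRGen n G) → Prop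
  | s_sq (i : Fin (n - 1)) :
      GRRel (GRs k G n i * GRs k G n i) (1)
  | s_braid (i j : Fin (n - 1)) (h : (j : ℕ) = (i : ℕ) + 1) :
      GRRel (GRs k G n i * GRs k G n j * GRs k G n i) (GRs k G n j * GRs k G n i * GRs k G n j)
  | ss_comm (i j : Fin (n - 1)) (h : (i : ℕ) + 1 < (j : ℕ)) :
      GRRel (GRs k G n i * GRs k G n j) (GRs k G n j * GRs k G n i)
  | p_sq (j : Fin n) :
      GRRel (GRp k G n j * GRp k G n j) (ε • GRp k G n j)
  | pp_comm (j l : Fin n) (h : (j : ℕ) < (l : ℕ)) :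
      GRRel (GRp k G n j * GRp k G n l) (GRp k G n l * GRp k G n j)
  | sp_comm (i : Fin (n - 1)) (l : Fin n) (h : (l : ℕ) ≠ (i : ℕ) ∧ (l : ℕ) ≠ (i : ℕ) + 1) :
      GRRel (GRs k G n i * GRp k G n l) (GRp k G n l * GRs k G n i)
  | sp_slide (i : Fin (n - 1)) (j j' : Fin n) (h : (j : ℕ) = (i : ℕ)) (h' : (j' : ℕ) = (i : ℕ) + 1) :
      GRRel (GRs k G n i * GRp k G n j) (GRp k G n j' * GRs k G n i)
  | sp_slide' (i : Fin (n - 1)) (j j' : Fin n) (h : (j : ℕ) = (i : ℕ)) (h' : (j' : ℕ) = (i : ℕ) + 1) :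
      GRRel (GRs k G n i * GRp k G n j') (GRp k G n j * GRs k G n i)
  | psp (i : Fin (n - 1)) (j j' : Fin n) (h : (j : ℕ) = (i : ℕ)) (h' : (j' : ℕ) = (i : ℕ) + 1) :
      GRRel (GRp k G n j * GRs k G n i * GRp k G n j) (GRp k G n j * GRp k G n j')
  | t_mul (g h' : G) (j : Fin n) :
      GRRel (GRt k G n g j * GRt k G n h' j) (GRt k G n (g * h') j)
  | t_one (j : Fin n) :
      GRRel (GRt k G n 1 j) (1)
  | tt_comm (g h' : G) (j l : Fin n) (h : j ≠ l) :
      GRRel (GRt k G n g j * GRt k G n h' l) (GRt k G n h' l * GRt k G n g j)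
  | st_comm (g : G) (i : Fin (n - 1)) (l : Fin n) (h : (l : ℕ) ≠ (i : ℕ) ∧ (l : ℕ) ≠ (i : ℕ) + 1) :
      GRRel (GRs k G n i * GRt k G n g l) (GRt k G n g l * GRs k G n i)
  | st_slide (g : G) (i : Fin (n - 1)) (j j' : Fin n) (h : (j : ℕ) = (i : ℕ)) (h' : (j' : ℕ) = (i : ℕ) + 1) :
      GRRel (GRs k G n i * GRt k G n g j) (GRt k G n g j' * GRs k G n i)
  | st_slide' (g : G) (i : Fin (n - 1)) (j j' : Fin n) (h : (j : ℕ) = (i : ℕ)) (h' : (j' : ℕ) = (i : ℕ) + 1) :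
      GRRel (GRs k G n i * GRt k G n g j') (GRt k G n g j * GRs k G n i)
  | tp_absorb (g : G) (j : Fin n) :
      GRRel (GRt k G n g j * GRp k G n j) (GRp k G n j)
  | pt_absorb (g : G) (j : Fin n) :
      GRRel (GRp k G n j * GRt k G n g j) (GRp k G n j)
  | tp_comm (g : G) (j l : Fin n) (h : j ≠ l) :
      GRRel (GRt k G n g j * GRp k G n l) (GRp k G n l * GRt k G n g j)

/-- The diagram algebra: the quotient of the free algebra on the diagram generators by
the diagrammatic relations. -/
abbrev GRAlg : Type := RingQuot (GRRel k G n ε)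

/-- The augmentation corresponding to the trivial module `𝟙`: a diagram acts by `1`
if it has `n` left-to-right connections, and by `0` otherwise. -/
noncomputable def GRaug : GRAlg k G n ε →ₐ[k] k :=
  RingQuot.liftAlgHom k ⟨FreeAlgebra.lift k
      (fun x => match x with
        | GRGen.s _ => (1 : k)
        | GRGen.p _ => (0 : k)
        | GRGen.t _ _ => (1 : k)),
    by rintro x y h
       induction h <;>
         simp [GRs, GRp, GRt, FreeAlgebra.lift_ι_apply]⟩

end GRsection

section GRinclsection

variable (k G : Type) [CommRing k] [Group G] (n : ℕ) (ε : k)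

/-- Extending a diagram by an extra horizontal strand at the bottom, on generators. -/
def GRGenMap : GRGen (n - 1) G → GRGen n G
  | .s i => .s (Fin.castLE (by omega) i)
  | .p i => .p (Fin.castLE (by omega) i)
  | .t g j => .t g (Fin.castLE (by omega) j)

/-- The diagrammatic relations are preserved by the extension of diagrams. -/
theorem GRRel_map {x y : FreeAlgebra k (GRGen (n - 1) G)} (h : GRRel k G (n - 1) ε x y) :
    GRRel k G n ε
      ((FreeAlgebra.lift k fun g => FreeAlgebra.ι k (GRGenMap G n g)) x)
      ((FreeAlgebra.lift k fun g => FreeAlgebra.ι k (GRGenMap G n g)) y) := by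
  induction h with
  | s_sq i =>
    simp only [map_mul, map_one, map_smul, FreeAlgebra.lift_ι_apply, GRGenMap]
    exact GRRel.s_sq _
  | s_braid i j h =>
    simp only [map_mul, map_one, map_smul, FreeAlgebra.lift_ι_apply, GRGenMap]
    exact GRRel.s_braid _ _ (by simp_all [Fin.ext_iff, Fin.coe_castLE] <;> omega)
  | ss_comm i j h =>
    simp only [map_mul, map_one, map_smul, FreeAlgebra.lift_ι_apply, GRGenMap]
    exact GRRel.ss_comm _ _ (by simp_all [Fin.ext_iff, Fin.coe_castLE] <;> omega)
  | p_sq j =>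
    simp only [map_mul, map_one, map_smul, FreeAlgebra.lift_ι_apply, GRGenMap]
    exact GRRel.p_sq _
  | pp_comm j l h =>
    simp only [map_mul, map_one, map_smul, FreeAlgebra.lift_ι_apply, GRGenMap]
    exact GRRel.pp_comm _ _ (by simp_all [Fin.ext_iff, Fin.coe_castLE] <;> omega)
  | sp_comm i l h =>
    simp only [map_mul, map_one, map_smul, FreeAlgebra.lift_ι_apply, GRGenMap]
    exact GRRel.sp_comm _ _ (by simp_all [Fin.ext_iff, Fin.coe_castLE] <;> omega)
  | sp_slide i j j' h h' =>
    simp only [map_mul, map_one, map_smul, FreeAlgebra.lift_ι_apply, GRGenMap]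
    exact GRRel.sp_slide _ _ _ (by simp_all [Fin.ext_iff, Fin.coe_castLE] <;> omega) (by simp_all [Fin.ext_iff, Fin.coe_castLE] <;> omega)
  | sp_slide' i j j' h h' =>
    simp only [map_mul, map_one, map_smul, FreeAlgebra.lift_ι_apply, GRGenMap]
    exact GRRel.sp_slide' _ _ _ (by simp_all [Fin.ext_iff, Fin.coe_castLE] <;> omega) (by simp_all [Fin.ext_iff, Fin.coe_castLE] <;> omega)
  | psp i j j' h h' =>
    simp only [map_mul, map_one, map_smul, FreeAlgebra.lift_ι_apply, GRGenMap]
    exact GRRel.psp _ _ _ (by simp_all [Fin.ext_iff, Fin.coe_castLE] <;> omega) (by simp_all [Fin.ext_iff, Fin.coe_castLE] <;> omega)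
  | t_mul g h' j =>
    simp only [map_mul, map_one, map_smul, FreeAlgebra.lift_ι_apply, GRGenMap]
    exact GRRel.t_mul _ _ _
  | t_one j =>
    simp only [map_mul, map_one, map_smul, FreeAlgebra.lift_ι_apply, GRGenMap]
    exact GRRel.t_one _
  | tt_comm g h' j l h =>
    simp only [map_mul, map_one, map_smul, FreeAlgebra.lift_ι_apply, GRGenMap]
    exact GRRel.tt_comm _ _ _ _ (by simp_all [Fin.ext_iff, Fin.coe_castLE] <;> omega)
  | st_comm g i l h =>
    simp only [map_mul, map_one, map_smul, FreeAlgebra.lift_ι_apply, GRGenMap]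
    exact GRRel.st_comm _ _ _ (by simp_all [Fin.ext_iff, Fin.coe_castLE] <;> omega)
  | st_slide g i j j' h h' =>
    simp only [map_mul, map_one, map_smul, FreeAlgebra.lift_ι_apply, GRGenMap]
    exact GRRel.st_slide _ _ _ _ (by simp_all [Fin.ext_iff, Fin.coe_castLE] <;> omega) (by simp_all [Fin.ext_iff, Fin.coe_castLE] <;> omega)
  | st_slide' g i j j' h h' =>
    simp only [map_mul, map_one, map_smul, FreeAlgebra.lift_ι_apply, GRGenMap]
    exact GRRel.st_slide' _ _ _ _ (by simp_all [Fin.ext_iff, Fin.coe_castLE] <;> omega) (by simp_all [Fin.ext_iff, Fin.coe_castLE] <;> omega)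
  | tp_absorb g j =>
    simp only [map_mul, map_one, map_smul, FreeAlgebra.lift_ι_apply, GRGenMap]
    exact GRRel.tp_absorb _ _
  | pt_absorb g j =>
    simp only [map_mul, map_one, map_smul, FreeAlgebra.lift_ι_apply, GRGenMap]
    exact GRRel.pt_absorb _ _
  | tp_comm g j l h =>
    simp only [map_mul, map_one, map_smul, FreeAlgebra.lift_ι_apply, GRGenMap]
    exact GRRel.tp_comm _ _ _ (by simp_all [Fin.ext_iff, Fin.coe_castLE] <;> omega)

/-- The inclusion of diagram algebras given by adding an extra horizontal strand
(labelled by `1 ∈ G` in the equivariant case) at the bottom of a diagram. -/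
noncomputable def GRincl : GRAlg k G (n - 1) ε →ₐ[k] GRAlg k G n ε :=
  RingQuot.liftAlgHom k ⟨(RingQuot.mkAlgHom k (GRRel k G n ε)).comp
      (FreeAlgebra.lift k (fun x => FreeAlgebra.ι k (GRGenMap G n x))),
    by intro x y h
       simp only [AlgHom.coe_comp, Function.comp_apply]
       exact RingQuot.mkAlgHom_rel k (GRRel_map k G n ε h)⟩

/-- The inclusion is compatible with the augmentations (trivial modules). -/
theorem GRaug_incl : (GRaug k G n ε).comp (GRincl k G n ε) = GRaug k G (n - 1) ε := by
  apply RingQuot.ringQuot_ext'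
  apply FreeAlgebra.hom_ext
  funext x
  cases x <;>
    simp [GRincl, GRaug, GRGenMap, Function.comp, RingQuot.liftAlgHom_mkAlgHom_apply,
      FreeAlgebra.lift_ι_apply]

end GRinclsection

/-!
If `ε` is invertible, `∏ j, (1 - ε⁻¹ p_j)`, where `p_j` deletes the strand `j`, is a central
idempotent `z` of `GR_n(ε)` with augmentation `1`. It splits off the group algebra of the wreath
product `G ≀ S_n`, on which `GR_n(ε)` projects by killing all diagrams with a missing strand. The
element `z` intertwines the identity of `GR_n(ε)` with the projection to this summand, and
intertwined endomorphisms are homotopic on the bar complex, so the projection induces an isomorphism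
on `Tor`. It is compatible with the inclusions, so the claim is homological stability for the wreath
products `G ≀ S_n`.

For this, let `G ≀ S_n` act on injective words of labelled letters. The augmented complex of these
words is exact in a range, so the double complex of chains of `G ≀ S_n` with coefficients in it is
acyclic in a range. By Shapiro's lemma, its row `p` computes the homology of `G ≀ S_{n-p}`. Two
faces of the row `p + 1` differ by an element of `G ≀ S_n` that centralises the stabiliser, so on
homology they all agree, and their alternating sum is `0` for odd `p` and the stabilisation map for
even `p`. Induction on the degree gives the stability range.
-/

namespace RookHomology

open CategoryTheory CategoryTheory.Limits HomologicalComplex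

/-! ### Exactness in a range for double complexes -/

section DoubleComplex

variable {𝒜 : Type*} [Category 𝒜] [Abelian 𝒜]

theorem epi_toCycles_of_exactAt {K : ChainComplex 𝒜 ℕ} {m : ℕ} (h : K.ExactAt m) :
    Epi (K.toCycles (m + 1) m) :=
  Preadditive.epi_of_isZero_cokernel' _ (K.homologyIsCokernel (m + 1) m (by simp)) h.isZero_homology

/-- The sequence `Z (m + 1) ⟶ K (m + 1) ⟶ Z m` formed by the cycles `Z` of a complex `K`; it is
short exact when `K` is exact in degree `m`. -/
abbrev cyclesSequence (K : ChainComplex 𝒜 ℕ) (m : ℕ) : ShortComplex 𝒜 :=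
  .mk (K.iCycles (m + 1)) (K.toCycles (m + 1) m) (by simp [← cancel_mono (K.iCycles m)])

theorem cyclesSequence_shortExact {K : ChainComplex 𝒜 ℕ} {m : ℕ} (h : K.ExactAt m) :
    (cyclesSequence K m).ShortExact where
  exact := ShortComplex.exact_of_f_is_kernel _ <| KernelFork.IsLimit.ofι' _ _ fun x hx =>
    ⟨K.liftCycles x m (by simp) (by simpa using hx =≫ K.iCycles m), by simp⟩
  mono_f := inferInstanceAs (Mono (K.iCycles (m + 1)))
  epi_g := epi_toCycles_of_exactAt h

variable {D : ChainComplex (ChainComplex 𝒜 ℕ) ℕ} {i m q : ℕ}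

theorem epi_homologyMap_toCycles (hD : D.ExactAt m)
    (hi : ∀ j, j + 1 = i → Mono (homologyMap (D.iCycles (m + 1)) j)) :
    Epi (homologyMap (D.toCycles (m + 1) m) i) := by
  have hS := cyclesSequence_shortExact hD
  obtain _ | i := i
  · have := hS.epi_g
    exact epi_homologyMap_of_epi_of_not_rel _ _ (by simp)
  · have : Mono (homologyMap (cyclesSequence D m).f i) := hi i rfl
    have hδ : hS.δ (i + 1) i (by simp) = 0 := by
      rw [← cancel_mono (homologyMap (cyclesSequence D m).f i), hS.δ_comp, zero_comp]
    exact (hS.homology_exact₃ (i + 1) i (by simp)).epi_f hδ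

theorem homologyMap_toCycles_iCycles :
    homologyMap (D.toCycles (m + 1) m) i ≫ homologyMap (D.iCycles m) i =
      homologyMap (D.d (m + 1) m) i := by
  rw [← homologyMap_comp, toCycles_i]

theorem mono_homologyMap_iCycles_of_mono_d (hD : D.ExactAt m)
    (hi : ∀ j, j + 1 = i → Mono (homologyMap (D.iCycles (m + 1)) j))
    (hd : Mono (homologyMap (D.d (m + 1) m) i)) :
    Mono (homologyMap (D.iCycles m) i) := by
  rw [← homologyMap_toCycles_iCycles] at hd
  have := epi_homologyMap_toCycles hD hi
  have := mono_of_mono (homologyMap (D.toCycles (m + 1) m) i) (homologyMap (D.iCycles m) i)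
  have := isIso_of_mono_of_epi (homologyMap (D.toCycles (m + 1) m) i)
  rwa [mono_comp_iff_of_isIso] at hd

theorem mono_homologyMap_iCycles_of_epi_d (hD : D.ExactAt m)
    (hi : ∀ j, j + 1 = i → Mono (homologyMap (D.iCycles (m + 1)) j))
    (hd : Epi (homologyMap (D.d (m + 2) (m + 1)) i)) :
    Mono (homologyMap (D.iCycles m) i) := by
  rw [← homologyMap_toCycles_iCycles] at hd
  have := epi_homologyMap_toCycles hD hi
  have := epi_of_epi (homologyMap (D.toCycles (m + 2) (m + 1)) i)
    (homologyMap (D.iCycles (m + 1)) i)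
  have h0 : homologyMap (D.toCycles (m + 1) m) i = 0 := by
    rw [← cancel_epi (homologyMap (D.iCycles (m + 1)) i), ← homologyMap_comp,
      (cyclesSequence D m).zero, homologyMap_zero, comp_zero]
  exact (IsZero.of_epi_eq_zero _ h0).mono _

theorem epi_homologyMap_d_zero (hD : D.ExactAt 0)
    (hq : ∀ j, j + 1 = q → Mono (homologyMap (D.iCycles 1) j)) :
    Epi (homologyMap (D.d 1 0) q) := by
  have := epi_homologyMap_toCycles hD hq
  rw [← homologyMap_toCycles_iCycles]
  infer_instance

theorem mono_homologyMap_d_zero (hD₀ : D.ExactAt 0) (hD₁ : D.ExactAt 1)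
    (hq : ∀ j, j + 1 = q → Mono (homologyMap (D.iCycles 2) j))
    (hd : homologyMap (D.d 2 1) q = 0) :
    Mono (homologyMap (D.d 1 0) q) := by
  have := epi_homologyMap_toCycles hD₁ hq
  have h0 : homologyMap (D.iCycles 1) q = 0 := by
    rw [← cancel_epi (homologyMap (D.toCycles 2 1) q), homologyMap_toCycles_iCycles, hd, comp_zero]
  have := ((cyclesSequence_shortExact hD₀).homology_exact₂ q).mono_g h0
  rw [← homologyMap_toCycles_iCycles]
  exact mono_comp' this inferInstance

theorem mono_homologyMap_iCycles {n : ℕ} (hD : ∀ m < n, D.ExactAt m)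
    (hmono : ∀ i < q, ∀ m, Even m → m + 2 * i + 2 ≤ n → Mono (homologyMap (D.d (m + 1) m) i))
    (hepi : ∀ i < q, ∀ m, Even m → m + 2 * i + 1 ≤ n → Epi (homologyMap (D.d (m + 1) m) i))
    (hi : i < q) (hm : m + 2 * i + 2 ≤ n) : Mono (homologyMap (D.iCycles m) i) := by
  induction i using Nat.strong_induction_on generalizing m with
  | _ i ih =>
    have hpred : ∀ j, j + 1 = i → Mono (homologyMap (D.iCycles (m + 1)) j) :=
      fun j hj => ih j (by lia) (by lia) (by lia)
    rcases Nat.even_or_odd m with h | h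
    · exact mono_homologyMap_iCycles_of_mono_d (hD m (by lia)) hpred (hmono i hi m h hm)
    · exact mono_homologyMap_iCycles_of_epi_d (hD m (by lia)) hpred
        (hepi i hi (m + 1) h.add_one (by lia))

end DoubleComplex

/-! ### Chains on the nerve of a category -/

universe u

section ChainHomotopy

variable {𝒜 : Type*} [Category 𝒜] [Preadditive 𝒜] {K L : ChainComplex 𝒜 ℕ} {f g : K ⟶ L}

theorem homologyMap_eq_of_homotopy (h : ∀ i, K.X i ⟶ L.X (i + 1))
    (h_zero : f.f 0 = h 0 ≫ L.d 1 0 + g.f 0)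
    (h_succ : ∀ i, f.f (i + 1) =
      K.d (i + 1) i ≫ h i + h (i + 1) ≫ L.d (i + 2) (i + 1) + g.f (i + 1)) (q : ℕ)
    [K.HasHomology q] [L.HasHomology q] :
    homologyMap f q = homologyMap g q := by
  let H : Homotopy f g :=
    { hom := fun i j => if hij : i + 1 = j then h i ≫ eqToHom (by rw [hij]) else 0
      zero := fun i j hij => dif_neg hij
      comm := fun i => by
        cases i with
        | zero => rw [Homotopy.dNext_zero_chainComplex, Homotopy.prevD_chainComplex, h_zero]; simp
        | succ i =>
          rw [Homotopy.dNext_succ_chainComplex, Homotopy.prevD_chainComplex, h_succ]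
          simp }
  exact H.homologyMap_eq q

end ChainHomotopy

section NerveChains

/-- Strings of `q` composable arrows of `C` ending at a given object, that is, `q`-simplices of the
nerve. The last arrow is the outermost constructor, matching the bar complex, whose outermost tensor
factor is the leftmost one. -/
inductive ArrowString (C : Type u) [SmallCategory C] : ℕ → C → Type u
  | nil (Y : C) : ArrowString C 0 Y
  | cons {q : ℕ} {X Y : C} (f : X ⟶ Y) (t : ArrowString C q X) : ArrowString C (q + 1) Y

namespace ArrowString

variable {C D E : Type u} [SmallCategory C] [SmallCategory D] [SmallCategory E] {q : ℕ} {X Y Z : C}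

/-- Composition of the last arrow of a string with `f`. -/
def push (f : X ⟶ Y) : ArrowString C q X → ArrowString C q Y
  | nil _ => nil Y
  | cons g t => cons (g ≫ f) t

@[simp]
theorem push_nil (f : X ⟶ Y) : (nil X).push f = nil Y := rfl

@[simp]
theorem push_cons (f : X ⟶ Y) (g : Y ⟶ Z) (t : ArrowString C q X) :
    (cons f t).push g = cons (f ≫ g) t := rfl

theorem push_push (f : X ⟶ Y) (g : Y ⟶ Z) (t : ArrowString C q X) :
    (t.push f).push g = t.push (f ≫ g) := by
  cases t <;> simp

/-- The face of a string that forgets its last arrow. -/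
def tail : ArrowString C (q + 1) Y → Σ X, ArrowString C q X
  | cons _ t => ⟨_, t⟩

theorem tail_push (f : X ⟶ Y) (t : ArrowString C (q + 1) X) : (t.push f).tail = t.tail := by
  cases t; rfl

/-- The image of a string under a functor. -/
def map (F : C ⥤ D) : ∀ {q : ℕ} {Y : C}, ArrowString C q Y → ArrowString D q (F.obj Y)
  | _, _, nil Y => nil (F.obj Y)
  | _, _, cons f t => cons (F.map f) (t.map F)

@[simp]
theorem map_nil (F : C ⥤ D) (Y : C) : (nil Y).map F = nil (F.obj Y) := rfl

@[simp]
theorem map_cons (F : C ⥤ D) (f : X ⟶ Y) (t : ArrowString C q X) :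
    (cons f t).map F = cons (F.map f) (t.map F) := rfl

theorem map_push (F : C ⥤ D) (f : X ⟶ Y) (t : ArrowString C q X) :
    (t.push f).map F = (t.map F).push (F.map f) := by
  cases t <;> simp

theorem map_id (t : ArrowString C q Y) : t.map (𝟭 C) = t := by
  induction t with
  | nil => rfl
  | cons f t ih => exact congrArg (cons f) ih

theorem map_comp (F : C ⥤ D) (G : D ⥤ E) (t : ArrowString C q Y) :
    t.map (F ⋙ G) = (t.map F).map G := by
  induction t with
  | nil => rfl
  | cons f t ih => exact congrArg (cons _) ih

end ArrowString

open ArrowString hiding map map_id map_comp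

variable (K : Type u) [CommRing K]
variable {C D E : Type u} [SmallCategory C] [SmallCategory D] [SmallCategory E]

/-- The linear extension of `ArrowString.cons f`. -/
def consₗ {q : ℕ} {X Y : C} (f : X ⟶ Y) :
    (ArrowString C q X →₀ K) →ₗ[K] (ArrowString C (q + 1) Y →₀ K) :=
  Finsupp.lmapDomain K K (cons f)

/-- The linear extension of `ArrowString.push f`. -/
def pushₗ {q : ℕ} {X Y : C} (f : X ⟶ Y) :
    (ArrowString C q X →₀ K) →ₗ[K] (ArrowString C q Y →₀ K) :=
  Finsupp.lmapDomain K K (push f)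

/-- The linear extension of `ArrowString.map F`. -/
def mapₗ (F : C ⥤ D) {q : ℕ} {Y : C} :
    (ArrowString C q Y →₀ K) →ₗ[K] (ArrowString D q (F.obj Y) →₀ K) :=
  Finsupp.lmapDomain K K (ArrowString.map F)

/-- Chains on the strings ending at `Y`, viewed as chains on all strings. -/
def totalₗ {q : ℕ} (Y : C) : (ArrowString C q Y →₀ K) →ₗ[K] ((Σ Y, ArrowString C q Y) →₀ K) :=
  Finsupp.lmapDomain K K (Sigma.mk Y)

/-- The alternating sum of all faces of a string but the one that forgets the last arrow; these
faces have the same end point as the string. -/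
def innerBoundary : ∀ {q : ℕ} {Y : C}, ArrowString C (q + 1) Y → (ArrowString C q Y →₀ K)
  | 0, _, cons f t => -Finsupp.single (t.push f) 1
  | _ + 1, _, cons f t => -Finsupp.single (t.push f) 1 - consₗ K f (innerBoundary t)

/-- The linear extension of `innerBoundary`. -/
def innerBoundaryₗ {q : ℕ} {Y : C} :
    (ArrowString C (q + 1) Y →₀ K) →ₗ[K] (ArrowString C q Y →₀ K) :=
  Finsupp.linearCombination K (innerBoundary K)

/-- The linear extension of `ArrowString.tail`. -/
def tailₗ {q : ℕ} {Y : C} :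
    (ArrowString C (q + 1) Y →₀ K) →ₗ[K] ((Σ Y, ArrowString C q Y) →₀ K) :=
  Finsupp.lmapDomain K K tail

/-- The boundary of the strings ending at `Y`. -/
def fiberBoundary {q : ℕ} (Y : C) :
    (ArrowString C (q + 1) Y →₀ K) →ₗ[K] ((Σ Y, ArrowString C q Y) →₀ K) :=
  tailₗ K + totalₗ K Y ∘ₗ innerBoundaryₗ K

/-- The boundary operator of the chains on the nerve of `C`. -/
def nerveBoundary (C : Type u) [SmallCategory C] (q : ℕ) :
    ((Σ Y : C, ArrowString C (q + 1) Y) →₀ K) →ₗ[K] ((Σ Y : C, ArrowString C q Y) →₀ K) :=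
  Finsupp.linearCombination K fun t => fiberBoundary K t.1 (Finsupp.single t.2 1)

section simp_lemmas

variable {q : ℕ} {X Y : C}

@[simp]
theorem consₗ_single (f : X ⟶ Y) (t : ArrowString C q X) (c : K) :
    consₗ K f (Finsupp.single t c) = Finsupp.single (cons f t) c := by simp [consₗ]

@[simp]
theorem pushₗ_single (f : X ⟶ Y) (t : ArrowString C q X) (c : K) :
    pushₗ K f (Finsupp.single t c) = Finsupp.single (push f t) c := by simp [pushₗ]

@[simp]
theorem mapₗ_single (F : C ⥤ D) (t : ArrowString C q Y) (c : K) :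
    mapₗ K F (Finsupp.single t c) = Finsupp.single (t.map F) c := by simp [mapₗ]

@[simp]
theorem totalₗ_single (t : ArrowString C q Y) (c : K) :
    totalₗ K Y (Finsupp.single t c) = Finsupp.single ⟨Y, t⟩ c := by simp [totalₗ]

@[simp]
theorem tailₗ_single (t : ArrowString C (q + 1) Y) (c : K) :
    tailₗ K (Finsupp.single t c) = Finsupp.single t.tail c := by simp [tailₗ]

@[simp]
theorem innerBoundaryₗ_single (t : ArrowString C (q + 1) Y) (c : K) :
    innerBoundaryₗ K (Finsupp.single t c) = c • innerBoundary K t := by simp [innerBoundaryₗ]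

end simp_lemmas

variable {K}

theorem linearMap_ext_single {α : Type*} {M : Type*} [AddCommMonoid M] [Module K M]
    {f g : (α →₀ K) →ₗ[K] M} (h : ∀ a, f (Finsupp.single a 1) = g (Finsupp.single a 1))
    (x : α →₀ K) : f x = g x :=
  LinearMap.congr_fun (Finsupp.lhom_ext' fun a => LinearMap.ext_ring (h a)) x

theorem innerBoundaryₗ_consₗ {q : ℕ} {X Y : C} (f : X ⟶ Y) (x : ArrowString C (q + 1) X →₀ K) :
    innerBoundaryₗ K (consₗ K f x) = -pushₗ K f x - consₗ K f (innerBoundaryₗ K x) :=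
  linearMap_ext_single (f := innerBoundaryₗ K ∘ₗ consₗ K f)
    (g := -pushₗ K f - consₗ K f ∘ₗ innerBoundaryₗ K) (by simp [innerBoundary]) x

theorem pushₗ_consₗ {q : ℕ} {X Y Z : C} (f : X ⟶ Y) (g : Y ⟶ Z) (x : ArrowString C q X →₀ K) :
    pushₗ K g (consₗ K f x) = consₗ K (f ≫ g) x :=
  linearMap_ext_single (f := pushₗ K g ∘ₗ consₗ K f) (g := consₗ K (f ≫ g)) (by simp) x

theorem innerBoundary_push {q : ℕ} {X Y : C} (f : X ⟶ Y) (t : ArrowString C (q + 1) X) :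
    innerBoundary K (t.push f) = pushₗ K f (innerBoundary K t) := by
  cases q <;> cases t <;> simp [innerBoundary, push_push, pushₗ_consₗ]

theorem innerBoundaryₗ_innerBoundary {q : ℕ} {Y : C} (t : ArrowString C (q + 2) Y) :
    innerBoundaryₗ K (innerBoundary K t) = 0 := by
  induction q generalizing Y with
  | zero =>
    obtain _ | ⟨f, t⟩ := t
    obtain _ | ⟨g, t⟩ := t
    simp [innerBoundary, push_push]
  | succ q ih =>
    obtain _ | ⟨f, t⟩ := t
    simp [innerBoundary, innerBoundary_push, innerBoundaryₗ_consₗ, ih]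

theorem tailₗ_consₗ {q : ℕ} {X Y : C} (f : X ⟶ Y) (x : ArrowString C q X →₀ K) :
    tailₗ K (consₗ K f x) = totalₗ K X x :=
  linearMap_ext_single (f := tailₗ K ∘ₗ consₗ K f) (g := totalₗ K X) (by simp [tail]) x

theorem tailₗ_innerBoundary {q : ℕ} {X Y : C} (f : X ⟶ Y) (t : ArrowString C (q + 1) X) :
    tailₗ K (innerBoundary K (cons f t)) = -fiberBoundary K X (Finsupp.single t 1) := by
  simp only [innerBoundary, map_sub, map_neg, tailₗ_single, tail_push, tailₗ_consₗ, fiberBoundary,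
    LinearMap.add_apply, LinearMap.coe_comp, Function.comp_apply, innerBoundaryₗ_single, one_smul,
    neg_add_rev]
  abel

theorem nerveBoundary_totalₗ {q : ℕ} (Y : C) (x : ArrowString C (q + 1) Y →₀ K) :
    nerveBoundary K C q (totalₗ K Y x) = fiberBoundary K Y x :=
  linearMap_ext_single (f := nerveBoundary K C q ∘ₗ totalₗ K Y) (g := fiberBoundary K Y)
    (by simp [nerveBoundary]) x

theorem nerveBoundary_single {q : ℕ} {Y : C} (t : ArrowString C (q + 1) Y) :
    nerveBoundary K C q (Finsupp.single ⟨Y, t⟩ 1) =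
      Finsupp.single t.tail 1 + totalₗ K Y (innerBoundary K t) := by
  simp [nerveBoundary, fiberBoundary]

theorem nerveBoundary_nerveBoundary (q : ℕ) (x : (Σ Y, ArrowString C (q + 2) Y) →₀ K) :
    nerveBoundary K C q (nerveBoundary K C (q + 1) x) = 0 := by
  refine linearMap_ext_single (f := nerveBoundary K C q ∘ₗ nerveBoundary K C (q + 1)) (g := 0)
    (fun ⟨Y, t⟩ => ?_) x
  obtain _ | ⟨f, t⟩ := t
  have htail := nerveBoundary_totalₗ _ (Finsupp.single t (1 : K))
  simp only [totalₗ_single] at htail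
  simp [nerveBoundary_single, tail, nerveBoundary_totalₗ, fiberBoundary, tailₗ_innerBoundary,
    innerBoundaryₗ_innerBoundary]

variable (K) in
/-- The complex of chains on the nerve of `C`, computing the homology of `C` with constant
coefficients `K`. -/
def nerveComplex (C : Type u) [SmallCategory C] : ChainComplex (ModuleCat.{u} K) ℕ :=
  ChainComplex.of (fun q => ModuleCat.of K ((Σ Y : C, ArrowString C q Y) →₀ K))
    (fun q => ModuleCat.ofHom (nerveBoundary K C q))
    fun q => ModuleCat.hom_ext (LinearMap.ext (nerveBoundary_nerveBoundary q))

theorem nerveComplex_d (q : ℕ) :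
    (nerveComplex K C).d (q + 1) q = ModuleCat.ofHom (nerveBoundary K C q) :=
  ChainComplex.of_d (fun q => ModuleCat.of K ((Σ Y : C, ArrowString C q Y) →₀ K))
    (fun q => ModuleCat.ofHom (nerveBoundary K C q)) q

variable (K) in
/-- The map induced by a functor on chains of the nerve in degree `q`. -/
def nerveMapₗ (F : C ⥤ D) (q : ℕ) :
    ((Σ Y : C, ArrowString C q Y) →₀ K) →ₗ[K] ((Σ Y : D, ArrowString D q Y) →₀ K) :=
  Finsupp.lmapDomain K K fun t => ⟨F.obj t.1, t.2.map F⟩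

@[simp]
theorem nerveMapₗ_single (F : C ⥤ D) {q : ℕ} (t : Σ Y, ArrowString C q Y) (c : K) :
    nerveMapₗ K F q (Finsupp.single t c) = Finsupp.single ⟨F.obj t.1, t.2.map F⟩ c := by
  simp [nerveMapₗ]

theorem nerveMapₗ_totalₗ (F : C ⥤ D) {q : ℕ} (Y : C) (x : ArrowString C q Y →₀ K) :
    nerveMapₗ K F q (totalₗ K Y x) = totalₗ K (F.obj Y) (mapₗ K F x) :=
  linearMap_ext_single (f := nerveMapₗ K F q ∘ₗ totalₗ K Y)
    (g := totalₗ K (F.obj Y) ∘ₗ mapₗ K F) (by simp) x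

theorem mapₗ_consₗ (F : C ⥤ D) {q : ℕ} {X Y : C} (f : X ⟶ Y) (x : ArrowString C q X →₀ K) :
    mapₗ K F (consₗ K f x) = consₗ K (F.map f) (mapₗ K F x) :=
  linearMap_ext_single (f := mapₗ K F ∘ₗ consₗ K f) (g := consₗ K (F.map f) ∘ₗ mapₗ K F)
    (by simp) x

theorem mapₗ_innerBoundary (F : C ⥤ D) {q : ℕ} {Y : C} (t : ArrowString C (q + 1) Y) :
    mapₗ K F (innerBoundary K t) = innerBoundary K (t.map F) := by
  induction q generalizing Y with
  | zero =>
    obtain _ | ⟨f, t⟩ := t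
    simp [innerBoundary, map_push]
  | succ q ih =>
    obtain _ | ⟨f, t⟩ := t
    simp [innerBoundary, map_push, mapₗ_consₗ, ih]

theorem nerveBoundary_nerveMapₗ (F : C ⥤ D) (q : ℕ) (x : (Σ Y, ArrowString C (q + 1) Y) →₀ K) :
    nerveBoundary K D q (nerveMapₗ K F (q + 1) x) = nerveMapₗ K F q (nerveBoundary K C q x) := by
  refine linearMap_ext_single (f := nerveBoundary K D q ∘ₗ nerveMapₗ K F (q + 1))
    (g := nerveMapₗ K F q ∘ₗ nerveBoundary K C q) (fun ⟨Y, t⟩ => ?_) x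
  have htail : (t.map F).tail = ⟨F.obj t.tail.1, t.tail.2.map F⟩ := by cases t; rfl
  simp [nerveBoundary_single, nerveMapₗ_totalₗ, mapₗ_innerBoundary, htail]

variable (K) in
/-- The chain map on nerves induced by a functor. -/
def nerveMap (F : C ⥤ D) : nerveComplex K C ⟶ nerveComplex K D :=
  ChainComplex.ofHom (fun q => ModuleCat.ofHom (nerveMapₗ K F q))
    fun q => by
      rw [nerveComplex_d, nerveComplex_d]
      exact ModuleCat.hom_ext (LinearMap.ext (nerveBoundary_nerveMapₗ F q))

@[simp]
theorem nerveMap_id : nerveMap K (𝟭 C) = 𝟙 (nerveComplex K C) := by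
  ext q : 2
  exact LinearMap.ext (linearMap_ext_single (f := nerveMapₗ K (𝟭 C) q) (g := LinearMap.id)
    fun t => by simp [ArrowString.map_id])

theorem nerveMap_comp (F : C ⥤ D) (G : D ⥤ E) :
    nerveMap K (F ⋙ G) = nerveMap K F ≫ nerveMap K G := by
  ext q : 2
  exact LinearMap.ext (linearMap_ext_single (f := nerveMapₗ K (F ⋙ G) q)
    (g := nerveMapₗ K G q ∘ₗ nerveMapₗ K F q)
    fun t => by simp [ArrowString.map_comp])

section Homotopy

variable {F G : C ⥤ D}

/-- The prism over a string under a natural transformation `η : F ⟶ G`: the alternating sum of the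
strings `F X₀ ⟶ ⋯ ⟶ F Xᵢ ⟶ G Xᵢ ⟶ ⋯ ⟶ G X_q`. -/
def prism (K : Type u) [CommRing K] (η : F ⟶ G) :
    ∀ {q : ℕ} {Y : C}, ArrowString C q Y → (ArrowString D (q + 1) (G.obj Y) →₀ K)
  | _, _, nil Y => Finsupp.single (cons (η.app Y) (nil (F.obj Y))) 1
  | _, Y, cons f t => Finsupp.single (cons (η.app Y) ((cons f t).map F)) 1 -
      consₗ K (G.map f) (prism K η t)

variable (K) in
/-- The linear extension of `prism`. -/
def prismₗ (η : F ⟶ G) {q : ℕ} {Y : C} :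
    (ArrowString C q Y →₀ K) →ₗ[K] (ArrowString D (q + 1) (G.obj Y) →₀ K) :=
  Finsupp.linearCombination K (prism K η)

@[simp]
theorem prismₗ_single (η : F ⟶ G) {q : ℕ} {Y : C} (t : ArrowString C q Y) (c : K) :
    prismₗ K η (Finsupp.single t c) = c • prism K η t := by simp [prismₗ]

theorem prismₗ_consₗ (η : F ⟶ G) {q : ℕ} {X Y : C} (f : X ⟶ Y) (x : ArrowString C q X →₀ K) :
    prismₗ K η (consₗ K f x) =
      consₗ K (η.app Y) (mapₗ K F (consₗ K f x)) - consₗ K (G.map f) (prismₗ K η x) :=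
  linearMap_ext_single (f := prismₗ K η ∘ₗ consₗ K f)
    (g := consₗ K (η.app Y) ∘ₗ mapₗ K F ∘ₗ consₗ K f - consₗ K (G.map f) ∘ₗ prismₗ K η)
    (by simp [prism]) x

theorem prism_push (η : F ⟶ G) {q : ℕ} {X Y : C} (f : X ⟶ Y) (t : ArrowString C q X) :
    prism K η (t.push f) = pushₗ K (G.map f) (prism K η t) -
      Finsupp.single (cons (η.app X ≫ G.map f) (t.map F)) 1 +
      Finsupp.single (cons (η.app Y) ((t.push f).map F)) 1 := by
  cases t <;> simp [prism, pushₗ_consₗ, sub_eq_add_neg, add_comm]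

theorem innerBoundaryₗ_prism_nil (η : F ⟶ G) (Y : C) :
    innerBoundaryₗ K (prism K η (nil Y)) = -Finsupp.single ((nil Y).map G) 1 := by
  simp [prism, innerBoundary]

theorem innerBoundaryₗ_prism (η : F ⟶ G) {q : ℕ} {Y : C} (t : ArrowString C (q + 1) Y) :
    innerBoundaryₗ K (prism K η t) =
      -prismₗ K η (innerBoundary K t) - Finsupp.single (t.map G) 1 := by
  induction q generalizing Y with
  | zero =>
    obtain _ | ⟨f, t⟩ := t
    cases t
    simp [prism, innerBoundary]
  | succ q ih =>
    obtain _ | ⟨f, t⟩ := t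
    simp [prism, innerBoundary, innerBoundaryₗ_consₗ, ih, prismₗ_consₗ, prism_push, mapₗ_consₗ,
      mapₗ_innerBoundary, map_push]
    abel

theorem tailₗ_prism_cons (η : F ⟶ G) {q : ℕ} {X Y : C} (f : X ⟶ Y) (t : ArrowString C q X) :
    tailₗ K (prism K η (cons f t)) =
      Finsupp.single ⟨F.obj Y, (cons f t).map F⟩ 1 - totalₗ K (G.obj X) (prism K η t) := by
  simp [prism, tail, tailₗ_consₗ]

variable (K) in
/-- The linear extension of `prism` to the chains on the nerve. -/
def nerveHomotopyₗ (η : F ⟶ G) (q : ℕ) :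
    ((Σ Y, ArrowString C q Y) →₀ K) →ₗ[K] ((Σ Y, ArrowString D (q + 1) Y) →₀ K) :=
  Finsupp.linearCombination K fun t => totalₗ K (G.obj t.1) (prism K η t.2)

@[simp]
theorem nerveHomotopyₗ_single (η : F ⟶ G) {q : ℕ} (t : Σ Y, ArrowString C q Y) (c : K) :
    nerveHomotopyₗ K η q (Finsupp.single t c) = c • totalₗ K (G.obj t.1) (prism K η t.2) := by
  simp [nerveHomotopyₗ]

theorem nerveHomotopyₗ_totalₗ (η : F ⟶ G) {q : ℕ} (Y : C) (x : ArrowString C q Y →₀ K) :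
    nerveHomotopyₗ K η q (totalₗ K Y x) = totalₗ K (G.obj Y) (prismₗ K η x) :=
  linearMap_ext_single (f := nerveHomotopyₗ K η q ∘ₗ totalₗ K Y)
    (g := totalₗ K (G.obj Y) ∘ₗ prismₗ K η) (by simp) x

theorem nerveMapₗ_zero_eq (η : F ⟶ G) (x : (Σ Y, ArrowString C 0 Y) →₀ K) :
    nerveMapₗ K F 0 x =
      nerveBoundary K D 0 (nerveHomotopyₗ K η 0 x) + nerveMapₗ K G 0 x := by
  refine linearMap_ext_single (f := nerveMapₗ K F 0)
    (g := nerveBoundary K D 0 ∘ₗ nerveHomotopyₗ K η 0 + nerveMapₗ K G 0) (fun ⟨Y, t⟩ => ?_) x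
  cases t
  have htail : tailₗ K (prism K η (nil Y)) = Finsupp.single ⟨F.obj Y, nil (F.obj Y)⟩ 1 := by
    simp [prism, tail]
  simp [nerveBoundary_totalₗ, fiberBoundary, innerBoundaryₗ_prism_nil, htail]

theorem nerveMapₗ_succ_eq (η : F ⟶ G) {q : ℕ} (x : (Σ Y, ArrowString C (q + 1) Y) →₀ K) :
    nerveMapₗ K F (q + 1) x = nerveHomotopyₗ K η q (nerveBoundary K C q x) +
      nerveBoundary K D (q + 1) (nerveHomotopyₗ K η (q + 1) x) + nerveMapₗ K G (q + 1) x := by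
  refine linearMap_ext_single (f := nerveMapₗ K F (q + 1))
    (g := nerveHomotopyₗ K η q ∘ₗ nerveBoundary K C q +
      nerveBoundary K D (q + 1) ∘ₗ nerveHomotopyₗ K η (q + 1) + nerveMapₗ K G (q + 1))
    (fun ⟨Y, t⟩ => ?_) x
  obtain _ | ⟨f, t⟩ := t
  simp [nerveBoundary_totalₗ, fiberBoundary, innerBoundaryₗ_prism, tailₗ_prism_cons,
    nerveBoundary_single, nerveHomotopyₗ_totalₗ, tail]
  abel

theorem homologyMap_nerveMap_eq (η : F ⟶ G) (q : ℕ) :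
    homologyMap (nerveMap K F) q = homologyMap (nerveMap K G) q := by
  refine homologyMap_eq_of_homotopy (fun i => ModuleCat.ofHom (nerveHomotopyₗ K η i)) ?_
    (fun i => ?_) q
  · rw [nerveComplex_d]
    exact ModuleCat.hom_ext (LinearMap.ext (nerveMapₗ_zero_eq η))
  · rw [nerveComplex_d, nerveComplex_d]
    exact ModuleCat.hom_ext (LinearMap.ext (nerveMapₗ_succ_eq η))

theorem isIso_homologyMap_nerveMap (F : C ⥤ D) [F.IsEquivalence] (q : ℕ) :
    IsIso (homologyMap (nerveMap K F) q) := by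
  let e := F.asEquivalence
  refine ⟨homologyMap (nerveMap K e.inverse) q, ?_, ?_⟩
  · rw [← homologyMap_comp, ← nerveMap_comp, ← homologyMap_id, ← nerveMap_id]
    exact (homologyMap_nerveMap_eq e.unit q).symm
  · rw [← homologyMap_comp, ← nerveMap_comp, ← homologyMap_id, ← nerveMap_id]
    exact homologyMap_nerveMap_eq e.counit q

end Homotopy

end NerveChains

/-! ### The complex of injective words -/

section InjectiveWords

variable {I L : Type*}

/-- Words of length `p` in letters of `I` labelled by `L`, whose letters lie in `S` and are pairwise
distinct. -/
structure IsInjectiveWord (S : Finset I) (p : ℕ) (l : List (I × L)) : Prop where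
  length_eq : l.length = p
  fst_mem : ∀ a ∈ l, a.1 ∈ S
  nodup : (l.map Prod.fst).Nodup

theorem isInjectiveWord_cons [DecidableEq I] {S : Finset I} {p : ℕ} {a : I × L}
    {l : List (I × L)} :
    IsInjectiveWord S (p + 1) (a :: l) ↔ a.1 ∈ S ∧ IsInjectiveWord (S.erase a.1) p l := by
  constructor
  · rintro ⟨hlen, hmem, hnodup⟩
    simp only [List.map_cons, List.nodup_cons, List.mem_map, not_exists, not_and] at hnodup
    exact ⟨hmem a List.mem_cons_self, by simpa using hlen,
      fun b hb => Finset.mem_erase.2 ⟨hnodup.1 b hb, hmem b (List.mem_cons_of_mem a hb)⟩, hnodup.2⟩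
  · rintro ⟨ha, hlen, hmem, hnodup⟩
    refine ⟨by simpa using hlen, ?_, ?_⟩
    · rintro b (_ | ⟨_, hb⟩)
      exacts [ha, Finset.mem_of_mem_erase (hmem b hb)]
    · simp only [List.map_cons, List.nodup_cons, List.mem_map, not_exists, not_and]
      exact ⟨fun b hb => Finset.ne_of_mem_erase (hmem b hb), hnodup⟩

theorem IsInjectiveWord.mono {S T : Finset I} (hST : S ⊆ T) {p : ℕ} {l : List (I × L)}
    (h : IsInjectiveWord S p l) : IsInjectiveWord T p l :=
  ⟨h.length_eq, fun a ha => hST (h.fst_mem a ha), h.nodup⟩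

theorem IsInjectiveWord.eraseIdx {S : Finset I} {p : ℕ} {l : List (I × L)}
    (h : IsInjectiveWord S (p + 1) l) (i : Fin (p + 1)) : IsInjectiveWord S p (l.eraseIdx i) where
  length_eq := by simp [List.length_eraseIdx, h.length_eq, i.is_le]
  fst_mem a ha := h.fst_mem a (List.mem_of_mem_eraseIdx ha)
  nodup := List.eraseIdx_map _ _ _ ▸ h.nodup.sublist (List.eraseIdx_sublist _ _)

variable (K : Type*) [CommRing K]

section Word

variable {B : Type*}

/-- The alternating sum of the words obtained from a word by deleting a letter. -/
def wordBoundary : List B → (List B →₀ K)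
  | [] => 0
  | a :: l => Finsupp.single l 1 - Finsupp.lmapDomain K K (List.cons a) (wordBoundary l)

/-- The linear extension of `wordBoundary`. -/
def wordBoundaryₗ : (List B →₀ K) →ₗ[K] (List B →₀ K) :=
  Finsupp.linearCombination K (wordBoundary K)

/-- Prepending a letter to all words of a chain. -/
abbrev prependₗ (a : B) : (List B →₀ K) →ₗ[K] (List B →₀ K) :=
  Finsupp.lmapDomain K K (List.cons a)

/-- The part of a chain formed by the words with first letter `a`, with this letter removed. -/
abbrev unprependₗ (a : B) : (List B →₀ K) →ₗ[K] (List B →₀ K) :=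
  Finsupp.lcomapDomain (List.cons a) List.cons_injective

variable {K}

theorem wordBoundaryₗ_single (l : List B) :
    wordBoundaryₗ K (Finsupp.single l 1) = wordBoundary K l := by
  simp [wordBoundaryₗ]

theorem wordBoundaryₗ_prependₗ (a : B) (x : List B →₀ K) :
    wordBoundaryₗ K (prependₗ K a x) = x - prependₗ K a (wordBoundaryₗ K x) :=
  linearMap_ext_single (f := wordBoundaryₗ K ∘ₗ prependₗ K a)
    (g := LinearMap.id - prependₗ K a ∘ₗ wordBoundaryₗ K)
    (fun l => by simp [wordBoundaryₗ_single, wordBoundary]) x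

theorem wordBoundaryₗ_wordBoundaryₗ (x : List B →₀ K) :
    wordBoundaryₗ K (wordBoundaryₗ K x) = 0 := by
  refine linearMap_ext_single (f := wordBoundaryₗ K ∘ₗ wordBoundaryₗ K) (g := 0) (fun l => ?_) x
  rw [LinearMap.comp_apply, wordBoundaryₗ_single, LinearMap.zero_apply]
  induction l with
  | nil => exact map_zero _
  | cons a l ih =>
    rw [wordBoundary, map_sub, wordBoundaryₗ_prependₗ, ih, wordBoundaryₗ_single, map_zero, sub_zero,
      sub_self]

theorem wordBoundary_eq_sum (l : List B) :
    wordBoundary K l =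
      ∑ i ∈ Finset.range l.length, (-1 : K) ^ i • Finsupp.single (l.eraseIdx i) 1 := by
  induction l with
  | nil => rfl
  | cons a l ih =>
    rw [wordBoundary, ih, List.length_cons, Finset.sum_range_succ']
    simp [pow_succ, sub_eq_neg_add, -Finsupp.smul_single]

theorem unprependₗ_sum_prependₗ [DecidableEq B] (s : Finset B) (x : B → List B →₀ K) (a : B) :
    unprependₗ K a (∑ b ∈ s, prependₗ K b (x b)) = if a ∈ s then x a else 0 := by
  have h b : unprependₗ K a (prependₗ K b (x b)) = if a = b then x b else 0 := by
    ext l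
    split_ifs with hab
    · subst hab
      exact Finsupp.mapDomain_apply List.cons_injective _ _
    · refine Finsupp.mapDomain_of_notMem_range _ _ ?_
      rintro ⟨l', hl'⟩
      exact hab (List.cons.inj hl').1.symm
  simp only [map_sum, h, Finset.sum_ite_eq]

theorem exists_eq_sum_prependₗ {x : List B →₀ K} (hx : x [] = 0) :
    ∃ s : Finset B, (∀ a ∈ s, ∃ l, x (a :: l) ≠ 0) ∧
      x = ∑ a ∈ s, prependₗ K a (unprependₗ K a x) := by
  classical
  let s : Finset B := x.support.biUnion fun l => l.head?.toFinset
  have mem_s (a : B) : a ∈ s ↔ ∃ l, x (a :: l) ≠ 0 := by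
    simp only [s, Finset.mem_biUnion, Finsupp.mem_support_iff, Option.mem_toFinset, Option.mem_def]
    constructor
    · rintro ⟨_ | ⟨b, l⟩, hl, hb⟩
      · exact absurd hx hl
      · exact ⟨l, Option.some.inj hb ▸ hl⟩
    · exact fun ⟨l, hl⟩ => ⟨a :: l, hl, rfl⟩
  refine ⟨s, fun a => (mem_s a).1, Finsupp.ext fun l => ?_⟩
  cases l with
  | nil =>
    rw [hx, Finsupp.finsetSum_apply, Finset.sum_eq_zero]
    exact fun a _ => Finsupp.mapDomain_of_notMem_range _ _ (by simp)
  | cons a l =>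
    change _ = unprependₗ K a _ l
    rw [unprependₗ_sum_prependₗ]
    split_ifs with ha
    · rfl
    · exact not_not.1 fun h => ha ((mem_s a).2 ⟨l, h⟩)

theorem prependₗ_mem_supported {S T : Set (List B)} {a : B} (h : ∀ l ∈ S, a :: l ∈ T)
    {x : List B →₀ K} (hx : x ∈ Finsupp.supported K K S) :
    prependₗ K a x ∈ Finsupp.supported K K T :=
  Finsupp.supported_comap_lmapDomain K K (List.cons a) T (Finsupp.supported_mono h hx)

theorem unprependₗ_mem_supported {S T : Set (List B)} {a : B} (h : ∀ l, a :: l ∈ S → l ∈ T)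
    {x : List B →₀ K} (hx : x ∈ Finsupp.supported K K S) :
    unprependₗ K a x ∈ Finsupp.supported K K T :=
  fun l hl => h l (hx (by simpa using hl))

end Word

/-- The injective words in which the letter `i` occurs in the first `s` positions only. -/
def earlyWords (i : I) (s : ℕ) (S : Finset I) (p : ℕ) : Set (List (I × L)) :=
  {l | IsInjectiveWord S p l ∧ ∀ a ∈ l.drop s, a.1 ≠ i}

section EarlyWords

variable {K} {i : I} {s t p : ℕ} {S T : Finset I} {a : I × L} {l : List (I × L)}

theorem earlyWords_subset (hST : S ⊆ T) : earlyWords (L := L) i s S p ⊆ earlyWords i s T p :=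
  fun _ h => ⟨h.1.mono hST, h.2⟩

theorem earlyWords_subset_injectiveWords :
    earlyWords (L := L) i s S p ⊆ {l | IsInjectiveWord S p l} :=
  fun _ h => h.1

theorem injectiveWords_subset_earlyWords :
    {l : List (I × L) | IsInjectiveWord S p l} ⊆ earlyWords i p S p :=
  fun l (hl : IsInjectiveWord S p l) => ⟨hl, by simp [List.drop_eq_nil_of_le hl.length_eq.le]⟩

theorem earlyWords_zero_subset : earlyWords (L := L) i s S 0 ⊆ earlyWords i t S 0 :=
  fun _ h => ⟨h.1, by simp [List.length_eq_zero_iff.1 h.1.length_eq]⟩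

variable [DecidableEq I]

theorem cons_mem_earlyWords_succ :
    a :: l ∈ earlyWords i (s + 1) S (p + 1) ↔ a.1 ∈ S ∧ l ∈ earlyWords i s (S.erase a.1) p := by
  simp only [earlyWords, Set.mem_ofPred_eq, isInjectiveWord_cons, List.drop_succ_cons, and_assoc]

theorem cons_mem_earlyWords_zero :
    a :: l ∈ earlyWords i 0 S (p + 1) ↔
      a.1 ≠ i ∧ a.1 ∈ S ∧ l ∈ earlyWords i 0 (S.erase a.1) p := by
  simp only [earlyWords, Set.mem_ofPred_eq, isInjectiveWord_cons, List.drop_zero, List.mem_cons,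
    forall_eq_or_imp]
  tauto

theorem wordBoundaryₗ_mem_of_sum_prependₗ {t : Finset (I × L)} {z : I × L → List (I × L) →₀ K}
    (hz : ∀ a ∈ t, z a ∈ Finsupp.supported K K (earlyWords i s (S.erase a.1) p))
    (hdz : wordBoundaryₗ K (∑ a ∈ t, prependₗ K a (z a)) ∈
      Finsupp.supported K K (earlyWords i s S p)) (ha : a ∈ t) :
    wordBoundaryₗ K (z a) ∈ Finsupp.supported K K {l | a :: l ∈ earlyWords i s S p} := by
  classical
  have hsum : ∑ b ∈ t, prependₗ K b (wordBoundaryₗ K (z b)) =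
      ∑ b ∈ t, z b - wordBoundaryₗ K (∑ b ∈ t, prependₗ K b (z b)) := by
    simp only [map_sum, wordBoundaryₗ_prependₗ, Finset.sum_sub_distrib, sub_sub_cancel]
  have hmem : ∑ b ∈ t, prependₗ K b (wordBoundaryₗ K (z b)) ∈
      Finsupp.supported K K (earlyWords i s S p) :=
    hsum ▸ sub_mem (Submodule.sum_mem _ fun b hb =>
      Finsupp.supported_mono (earlyWords_subset (Finset.erase_subset _ _)) (hz b hb)) hdz
  have := unprependₗ_mem_supported (a := a) (T := {l | a :: l ∈ earlyWords i s S p})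
    (fun _ => id) hmem
  rwa [unprependₗ_sum_prependₗ t (fun b => wordBoundaryₗ K (z b)), if_pos ha] at this

/-- Subtracting the boundary of the chain `-∑ a • w a` from `z = ∑ a • z a` moves all occurrences
of `i` in `z` one step to the front. -/
theorem exists_sub_wordBoundaryₗ_mem_of_prependₗ {z : List (I × L) →₀ K}
    (hz : z ∈ Finsupp.supported K K (earlyWords i (s + 1) S (p + 1)))
    (hdz : wordBoundaryₗ K z ∈ Finsupp.supported K K (earlyWords i s S p))
    (H : ∀ a : I × L, a.1 ∈ S → ∀ x ∈ Finsupp.supported K K (earlyWords i s (S.erase a.1) p),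
      wordBoundaryₗ K x ∈ Finsupp.supported K K {l | a :: l ∈ earlyWords i s S p} →
        ∃ w ∈ Finsupp.supported K K (earlyWords i s (S.erase a.1) (p + 1)),
          prependₗ K a (x - wordBoundaryₗ K w) ∈
            Finsupp.supported K K (earlyWords i s S (p + 1))) :
    ∃ y ∈ Finsupp.supported K K (earlyWords i (s + 1) S (p + 2)),
      z - wordBoundaryₗ K y ∈ Finsupp.supported K K (earlyWords i s S (p + 1)) := by
  have hz_nil : z [] = 0 := by
    by_contra h
    simpa using (hz (Finsupp.mem_support_iff.2 h)).1.length_eq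
  obtain ⟨t, ht, hzt⟩ := exists_eq_sum_prependₗ hz_nil
  have htS : ∀ a ∈ t, a.1 ∈ S := fun a ha =>
    have ⟨_, hl⟩ := ht a ha
    (cons_mem_earlyWords_succ.1 (hz (Finsupp.mem_support_iff.2 hl))).1
  have hza (a : I × L) :
      unprependₗ K a z ∈ Finsupp.supported K K (earlyWords i s (S.erase a.1) p) :=
    unprependₗ_mem_supported (fun l hl => (cons_mem_earlyWords_succ.1 hl).2) hz
  have hdza (a) (ha : a ∈ t) := wordBoundaryₗ_mem_of_sum_prependₗ (fun b _ => hza b) (hzt ▸ hdz) ha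
  choose! w hw hzw using fun a ha => H a (htS a ha) _ (hza a) (hdza a ha)
  refine ⟨-∑ a ∈ t, prependₗ K a (w a), neg_mem (Submodule.sum_mem _ fun a ha =>
    prependₗ_mem_supported (fun l hl => cons_mem_earlyWords_succ.2 ⟨htS a ha, hl⟩) (hw a ha)), ?_⟩
  have hsub : z - wordBoundaryₗ K (-∑ a ∈ t, prependₗ K a (w a)) =
      ∑ a ∈ t, (prependₗ K a (unprependₗ K a z - wordBoundaryₗ K (w a)) + w a) := by
    simp only [map_neg, map_sub, map_sum, sub_neg_eq_add, wordBoundaryₗ_prependₗ,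
      Finset.sum_add_distrib, Finset.sum_sub_distrib]
    rw [← hzt]
    abel
  rw [hsub]
  exact Submodule.sum_mem _ fun a ha => add_mem (hzw a ha)
    (Finsupp.supported_mono (earlyWords_subset (Finset.erase_subset _ _)) (hw a ha))

end EarlyWords

/-- The complex of injective words in at least `p + 1` letters is exact at words of length `p`. -/
def InjectiveWordsExact (I L : Type*) (K : Type*) [CommRing K] (p : ℕ) : Prop :=
  ∀ S : Finset I, p + 1 ≤ S.card →
    ∀ z ∈ Finsupp.supported K K {l : List (I × L) | IsInjectiveWord S p l},
      wordBoundaryₗ K z = 0 →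
        ∃ y ∈ Finsupp.supported K K {l : List (I × L) | IsInjectiveWord S (p + 1) l},
          wordBoundaryₗ K y = z

variable {K}

section Exactness

variable [DecidableEq I]

theorem exists_prependₗ_sub_wordBoundaryₗ_mem_zero {i : I} {S : Finset I} {p : ℕ}
    (hE : InjectiveWordsExact I L K p) (hS : p + 2 ≤ S.card) {a : I × L} (ha : a.1 ∈ S)
    {z : List (I × L) →₀ K}
    (hz : z ∈ Finsupp.supported K K (earlyWords i 0 (S.erase a.1) p))
    (hdz : wordBoundaryₗ K z ∈ Finsupp.supported K K {l | a :: l ∈ earlyWords i 0 S p}) :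
    ∃ w ∈ Finsupp.supported K K (earlyWords i 0 (S.erase a.1) (p + 1)),
      prependₗ K a (z - wordBoundaryₗ K w) ∈
        Finsupp.supported K K (earlyWords i 0 S (p + 1)) := by
  by_cases hai : a.1 = i
  · have hdz0 : wordBoundaryₗ K z = 0 := by
      rw [show {l | a :: l ∈ earlyWords i 0 S p} = ∅ from Set.eq_empty_of_forall_notMem
        fun l hl => hl.2 a List.mem_cons_self hai, Finsupp.supported_empty] at hdz
      exact hdz
    obtain ⟨w, hw, hwz⟩ := hE (S.erase a.1) (by rw [Finset.card_erase_of_mem ha]; omega) z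
      (Finsupp.supported_mono earlyWords_subset_injectiveWords hz) hdz0
    refine ⟨w, fun l hl => ?_, ?_⟩
    · exact ⟨hw hl, fun b hb => hai ▸ Finset.ne_of_mem_erase ((hw hl).fst_mem b hb)⟩
    · rw [hwz, sub_self, map_zero]
      exact zero_mem _
  · refine ⟨0, zero_mem _, ?_⟩
    rw [map_zero, sub_zero]
    exact prependₗ_mem_supported (fun l hl => cons_mem_earlyWords_zero.2 ⟨hai, ha, hl⟩) hz

theorem exists_sub_wordBoundaryₗ_mem_earlyWords (i : I) (s : ℕ) {S : Finset I} {p : ℕ}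
    (hE : ∀ p' ≤ p, InjectiveWordsExact I L K p') (hS : p + 2 ≤ S.card) {z : List (I × L) →₀ K}
    (hz : z ∈ Finsupp.supported K K (earlyWords i (s + 1) S (p + 1)))
    (hdz : wordBoundaryₗ K z ∈ Finsupp.supported K K (earlyWords i s S p)) :
    ∃ y ∈ Finsupp.supported K K (earlyWords i (s + 1) S (p + 2)),
      z - wordBoundaryₗ K y ∈ Finsupp.supported K K (earlyWords i s S (p + 1)) := by
  induction s generalizing S p z with
  | zero =>
    exact exists_sub_wordBoundaryₗ_mem_of_prependₗ hz hdz fun a ha x hx hdx =>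
      exists_prependₗ_sub_wordBoundaryₗ_mem_zero (hE p le_rfl) hS ha hx hdx
  | succ s ih =>
    refine exists_sub_wordBoundaryₗ_mem_of_prependₗ hz hdz fun a ha x hx hdx => ?_
    have prepend_mem {x' : List (I × L) →₀ K}
        (hx' : x' ∈ Finsupp.supported K K (earlyWords i s (S.erase a.1) p)) :
        prependₗ K a x' ∈ Finsupp.supported K K (earlyWords i (s + 1) S (p + 1)) :=
      prependₗ_mem_supported (fun l hl => cons_mem_earlyWords_succ.2 ⟨ha, hl⟩) hx'
    cases p with
    | zero =>
      refine ⟨0, zero_mem _, ?_⟩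
      rw [map_zero, sub_zero]
      exact prepend_mem (Finsupp.supported_mono earlyWords_zero_subset hx)
    | succ p =>
      have hdx' : wordBoundaryₗ K x ∈ Finsupp.supported K K (earlyWords i s (S.erase a.1) p) :=
        Finsupp.supported_mono (fun l hl => (cons_mem_earlyWords_succ.1 hl).2) hdx
      obtain ⟨w, hw, hxw⟩ := ih (fun p' hp' => hE p' (hp'.trans p.le_succ))
        (by rw [Finset.card_erase_of_mem ha]; omega) hx hdx'
      exact ⟨w, hw, prepend_mem hxw⟩

theorem injectiveWordsExact [Nonempty L] (p : ℕ) : InjectiveWordsExact I L K p := by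
  induction p using Nat.strong_induction_on with | _ p IH => ?_
  intro S hS
  obtain ⟨i, hi⟩ := Finset.card_pos.1 (by omega : 0 < S.card)
  suffices H : ∀ s, ∀ z ∈ Finsupp.supported K K (earlyWords (L := L) i s S p),
      wordBoundaryₗ K z = 0 →
        ∃ y ∈ Finsupp.supported K K {l : List (I × L) | IsInjectiveWord S (p + 1) l},
          wordBoundaryₗ K y = z from
    fun z hz => H p z (Finsupp.supported_mono injectiveWords_subset_earlyWords hz)
  intro s
  induction s with
  | zero =>
    intro z hz hdz
    let a : I × L := (i, Classical.arbitrary L)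
    refine ⟨prependₗ K a z, prependₗ_mem_supported (fun l hl => ?_) hz, ?_⟩
    · exact isInjectiveWord_cons.2 ⟨hi, hl.1.length_eq,
        fun b hb => Finset.mem_erase.2 ⟨hl.2 b hb, hl.1.fst_mem b hb⟩, hl.1.nodup⟩
    · rw [wordBoundaryₗ_prependₗ, hdz, map_zero, sub_zero]
  | succ s ih =>
    intro z hz hdz
    cases p with
    | zero => exact ih z (Finsupp.supported_mono earlyWords_zero_subset hz) hdz
    | succ p =>
      obtain ⟨y, hy, hzy⟩ := exists_sub_wordBoundaryₗ_mem_earlyWords i s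
        (fun p' hp' => IH p' (by omega)) hS hz (hdz ▸ zero_mem _)
      obtain ⟨y', hy', hy'z⟩ := ih (z - wordBoundaryₗ K y) hzy
        (by rw [map_sub, hdz, wordBoundaryₗ_wordBoundaryₗ, sub_zero])
      exact ⟨y' + y, add_mem hy' (Finsupp.supported_mono earlyWords_subset_injectiveWords hy),
        by rw [map_add, hy'z, sub_add_cancel]⟩

end Exactness

/-- The type of words `l` with `IsInjectiveWord S p l`. -/
abbrev InjectiveWord (S : Finset I) (L : Type*) (p : ℕ) :=
  {l : List (I × L) // IsInjectiveWord S p l}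

/-- The face of an injective word that deletes its `i`-th letter. -/
def InjectiveWord.face {S : Finset I} {p : ℕ} (i : Fin (p + 1)) (l : InjectiveWord S L (p + 1)) :
    InjectiveWord S L p :=
  ⟨l.1.eraseIdx i, l.2.eraseIdx i⟩

/-- The boundary map of the augmented complex of injective words. -/
def injectiveWordBoundaryₗ (K : Type*) [CommRing K] (S : Finset I) (L : Type*) (p : ℕ) :
    (InjectiveWord S L (p + 1) →₀ K) →ₗ[K] (InjectiveWord S L p →₀ K) :=
  ∑ i : Fin (p + 1), (-1 : K) ^ (i : ℕ) • Finsupp.lmapDomain K K (InjectiveWord.face i)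

section InjectiveWord

variable {S : Finset I} {p : ℕ}

theorem lmapDomain_val_injectiveWordBoundaryₗ (x : InjectiveWord S L (p + 1) →₀ K) :
    Finsupp.lmapDomain K K Subtype.val (injectiveWordBoundaryₗ K S L p x) =
      wordBoundaryₗ K (Finsupp.lmapDomain K K Subtype.val x) := by
  refine linearMap_ext_single
    (f := Finsupp.lmapDomain K K Subtype.val ∘ₗ injectiveWordBoundaryₗ K S L p)
    (g := wordBoundaryₗ K ∘ₗ Finsupp.lmapDomain K K Subtype.val) (fun l => ?_) x
  simp [injectiveWordBoundaryₗ, wordBoundaryₗ_single, wordBoundary_eq_sum, l.2.length_eq,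
    Finset.sum_range, InjectiveWord.face, -Finsupp.smul_single]

theorem lmapDomain_val_injective :
    Function.Injective (Finsupp.lmapDomain K K (Subtype.val : InjectiveWord S L p → _)) :=
  Finsupp.mapDomain_injective Subtype.val_injective

theorem range_lmapDomain_val :
    LinearMap.range (Finsupp.lmapDomain K K (Subtype.val : InjectiveWord S L p → _)) =
      Finsupp.supported K K {l | IsInjectiveWord S p l} := by
  rw [LinearMap.range_eq_map, ← Finsupp.supported_univ, Finsupp.lmapDomain_supported,
    Set.image_univ, Subtype.range_coe_subtype]

theorem injectiveWordBoundaryₗ_injectiveWordBoundaryₗ (x : InjectiveWord S L (p + 2) →₀ K) :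
    injectiveWordBoundaryₗ K S L p (injectiveWordBoundaryₗ K S L (p + 1) x) = 0 :=
  lmapDomain_val_injective <| by
    rw [lmapDomain_val_injectiveWordBoundaryₗ, lmapDomain_val_injectiveWordBoundaryₗ,
      wordBoundaryₗ_wordBoundaryₗ, map_zero]

variable [DecidableEq I] [Nonempty L]

theorem exists_injectiveWordBoundaryₗ_eq (hp : p + 1 ≤ S.card) (x : InjectiveWord S L p →₀ K)
    (hx : wordBoundaryₗ K (Finsupp.lmapDomain K K Subtype.val x) = 0) :
    ∃ y, injectiveWordBoundaryₗ K S L p y = x := by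
  have hmem := LinearMap.mem_range_self (Finsupp.lmapDomain K K Subtype.val) x
  rw [range_lmapDomain_val] at hmem
  obtain ⟨y, hy, hyx⟩ := injectiveWordsExact p S hp _ hmem hx
  rw [← range_lmapDomain_val] at hy
  obtain ⟨y, rfl⟩ := hy
  exact ⟨y, lmapDomain_val_injective <| by rw [lmapDomain_val_injectiveWordBoundaryₗ, hyx]⟩

theorem injectiveWordBoundaryₗ_exact (hp : p + 2 ≤ S.card) :
    Function.Exact (injectiveWordBoundaryₗ K S L (p + 1)) (injectiveWordBoundaryₗ K S L p) := by
  refine fun x => ⟨fun hx => exists_injectiveWordBoundaryₗ_eq hp x ?_, ?_⟩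
  · rw [← lmapDomain_val_injectiveWordBoundaryₗ, hx, map_zero]
  · rintro ⟨y, rfl⟩
    exact injectiveWordBoundaryₗ_injectiveWordBoundaryₗ y

theorem injectiveWordBoundaryₗ_zero_surjective (hS : S.Nonempty) :
    Function.Surjective (injectiveWordBoundaryₗ K S L 0) := by
  refine fun x => exists_injectiveWordBoundaryₗ_eq hS.card_pos x ?_
  refine linearMap_ext_single (f := wordBoundaryₗ K ∘ₗ Finsupp.lmapDomain K K Subtype.val) (g := 0)
    (fun l => ?_) x
  simp [wordBoundaryₗ_single, List.length_eq_zero_iff.1 l.2.length_eq, wordBoundary]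

end InjectiveWord

end InjectiveWords

/-! ### Wreath products -/

section WreathProduct

variable {I : Type*} (G : Type*) [Group G]

/-- The wreath product `G ≀ Perm S`, as the group of permutations of `I × G` that commute with right
translations by `G` and fix all `(i, g)` with `i ∉ S`. -/
def wreathProduct (S : Finset I) : Subgroup (Equiv.Perm (I × G)) where
  carrier := {σ | (∀ a g, σ (a.1, a.2 * g) = ((σ a).1, (σ a).2 * g)) ∧ ∀ a, a.1 ∉ S → σ a = a}
  one_mem' := ⟨fun _ _ => rfl, fun _ _ => rfl⟩
  mul_mem' {σ τ} hσ hτ := ⟨fun a g => by simp only [Equiv.Perm.mul_apply, hτ.1, hσ.1],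
    fun a ha => by rw [Equiv.Perm.mul_apply, hτ.2 a ha, hσ.2 a ha]⟩
  inv_mem' {σ} hσ := ⟨fun a g => by rw [Equiv.Perm.inv_eq_iff_eq, hσ.1 (σ⁻¹ a)]; simp,
    fun a ha => by rw [Equiv.Perm.inv_eq_iff_eq, hσ.2 a ha]⟩

variable {G} {S T : Finset I} {σ : Equiv.Perm (I × G)} {a b : I × G}

theorem wreathProduct_mono (h : S ⊆ T) : wreathProduct G S ≤ wreathProduct G T :=
  fun _ hσ => ⟨hσ.1, fun a ha => hσ.2 a fun hS => ha (h hS)⟩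

theorem apply_fst_mem_iff (hσ : σ ∈ wreathProduct G S) : (σ a).1 ∈ S ↔ a.1 ∈ S := by
  refine ⟨fun h => ?_, fun h => ?_⟩ <;> by_contra hn
  · exact hn ((hσ.2 a hn).symm ▸ h)
  · exact hn ((σ.injective (hσ.2 (σ a) hn)).symm ▸ h)

theorem apply_fst_eq_iff (hσ : σ ∈ wreathProduct G S) : (σ a).1 = (σ b).1 ↔ a.1 = b.1 := by
  have fst_eq {τ : Equiv.Perm (I × G)} (hτ : τ ∈ wreathProduct G S) {a b : I × G}
      (h : a.1 = b.1) : (τ a).1 = (τ b).1 := by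
    have hb : b = (a.1, a.2 * (a.2⁻¹ * b.2)) := Prod.ext h.symm (mul_inv_cancel_left _ _).symm
    rw [hb, hτ.1]
  exact ⟨fun h => by simpa using fst_eq (inv_mem hσ) h, fst_eq hσ⟩

theorem commute_of_disjoint (hST : Disjoint S T) {τ : Equiv.Perm (I × G)}
    (hσ : σ ∈ wreathProduct G S) (hτ : τ ∈ wreathProduct G T) : Commute σ τ := by
  refine Equiv.ext fun a => ?_
  rw [Equiv.Perm.mul_apply, Equiv.Perm.mul_apply]
  by_cases ha : a.1 ∈ S
  · rw [hτ.2 _ (Finset.disjoint_left.1 hST ha),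
      hτ.2 _ (Finset.disjoint_left.1 hST ((apply_fst_mem_iff hσ).2 ha))]
  · rw [hσ.2 _ ha]
    by_cases hT : a.1 ∈ T
    · rw [hσ.2 _ (Finset.disjoint_right.1 hST ((apply_fst_mem_iff hτ).2 hT))]
    · rw [hτ.2 _ hT, hσ.2 _ ha]

theorem IsInjectiveWord.map {p : ℕ} {l : List (I × G)} (h : IsInjectiveWord S p l)
    (hσ : σ ∈ wreathProduct G S) : IsInjectiveWord S p (l.map σ) where
  length_eq := by rw [List.length_map, h.length_eq]
  fst_mem := List.forall_mem_map.2 fun a ha => (apply_fst_mem_iff hσ).2 (h.fst_mem a ha)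
  nodup := by
    have := h.nodup
    rw [List.Nodup, List.pairwise_map] at this ⊢
    exact List.pairwise_map.2 (this.imp fun hab hσab => hab ((apply_fst_eq_iff hσ).1 hσab))

instance (p : ℕ) : MulAction (wreathProduct G S) (InjectiveWord S G p) where
  smul w l := ⟨l.1.map w.1, l.2.map w.2⟩
  one_smul _ := Subtype.ext (List.map_id _)
  mul_smul v w _ := Subtype.ext (List.map_map (f := w.1) (g := v.1)).symm

theorem InjectiveWord.face_smul {p : ℕ} (i : Fin (p + 1)) (w : wreathProduct G S)
    (l : InjectiveWord S G (p + 1)) : face i (w • l) = w • face i l :=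
  Subtype.ext (List.eraseIdx_map _ _ _)

theorem mem_wreathProduct_of_map_eq {l : List (I × G)} (hσ : σ ∈ wreathProduct G S)
    (hl : l.map σ = l) (hT : ∀ i ∈ S, i ∉ T → ∃ g, (i, g) ∈ l) : σ ∈ wreathProduct G T := by
  refine ⟨hσ.1, fun a ha => ?_⟩
  by_cases haS : a.1 ∈ S
  · obtain ⟨g, hg⟩ := hT a.1 haS ha
    have hfix : σ (a.1, g) = (a.1, g) := List.map_inj_left.1 (hl.trans l.map_id.symm) _ hg
    simpa [hfix] using hσ.1 (a.1, g) (g⁻¹ * a.2)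
  · exact hσ.2 a haS

theorem map_eq_self_of_disjoint {l : List (I × G)} (hσ : σ ∈ wreathProduct G S)
    (hl : ∀ a ∈ l, a.1 ∉ S) : l.map σ = l :=
  (List.map_congr_left fun a ha => hσ.2 a (hl a ha)).trans l.map_id

section Generators

variable [DecidableEq I]

variable (G) in
/-- The element of the wreath product that exchanges the letters `i` and `j`. -/
def letterSwap (i j : I) : Equiv.Perm (I × G) :=
  Equiv.prodCongr (Equiv.swap i j) (Equiv.refl G)

/-- The element of the wreath product that multiplies the labels of the letter `i` by `g`. -/
def labelMul (g : G) (i : I) : Equiv.Perm (I × G) where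
  toFun a := if a.1 = i then (a.1, g * a.2) else a
  invFun a := if a.1 = i then (a.1, g⁻¹ * a.2) else a
  left_inv a := by by_cases h : a.1 = i <;> simp [h, Prod.ext_iff]
  right_inv a := by by_cases h : a.1 = i <;> simp [h, Prod.ext_iff]

omit [Group G] in
@[simp]
theorem letterSwap_apply (i j : I) (a : I × G) : letterSwap G i j a = (Equiv.swap i j a.1, a.2) :=
  rfl

theorem labelMul_apply (g : G) (i : I) (a : I × G) :
    labelMul g i a = if a.1 = i then (a.1, g * a.2) else a := rfl

theorem letterSwap_mem {i j : I} (hi : i ∈ S) (hj : j ∈ S) :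
    letterSwap G i j ∈ wreathProduct G S :=
  ⟨fun _ _ => rfl, fun _ ha => Prod.ext (Equiv.swap_apply_of_ne_of_ne
    (ne_of_mem_of_not_mem hi ha).symm (ne_of_mem_of_not_mem hj ha).symm) rfl⟩

theorem labelMul_mem (g : G) {i : I} (hi : i ∈ S) : labelMul g i ∈ wreathProduct G S :=
  ⟨fun a h => by simp only [labelMul_apply]; split_ifs <;> simp [mul_assoc],
    fun _ ha => if_neg (ne_of_mem_of_not_mem hi ha).symm⟩

theorem exists_mem_wreathProduct_apply_eq (ha : a.1 ∈ S) (hb : b.1 ∈ S) :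
    ∃ σ ∈ wreathProduct G S, σ a = b :=
  ⟨labelMul (b.2 * a.2⁻¹) b.1 * letterSwap G a.1 b.1,
    mul_mem (labelMul_mem _ hb) (letterSwap_mem ha hb), by simp [labelMul_apply]⟩

theorem exists_mem_wreathProduct_map_eq {p : ℕ} {l l' : List (I × G)}
    (hl : IsInjectiveWord S p l) (hl' : IsInjectiveWord S p l') :
    ∃ σ ∈ wreathProduct G S, l.map σ = l' := by
  induction p generalizing S l l' with
  | zero =>
    rw [List.length_eq_zero_iff.1 hl.length_eq, List.length_eq_zero_iff.1 hl'.length_eq]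
    exact ⟨1, one_mem _, rfl⟩
  | succ p ih =>
    obtain ⟨a, l, rfl⟩ := List.exists_cons_of_length_eq_add_one hl.length_eq
    obtain ⟨b, l', rfl⟩ := List.exists_cons_of_length_eq_add_one hl'.length_eq
    obtain ⟨σ, hσ, hab⟩ := exists_mem_wreathProduct_apply_eq
      (hl.fst_mem a List.mem_cons_self) (hl'.fst_mem b List.mem_cons_self)
    have hσl := hl.map hσ
    rw [List.map_cons, hab] at hσl
    obtain ⟨τ, hτ, hτl⟩ := ih (isInjectiveWord_cons.1 hσl).2 (isInjectiveWord_cons.1 hl').2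
    refine ⟨τ * σ, mul_mem (wreathProduct_mono (Finset.erase_subset _ _) hτ) hσ, ?_⟩
    rw [Equiv.Perm.coe_mul, ← List.map_map, List.map_cons, hab, List.map_cons, hτl,
      hτ.2 b (Finset.notMem_erase _ _)]

end Generators

end WreathProduct

section StandardWord

variable (G : Type*) [Group G]

/-- The word of length `p` in the letters `m, m + 1, …`, all labelled by `1`. -/
def standardWord : ℕ → ℕ → List (ℕ × G)
  | _, 0 => []
  | m, p + 1 => (m, 1) :: standardWord (m + 1) p

variable {G}

theorem mem_standardWord {m p i : ℕ} (hm : m ≤ i) (hi : i < m + p) :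
    (i, 1) ∈ standardWord G m p := by
  induction p generalizing m with
  | zero => omega
  | succ p ih =>
    obtain rfl | hm := hm.eq_or_lt
    · exact List.mem_cons_self
    · exact List.mem_cons_of_mem _ (ih hm (by omega))

theorem isInjectiveWord_standardWord (m p : ℕ) :
    IsInjectiveWord (Finset.Ico m (m + p)) p (standardWord G m p) := by
  induction p generalizing m with
  | zero => exact ⟨rfl, by simp [standardWord], List.nodup_nil⟩
  | succ p ih =>
    refine isInjectiveWord_cons.2 ⟨by simp, (ih (m + 1)).mono fun i hi => ?_⟩
    simp only [Finset.mem_Ico, Finset.mem_erase] at hi ⊢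
    omega

end StandardWord

/-! ### Action groupoids and Shapiro's lemma -/

section ActionGroupoid

open ArrowString

variable {M N : Type} [Group M] [Group N] {X Y : Type} [MulAction M X] [MulAction M Y]

/-- The functor between action groupoids induced by an equivariant map. -/
def actionFunctor (φ : X →[M] Y) : ActionCategory M X ⥤ ActionCategory M Y where
  obj x := (φ x.back : Y)
  map f := ⟨f.val, (map_smul φ f.val _).symm.trans (congrArg φ f.property)⟩

/-- The functor to an action groupoid given by a group that maps to the stabiliser of a point. -/
def stabilizerFunctor (ι : N →* M) (x : X) (hx : ∀ n, ι n • x = x) :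
    SingleObj N ⥤ ActionCategory M X where
  obj _ := x
  map n := ⟨ι n, hx n⟩
  map_id _ := Subtype.ext (map_one ι)
  map_comp m n := Subtype.ext (map_mul ι n m)

theorem stabilizerFunctor_isEquivalence [MulAction.IsPretransitive M X] {ι : N →* M}
    (hι : Function.Injective ι) {x : X} (hx : ∀ n, ι n • x = x)
    (hstab : ∀ m : M, m • x = x → m ∈ ι.range) : (stabilizerFunctor ι x hx).IsEquivalence where
  faithful := ⟨fun h => hι (congrArg Subtype.val h)⟩
  full := ⟨fun f => (hstab f.val f.property).imp fun _ h => Subtype.ext h⟩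
  essSurj := ⟨fun y => ⟨(), (MulAction.exists_smul_eq M x y.back).elim fun m hm =>
    ⟨(Groupoid.isoEquivHom _ _).symm ⟨m, hm⟩⟩⟩⟩

/-- A group element that moves `x` to `y` and centralises `N` identifies the functors given by the
two points. -/
def stabilizerFunctorHom {ι : N →* M} {x y : X} (hx : ∀ n, ι n • x = x) (hy : ∀ n, ι n • y = y)
    (m : M) (hm : m • x = y) (hcomm : ∀ n, Commute (ι n) m) :
    stabilizerFunctor ι x hx ⟶ stabilizerFunctor ι y hy where
  app _ := ⟨m, hm⟩
  naturality _ _ n := Subtype.ext (hcomm n).eq.symm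

/-- The lift of a string of group elements to the action groupoid that ends at a given point. -/
def liftString : ∀ {q : ℕ} {Y : SingleObj M}, ArrowString (SingleObj M) q Y → ∀ x : X,
    ArrowString (ActionCategory M X) q (x : ActionCategory M X)
  | _, _, nil _, _ => nil _
  | _, _, cons (m : M) t, x => cons (ActionCategory.homOfPair x m) (liftString t (m⁻¹ • x))

theorem map_π_liftString {q : ℕ} {Y : SingleObj M} (t : ArrowString (SingleObj M) q Y) (x : X) :
    (liftString t x).map (ActionCategory.π M X) = t := by
  induction t generalizing x with
  | nil => rfl
  | cons m t ih => exact congrArg (cons m) (ih _)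

theorem cons_liftString {q : ℕ} {x y : ActionCategory M X} (f : x ⟶ y)
    (t : ArrowString (SingleObj M) q ((ActionCategory.π M X).obj x)) :
    cons f (liftString t x.back) = liftString (cons ((ActionCategory.π M X).map f) t) y.back := by
  obtain ⟨⟨⟩, (x : X)⟩ := x
  obtain ⟨⟨⟩, (y : X)⟩ := y
  obtain ⟨(m : M), hm⟩ := f
  obtain rfl : x = m⁻¹ • y := eq_inv_smul_iff.2 hm
  rfl

theorem liftString_map_π {q : ℕ} {y : ActionCategory M X}
    (t : ArrowString (ActionCategory M X) q y) :
    liftString (t.map (ActionCategory.π M X)) y.back = t := by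
  induction t with
  | nil => rfl
  | cons f t ih => exact (cons_liftString f _).symm.trans (congrArg (cons f) ih)

variable (M X) in
/-- A string of an action groupoid is a string of group elements together with its end point. -/
def actionStringEquiv (q : ℕ) :
    (Σ y, ArrowString (ActionCategory M X) q y) ≃
      ArrowString (SingleObj M) q (SingleObj.star M) × X where
  toFun t := (t.2.map (ActionCategory.π M X), t.1.back)
  invFun t := ⟨(t.2 : ActionCategory M X), liftString t.1 t.2⟩
  left_inv t := Sigma.ext rfl (heq_of_eq (liftString_map_π t.2))
  right_inv t := Prod.ext (map_π_liftString t.1 t.2) rfl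

variable (K : Type) [CommRing K]

variable (M X) in
/-- Chains on the nerve of the action groupoid, as strings of group elements with coefficients in
the permutation module. -/
def actionChainEquiv (q : ℕ) :
    ((Σ y, ArrowString (ActionCategory M X) q y) →₀ K) ≃ₗ[K]
      (ArrowString (SingleObj M) q (SingleObj.star M) →₀ X →₀ K) :=
  Finsupp.domLCongr (actionStringEquiv M X q) ≪≫ₗ Finsupp.curryLinearEquiv K

variable {K}

theorem actionChainEquiv_nerveMapₗ (φ : X →[M] Y) (q : ℕ)
    (x : (Σ y, ArrowString (ActionCategory M X) q y) →₀ K) :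
    actionChainEquiv M Y K q (nerveMapₗ K (actionFunctor φ) q x) =
      Finsupp.mapRange.linearMap (Finsupp.lmapDomain K K φ) (actionChainEquiv M X K q x) := by
  refine linearMap_ext_single (f := (actionChainEquiv M Y K q).toLinearMap ∘ₗ
    nerveMapₗ K (actionFunctor φ) q) (g := Finsupp.mapRange.linearMap
      (Finsupp.lmapDomain K K φ) ∘ₗ (actionChainEquiv M X K q).toLinearMap) (fun t => ?_) x
  have hπ : (t.2.map (actionFunctor φ)).map (ActionCategory.π M Y) =
      t.2.map (ActionCategory.π M X) := (ArrowString.map_comp _ _ _).symm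
  simp only [actionChainEquiv, actionStringEquiv, LinearMap.coe_comp, LinearEquiv.coe_coe,
    Function.comp_apply, nerveMapₗ_single, LinearEquiv.trans_apply, Finsupp.domLCongr_apply,
    Finsupp.domCongr_apply, Finsupp.equivMapDomain_single, Equiv.coe_fn_mk, hπ,
    Finsupp.curryLinearEquiv_apply, Finsupp.curry_single, Finsupp.mapRange.linearMap_apply,
    Finsupp.mapRange_single, Finsupp.lmapDomain_apply, Finsupp.mapDomain_single]
  rfl

theorem actionChainEquiv_sum_nerveMapₗ {ι : Type*} [Fintype ι] (c : ι → K) (φ : ι → X →[M] Y)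
    (q : ℕ) (x : (Σ y, ArrowString (ActionCategory M X) q y) →₀ K) :
    actionChainEquiv M Y K q ((∑ i, c i • nerveMapₗ K (actionFunctor (φ i)) q) x) =
      Finsupp.mapRange.linearMap (∑ i, c i • Finsupp.lmapDomain K K (φ i))
        (actionChainEquiv M X K q x) := by
  ext t : 1
  simp [actionChainEquiv_nerveMapₗ, Finsupp.finsetSum_apply]

theorem mapRange_linearMap_exact {α P Q R : Type*} [AddCommGroup P] [Module K P]
    [AddCommGroup Q] [Module K Q] [AddCommGroup R] [Module K R] {f : P →ₗ[K] Q} {g : Q →ₗ[K] R}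
    (h : Function.Exact f g) :
    Function.Exact (Finsupp.mapRange.linearMap (α := α) f)
      (Finsupp.mapRange.linearMap (α := α) g) := by
  refine fun x => ⟨fun hx => ?_, ?_⟩
  · have hlift : ∀ y, ∃ z, (g y = 0 → f z = y) ∧ (y = 0 → z = 0) := fun y => by
      by_cases hy : y = 0
      · exact ⟨0, fun _ => by rw [hy, map_zero], fun _ => rfl⟩
      · by_cases hg : g y = 0
        · exact ((h y).1 hg).imp fun z hz => ⟨fun _ => hz, (absurd · hy)⟩
        · exact ⟨0, (absurd · hg), fun _ => rfl⟩
    choose s hs hs0 using hlift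
    exact ⟨x.mapRange s (hs0 0 rfl), Finsupp.ext fun a => hs _ (DFunLike.congr_fun hx a)⟩
  · rintro ⟨y, rfl⟩
    ext a : 1
    simp [h.apply_apply_eq_zero]

end ActionGroupoid

/-! ### Homological stability of wreath products -/

section InjectiveWordComplex

variable {G I : Type} [Group G] (K : Type) [CommRing K] (S : Finset I)

/-- Deletion of the `i`-th letter, as an equivariant map. -/
def faceHom (p : ℕ) (i : Fin (p + 1)) :
    InjectiveWord S G (p + 1) →[wreathProduct G S] InjectiveWord S G p where
  toFun := InjectiveWord.face i
  map_smul' := InjectiveWord.face_smul i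

variable (G) in
/-- The chains computing the homology of the wreath product with coefficients in the permutation
module on the injective words of length `p`. -/
abbrev injectiveWordRow (p : ℕ) : ChainComplex (ModuleCat.{0} K) ℕ :=
  nerveComplex K (ActionCategory (wreathProduct G S) (InjectiveWord S G p))

variable (G) in
/-- The alternating sum of the face maps between rows. -/
def injectiveWordRowMap (p : ℕ) : injectiveWordRow G K S (p + 1) ⟶ injectiveWordRow G K S p :=
  ∑ i : Fin (p + 1), (-1 : ℤ) ^ (i : ℕ) • nerveMap K (actionFunctor (faceHom S p i))

variable (G) in
/-- The map `injectiveWordRowMap` in degree `q`. -/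
def injectiveWordRowₗ (p q : ℕ) :
    ((Σ y, ArrowString (ActionCategory (wreathProduct G S) (InjectiveWord S G (p + 1))) q y)
      →₀ K) →ₗ[K]
    ((Σ y, ArrowString (ActionCategory (wreathProduct G S) (InjectiveWord S G p)) q y) →₀ K) :=
  ∑ i : Fin (p + 1), (-1 : K) ^ (i : ℕ) • nerveMapₗ K (actionFunctor (faceHom S p i)) q

variable {K S} {p q : ℕ}

theorem injectiveWordRowMap_f :
    (injectiveWordRowMap G K S p).f q = ModuleCat.ofHom (injectiveWordRowₗ G K S p q) := by
  change (HomologicalComplex.eval _ _ q).map (injectiveWordRowMap G K S p) = _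
  rw [injectiveWordRowMap, Functor.map_sum]
  refine ModuleCat.hom_ext ((ModuleCat.hom_sum _ _).trans (Finset.sum_congr rfl fun i _ => ?_))
  rw [Functor.map_zsmul]
  refine (Int.cast_smul_eq_zsmul K _ _).symm.trans ?_
  rw [Int.cast_pow, Int.cast_neg, Int.cast_one]
  rfl

theorem actionChainEquiv_injectiveWordRowₗ
    (x : (Σ y, ArrowString (ActionCategory (wreathProduct G S) (InjectiveWord S G (p + 1))) q y)
      →₀ K) :
    actionChainEquiv _ _ K q (injectiveWordRowₗ G K S p q x) =
      Finsupp.mapRange.linearMap (injectiveWordBoundaryₗ K S G p) (actionChainEquiv _ _ K q x) :=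
  actionChainEquiv_sum_nerveMapₗ _ _ q x

theorem injectiveWordRowₗ_comp_injectiveWordRowₗ :
    injectiveWordRowₗ G K S p q ∘ₗ injectiveWordRowₗ G K S (p + 1) q = 0 := by
  refine LinearMap.ext fun x =>
    (actionChainEquiv (wreathProduct G S) (InjectiveWord S G p) K q).injective ?_
  rw [LinearMap.comp_apply, actionChainEquiv_injectiveWordRowₗ,
    actionChainEquiv_injectiveWordRowₗ]
  ext t : 1
  simp [injectiveWordBoundaryₗ_injectiveWordBoundaryₗ]

theorem injectiveWordRowMap_comp_injectiveWordRowMap (p : ℕ) :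
    injectiveWordRowMap G K S (p + 1) ≫ injectiveWordRowMap G K S p = 0 := by
  ext q : 1
  rw [comp_f, injectiveWordRowMap_f, injectiveWordRowMap_f]
  exact ModuleCat.hom_ext injectiveWordRowₗ_comp_injectiveWordRowₗ

variable (G K S) in
/-- The double complex whose row `p` computes the homology of the wreath product with coefficients
in the injective words of length `p`. -/
def injectiveWordComplex : ChainComplex (ChainComplex (ModuleCat.{0} K) ℕ) ℕ :=
  ChainComplex.of (injectiveWordRow G K S) (injectiveWordRowMap G K S)
    injectiveWordRowMap_comp_injectiveWordRowMap

theorem injectiveWordComplex_d (p : ℕ) :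
    (injectiveWordComplex G K S).d (p + 1) p = injectiveWordRowMap G K S p :=
  ChainComplex.of_d (injectiveWordRow G K S) (injectiveWordRowMap G K S) p

variable [DecidableEq I]

theorem injectiveWordRowₗ_exact (hp : p + 2 ≤ S.card) :
    Function.Exact (injectiveWordRowₗ G K S (p + 1) q) (injectiveWordRowₗ G K S p q) :=
  Function.Exact.of_ladder_linearEquiv_of_exact (e₁ := (actionChainEquiv _ _ K q).symm)
    (e₂ := (actionChainEquiv _ _ K q).symm) (e₃ := (actionChainEquiv _ _ K q).symm)
    (LinearMap.ext fun x => (LinearEquiv.eq_symm_apply _).2 <| by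
      simp [actionChainEquiv_injectiveWordRowₗ])
    (LinearMap.ext fun x => (LinearEquiv.eq_symm_apply _).2 <| by
      simp [actionChainEquiv_injectiveWordRowₗ])
    (mapRange_linearMap_exact (injectiveWordBoundaryₗ_exact hp))

theorem injectiveWordRowₗ_zero_surjective (hS : S.Nonempty) :
    Function.Surjective (injectiveWordRowₗ G K S 0 q) := by
  refine (EquivLike.comp_surjective _ (actionChainEquiv _ _ K q)).1 ?_
  simp only [Function.comp_def, actionChainEquiv_injectiveWordRowₗ]
  exact (Finsupp.mapRange_surjective _ (map_zero _)
    (injectiveWordBoundaryₗ_zero_surjective hS)).comp (LinearEquiv.surjective _)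

theorem exactAt_injectiveWordComplex (hp : p < S.card) :
    (injectiveWordComplex G K S).ExactAt p := by
  cases p with
  | zero =>
    have hd : (injectiveWordComplex G K S).d 0 0 = 0 := shape _ _ _ one_ne_zero
    rw [exactAt_iff' _ 1 0 0 (ChainComplex.prev ℕ 0) ChainComplex.next_nat_zero,
      ShortComplex.exact_iff_epi _ hd]
    have (q : ℕ) : Epi ((injectiveWordRowMap G K S 0).f q) := by
      rw [injectiveWordRowMap_f]
      exact (ModuleCat.epi_iff_surjective (ModuleCat.ofHom (injectiveWordRowₗ G K S 0 q))).2
        (injectiveWordRowₗ_zero_surjective (Finset.card_pos.1 hp))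
    change Epi ((injectiveWordComplex G K S).d 1 0)
    rw [injectiveWordComplex_d]
    exact HomologicalComplex.epi_of_epi_f _ this
  | succ p =>
    rw [exactAt_iff' _ (p + 2) (p + 1) p (ChainComplex.prev ℕ _) (ChainComplex.next_nat_succ p)]
    refine exact_of_degreewise_exact _ fun q => ?_
    rw [ShortComplex.moduleCat_exact_iff_range_eq_ker, eq_comm, ← LinearMap.exact_iff]
    change Function.Exact (((injectiveWordComplex G K S).d (p + 2) (p + 1)).f q)
      (((injectiveWordComplex G K S).d (p + 1) p).f q)
    rw [injectiveWordComplex_d, injectiveWordComplex_d, injectiveWordRowMap_f,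
      injectiveWordRowMap_f]
    exact injectiveWordRowₗ_exact hp

end InjectiveWordComplex

section Stability

variable {G : Type} [Group G] {K : Type} [CommRing K] {m n p q : ℕ}

/-- The wreath product of `G` with the symmetric group on `n` letters. -/
abbrev wreath (G : Type*) [Group G] (n : ℕ) : Subgroup (Equiv.Perm (ℕ × G)) :=
  wreathProduct G (Finset.range n)

variable (G) in
/-- The inclusion of wreath products that adds fixed letters. -/
def wreathIncl (h : m ≤ n) : wreath G m →* wreath G n :=
  Subgroup.inclusion (wreathProduct_mono (Finset.range_mono h))

variable (G) in
/-- The word in the last `p` letters, whose stabiliser is the wreath product on the first `m`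
letters. -/
def lastWord (h : m + p = n) : InjectiveWord (Finset.range n) G p :=
  ⟨standardWord G m p, (isInjectiveWord_standardWord m p).mono fun i hi => by
    rw [Finset.mem_Ico] at hi
    exact Finset.mem_range.2 (h ▸ hi.2)⟩

theorem wreathIncl_smul {l : InjectiveWord (Finset.range n) G p}
    (hl : IsInjectiveWord (Finset.Ico m n) p l.1) (h : m ≤ n) (w : wreath G m) :
    wreathIncl G h w • l = l :=
  Subtype.ext <| map_eq_self_of_disjoint w.2 fun a ha => by
    have := Finset.mem_Ico.1 (hl.fst_mem a ha)
    simp [this]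

theorem isInjectiveWord_lastWord (h : m + p = n) :
    IsInjectiveWord (Finset.Ico m n) p (lastWord G h).1 :=
  h ▸ isInjectiveWord_standardWord m p

variable (G) in
/-- Shapiro's lemma identifies the homology of the wreath product on `m` letters with a row of the
double complex by means of this functor. -/
def shapiroFunctor (h : m + p = n) :
    SingleObj (wreath G m) ⥤ ActionCategory (wreath G n) (InjectiveWord (Finset.range n) G p) :=
  stabilizerFunctor (wreathIncl G (Nat.le.intro h)) (lastWord G h)
    (wreathIncl_smul (isInjectiveWord_lastWord h) _)

instance : MulAction.IsPretransitive (wreath G n) (InjectiveWord (Finset.range n) G p) where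
  exists_smul_eq l l' :=
    have ⟨σ, hσ, h⟩ := exists_mem_wreathProduct_map_eq l.2 l'.2
    ⟨⟨σ, hσ⟩, Subtype.ext h⟩

instance shapiroFunctor_isEquivalence (h : m + p = n) : (shapiroFunctor G h).IsEquivalence :=
  stabilizerFunctor_isEquivalence (Subgroup.inclusion_injective _) _ fun w hw => by
    have hword : (standardWord G m p).map w.1 = standardWord G m p := congrArg Subtype.val hw
    refine ⟨⟨w.1, mem_wreathProduct_of_map_eq w.2 hword fun i hi hi' => ⟨1, ?_⟩⟩, rfl⟩
    rw [Finset.mem_range] at hi hi'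
    exact mem_standardWord (not_lt.1 hi') (h ▸ hi)

theorem homologyMap_stabilizerFunctor_eq (h : m ≤ n) {l l' : InjectiveWord (Finset.range n) G p}
    (hl : IsInjectiveWord (Finset.Ico m n) p l.1) (hl' : IsInjectiveWord (Finset.Ico m n) p l'.1)
    (q : ℕ) :
    homologyMap (nerveMap K (stabilizerFunctor (wreathIncl G h) l (wreathIncl_smul hl h))) q =
      homologyMap
        (nerveMap K (stabilizerFunctor (wreathIncl G h) l' (wreathIncl_smul hl' h))) q := by
  obtain ⟨τ, hτ, hτl⟩ := exists_mem_wreathProduct_map_eq hl hl'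
  have hdisj : Disjoint (Finset.range m) (Finset.Ico m n) := by
    rw [Finset.range_eq_Ico]
    exact Finset.Ico_disjoint_Ico_consecutive 0 m n
  have hsub : Finset.Ico m n ⊆ Finset.range n := Finset.range_eq_Ico n ▸
    Finset.Ico_subset_Ico_left m.zero_le
  exact homologyMap_nerveMap_eq (stabilizerFunctorHom _ _ ⟨τ, wreathProduct_mono hsub hτ⟩
    (Subtype.ext hτl) fun w => Subtype.ext (commute_of_disjoint hdisj w.2 hτ).eq) q

theorem homologyMap_shapiroFunctor_face (h : m + (p + 1) = n) (h' : m + 1 + p = n)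
    (i : Fin (p + 1)) (q : ℕ) :
    homologyMap (nerveMap K (shapiroFunctor G h)) q ≫
        homologyMap (nerveMap K (actionFunctor (faceHom _ p i))) q =
      homologyMap (nerveMap K (wreathIncl G m.le_succ).toFunctor) q ≫
        homologyMap (nerveMap K (shapiroFunctor G h')) q := by
  rw [← homologyMap_comp, ← homologyMap_comp, ← nerveMap_comp, ← nerveMap_comp]
  have hword := isInjectiveWord_lastWord (G := G) h
  exact homologyMap_stabilizerFunctor_eq _ (l := InjectiveWord.face i (lastWord G h))
    (l' := InjectiveWord.face 0 (lastWord G h)) (hword.eraseIdx i) (hword.eraseIdx 0) q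

theorem homologyMap_injectiveWordRowMap (S : Finset ℕ) (q : ℕ) :
    homologyMap (injectiveWordRowMap G K S p) q =
      ∑ i : Fin (p + 1), (-1 : ℤ) ^ (i : ℕ) •
        homologyMap (nerveMap K (actionFunctor (faceHom S p i))) q :=
  ((homologyFunctor (ModuleCat K) _ q).map_sum _ _).trans <|
    Finset.sum_congr rfl fun _ _ => (homologyFunctor (ModuleCat K) _ q).map_zsmul

variable (G K) in
/-- Shapiro's lemma: the homology of the row of words of length `p` is that of the wreath product on
the remaining `m` letters. -/
def shapiroIso (h : m + p = n) (q : ℕ) :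
    homology (nerveComplex K (SingleObj (wreath G m))) q ≅
      homology ((injectiveWordComplex G K (Finset.range n)).X p) q :=
  have := isIso_homologyMap_nerveMap (K := K) (shapiroFunctor G h) q
  (asIso (homologyMap (nerveMap K (shapiroFunctor G h)) q) :)

theorem shapiroIso_hom_d (h : m + (p + 1) = n) (h' : m + 1 + p = n) (q : ℕ) :
    (shapiroIso G K h q).hom ≫
        homologyMap ((injectiveWordComplex G K (Finset.range n)).d (p + 1) p) q =
      (∑ i : Fin (p + 1), (-1 : ℤ) ^ (i : ℕ)) •
        homologyMap (nerveMap K (wreathIncl G m.le_succ).toFunctor) q ≫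
          (shapiroIso G K h' q).hom := by
  rw [injectiveWordComplex_d]
  refine (congrArg (homologyMap (nerveMap K (shapiroFunctor G h)) q ≫ ·)
    (homologyMap_injectiveWordRowMap _ q)).trans ?_
  rw [Preadditive.comp_sum, Finset.sum_smul]
  exact Finset.sum_congr rfl fun i _ => by
    rw [Preadditive.comp_zsmul, homologyMap_shapiroFunctor_face h h']
    rfl

theorem sum_neg_one_pow_of_even (hp : Even p) : ∑ i : Fin (p + 1), (-1 : ℤ) ^ (i : ℕ) = 1 := by
  rw [Fin.sum_univ_eq_sum_range fun i => (-1 : ℤ) ^ i, neg_one_geom_sum,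
    if_neg (Nat.not_even_iff_odd.2 hp.add_one)]

theorem homologyMap_injectiveWordComplex_d_eq_zero (h : m + 2 = n) (q : ℕ) :
    homologyMap ((injectiveWordComplex G K (Finset.range n)).d 2 1) q = 0 := by
  rw [← cancel_epi (shapiroIso G K h q).hom, shapiroIso_hom_d h (by lia), comp_zero]
  exact zero_smul ℤ _

variable (G K) in
/-- With respect to the identifications of Shapiro's lemma, the differential out of an odd row is
the stabilisation map. -/
def homologyMapDIso (hp : Even p) (h : m + (p + 1) = n) (q : ℕ) :
    Arrow.mk (homologyMap (nerveMap K (wreathIncl G m.le_succ).toFunctor) q) ≅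
      Arrow.mk (homologyMap ((injectiveWordComplex G K (Finset.range n)).d (p + 1) p) q) :=
  have h' : m + 1 + p = n := by lia
  Arrow.isoMk (shapiroIso G K h q) (shapiroIso G K h' q) <|
    (shapiroIso_hom_d h h' q).trans <| by
      rw [sum_neg_one_pow_of_even hp, one_smul]
      rfl

theorem epi_mono_homologyMap_wreathIncl (q : ℕ) :
    (∀ m, 2 * q ≤ m → Epi (homologyMap (nerveMap K (wreathIncl G m.le_succ).toFunctor) q)) ∧
      ∀ m, 2 * q + 1 ≤ m →
        Mono (homologyMap (nerveMap K (wreathIncl G m.le_succ).toFunctor) q) := by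
  induction q using Nat.strong_induction_on with
  | _ q ih =>
    have hexact (m : ℕ) :
        ∀ p < m + 1, (injectiveWordComplex G K (Finset.range (m + 1))).ExactAt p :=
      fun p hp => exactAt_injectiveWordComplex (by rwa [Finset.card_range])
    have hcycles (m p j : ℕ) (hj : j < q) (hp : p + 2 * j + 2 ≤ m + 1) :
        Mono (homologyMap ((injectiveWordComplex G K (Finset.range (m + 1))).iCycles p) j) := by
      refine mono_homologyMap_iCycles (hexact m) (fun i hi p' hp' hle => ?_)
        (fun i hi p' hp' hle => ?_) hj hp
      · exact ((MorphismProperty.monomorphisms _).arrow_mk_iso_iff (homologyMapDIso G K hp'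
          (Nat.sub_add_cancel (by lia : p' + 1 ≤ m + 1)) i)).1 ((ih i hi).2 _ (by lia))
      · exact ((MorphismProperty.epimorphisms _).arrow_mk_iso_iff (homologyMapDIso G K hp'
          (Nat.sub_add_cancel (by lia : p' + 1 ≤ m + 1)) i)).1 ((ih i hi).1 _ (by lia))
    refine ⟨fun m hm => ?_, fun m hm => ?_⟩
    · exact ((MorphismProperty.epimorphisms _).arrow_mk_iso_iff
        (homologyMapDIso G K Even.zero (n := m + 1) rfl q)).2 (epi_homologyMap_d_zero
          (hexact m 0 m.succ_pos) fun j hj => hcycles m 1 j (by lia) (by lia))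
    · obtain ⟨m, rfl⟩ := Nat.exists_eq_succ_of_ne_zero (by lia : m ≠ 0)
      exact ((MorphismProperty.monomorphisms _).arrow_mk_iso_iff
        (homologyMapDIso G K Even.zero (n := m + 2) rfl q)).2 (mono_homologyMap_d_zero
          (hexact _ 0 (by lia)) (hexact _ 1 (by lia)) (fun j hj => hcycles _ 2 j (by lia) (by lia))
          (homologyMap_injectiveWordComplex_d_eq_zero rfl q))

theorem isIso_homologyMap_wreathIncl (h : 2 * q + 1 ≤ m) :
    IsIso (homologyMap (nerveMap K (wreathIncl G m.le_succ).toFunctor) q) :=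
  have := (epi_mono_homologyMap_wreathIncl (G := G) (K := K) q).1 m (by lia)
  have := (epi_mono_homologyMap_wreathIncl (G := G) (K := K) q).2 m h
  isIso_of_mono_of_epi _

end Stability

/-! ### Functoriality of the bar complex -/

section BarStep

variable {K : Type} [CommRing K] {A B : Type} [Ring A] [Algebra K A] [Ring B] [Algebra K B]
variable {M N : Type} [AddCommGroup M] [Module K M] [AddCommGroup N] [Module K N]
variable (ε : A →ₐ[K] K) (b : A ⊗[K] M →ₗ[K] M)

variable (M) in
/-- The first face of the bar complex, which applies the augmentation to the leading factor. -/
def barFace : A ⊗[K] M →ₗ[K] M :=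
  TensorProduct.lift (LinearMap.lsmul K M ∘ₗ ε.toLinearMap)

@[simp]
theorem barFace_tmul (a : A) (x : M) : barFace M ε (a ⊗ₜ x) = ε a • x := rfl

@[simp]
theorem barFace_smul (a : A) (y : A ⊗[K] M) : barFace M ε (a • y) = ε a • barFace M ε y := by
  induction y with
  | zero => simp only [smul_zero, map_zero]
  | add x y hx hy => simp only [smul_add, map_add, hx, hy]
  | tmul a' x => simp only [TensorProduct.smul_tmul', barFace_tmul, smul_eq_mul, map_mul, mul_smul]

/-- One step of the recursion for `barB`, the sum of all faces but the first. -/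
def barStep : A ⊗[K] (A ⊗[K] M) →ₗ[K] A ⊗[K] M :=
  -TensorProduct.lift (Algebra.lsmul K K (A ⊗[K] M)).toLinearMap - b.lTensor A

@[simp]
theorem barStep_tmul (a : A) (y : A ⊗[K] M) : barStep b (a ⊗ₜ y) = -(a • y) - a ⊗ₜ b y := rfl

@[simp]
theorem barStep_smul (a : A) (y : A ⊗[K] (A ⊗[K] M)) :
    barStep b (a • y) = a • barStep b y := by
  induction y with
  | zero => simp only [smul_zero, map_zero]
  | add x y hx hy => simp only [smul_add, map_add, hx, hy]
  | tmul a' x =>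
    simp only [TensorProduct.smul_tmul', barStep_tmul, smul_eq_mul, mul_smul, smul_sub, smul_neg]

variable {b} in
theorem barStep_comp_barStep (h : b ∘ₗ barStep b = 0) :
    barStep b ∘ₗ barStep (barStep b) = 0 :=
  TensorProduct.ext' fun a y => by
    have hy : b (barStep b y) = 0 := LinearMap.congr_fun h y
    simp [hy]

theorem neg_barFace_comp_barStep : (-barFace M ε) ∘ₗ barStep (-barFace M ε) = 0 :=
  TensorProduct.ext' fun a y => by simp

variable {b} in
theorem barFace_add_comp_barFace_add_barStep (h : b ∘ₗ barStep b = 0) :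
    (barFace M ε + b) ∘ₗ (barFace _ ε + barStep b) = 0 := by
  rw [LinearMap.add_comp, LinearMap.comp_add, LinearMap.comp_add, h, add_zero]
  refine TensorProduct.ext' fun a y => ?_
  simp only [LinearMap.add_apply, LinearMap.comp_apply, LinearMap.zero_apply, barFace_tmul,
    barStep_tmul, barFace_smul, map_smul, map_sub, map_neg]
  abel

variable {ε b} {εB : B →ₐ[K] K} {b' : B ⊗[K] N →ₗ[K] N} {f : A →ₙₐ[K] B} {F : M →ₗ[K] N}

theorem map_tmul_of_nonUnitalAlgHom (a : A) (x : M) :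
    TensorProduct.map (f : A →ₗ[K] B) F (a ⊗ₜ x) = f a ⊗ₜ F x := rfl

theorem map_smul_of_nonUnitalAlgHom (a : A) (y : A ⊗[K] M) :
    TensorProduct.map (f : A →ₗ[K] B) F (a • y) =
      f a • TensorProduct.map (f : A →ₗ[K] B) F y := by
  induction y with
  | zero => simp only [smul_zero, map_zero]
  | add x y hx hy => simp only [smul_add, map_add, hx, hy]
  | tmul a' x => simp [TensorProduct.smul_tmul']

theorem comp_barFace (hf : ∀ a, εB (f a) = ε a) :
    F ∘ₗ barFace M ε = barFace N εB ∘ₗ TensorProduct.map (f : A →ₗ[K] B) F :=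
  TensorProduct.ext' fun a x => by simp [hf]

theorem map_comp_barStep (h : F ∘ₗ b = b' ∘ₗ TensorProduct.map (f : A →ₗ[K] B) F) :
    TensorProduct.map (f : A →ₗ[K] B) F ∘ₗ barStep b =
      barStep b' ∘ₗ TensorProduct.map (f : A →ₗ[K] B) (TensorProduct.map (f : A →ₗ[K] B) F) :=
  TensorProduct.ext' fun a y => by
    have hy : F (b y) = b' (TensorProduct.map (f : A →ₗ[K] B) F y) := LinearMap.congr_fun h y
    simp [hy, map_smul_of_nonUnitalAlgHom]

variable {u : B} {g : A →ₙₐ[K] B} {h : M →ₗ[K] B ⊗[K] N}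

/-- One step of the recursion for the chain homotopy `barHomotopy` between the maps of bar complexes
induced by two intertwined homomorphisms `f` and `g`. -/
def homotopyStep (f g : A →ₙₐ[K] B) (u : B) (F : M →ₗ[K] N) (h : M →ₗ[K] B ⊗[K] N) :
    A ⊗[K] M →ₗ[K] B ⊗[K] (B ⊗[K] N) :=
  TensorProduct.mk K B (B ⊗[K] N) u ∘ₗ TensorProduct.map (f : A →ₗ[K] B) F -
    TensorProduct.map (g : A →ₗ[K] B) h

@[simp]
theorem homotopyStep_tmul (a : A) (x : M) :
    homotopyStep f g u F h (a ⊗ₜ x) = u ⊗ₜ (f a ⊗ₜ F x) - g a ⊗ₜ h x := rfl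

theorem homotopyStep_smul (a : A) (y : A ⊗[K] M) :
    homotopyStep f g u F h (a • y) =
      g a • homotopyStep f g u F h y - (g a * u) ⊗ₜ TensorProduct.map (f : A →ₗ[K] B) F y +
        u ⊗ₜ TensorProduct.map (f : A →ₗ[K] B) F (a • y) := by
  have hs : ∀ z : B ⊗[K] N, g a • (u ⊗ₜ[K] z) = (g a * u) ⊗ₜ[K] z := fun z => rfl
  simp only [homotopyStep, LinearMap.sub_apply, LinearMap.comp_apply, TensorProduct.mk_apply,
    map_smul_of_nonUnitalAlgHom, smul_sub, hs]
  abel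

theorem barFace_comp_homotopyStep (hu : εB u = 1) (hg : ∀ a, εB (g a) = ε a) :
    barFace _ εB ∘ₗ homotopyStep f g u F h + h ∘ₗ barFace M ε =
      TensorProduct.map (f : A →ₗ[K] B) F :=
  TensorProduct.ext' fun a x => by simp [hu, hg]

theorem barStep_comp_mk {b' : B ⊗[K] M →ₗ[K] M} (hu : ∀ a, g a * u = u * f a)
    (h_face : ∀ x, b' (u ⊗ₜ x) = -x)
    (h_map : b = b' ∘ₗ TensorProduct.map (f : A →ₗ[K] B) LinearMap.id) :
    barStep b' ∘ₗ homotopyStep f g u LinearMap.id (TensorProduct.mk K B M u) +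
        TensorProduct.mk K B M u ∘ₗ b =
      -TensorProduct.map (g : A →ₗ[K] B) LinearMap.id :=
  TensorProduct.ext' fun a x => by
    have hx : b (a ⊗ₜ x) = b' (f a ⊗ₜ x) := LinearMap.congr_fun h_map (a ⊗ₜ x)
    simp only [LinearMap.add_apply, LinearMap.comp_apply, LinearMap.neg_apply, homotopyStep_tmul,
      barStep_tmul, map_sub, TensorProduct.mk_apply, TensorProduct.smul_tmul', smul_eq_mul, hu, hx,
      h_face, TensorProduct.tmul_neg, map_tmul_of_nonUnitalAlgHom, LinearMap.id_apply]
    abel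

variable {b'' : B ⊗[K] (B ⊗[K] N) →ₗ[K] B ⊗[K] N} {F' : M →ₗ[K] N}

theorem barStep_comp_homotopyStep (hu : ∀ a, g a * u = u * f a)
    (h_homotopy : b'' ∘ₗ homotopyStep f g u F h + h ∘ₗ b = -TensorProduct.map (g : A →ₗ[K] B) F')
    (h_map : TensorProduct.map (f : A →ₗ[K] B) F ∘ₗ barStep b = b'' ∘ₗ
      TensorProduct.map (f : A →ₗ[K] B) (TensorProduct.map (f : A →ₗ[K] B) F)) :
    barStep b'' ∘ₗ homotopyStep f g u (TensorProduct.map (f : A →ₗ[K] B) F)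
          (homotopyStep f g u F h) + homotopyStep f g u F h ∘ₗ barStep b =
      -TensorProduct.map (g : A →ₗ[K] B) (TensorProduct.map (g : A →ₗ[K] B) F') :=
  TensorProduct.ext' fun a y => by
    have h_map_y := LinearMap.congr_fun h_map (a ⊗ₜ y)
    have h_homotopy_y := eq_sub_of_add_eq (LinearMap.congr_fun h_homotopy y)
    simp only [LinearMap.comp_apply, LinearMap.neg_apply, map_tmul_of_nonUnitalAlgHom,
      barStep_tmul, map_sub, map_neg] at h_map_y h_homotopy_y
    simp only [LinearMap.add_apply, LinearMap.comp_apply, LinearMap.neg_apply, homotopyStep_tmul,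
      barStep_tmul, map_sub, map_neg, homotopyStep_smul, map_tmul_of_nonUnitalAlgHom, ← h_map_y,
      h_homotopy_y, TensorProduct.smul_tmul', smul_eq_mul, hu, TensorProduct.tmul_sub,
      TensorProduct.tmul_neg]
    abel

theorem eq_comp_add_of_comp_add_eq {P Q R : Type} [AddCommGroup P] [Module K P] [AddCommGroup Q]
    [Module K Q] [AddCommGroup R] [Module K R] {b₁ b₂ : P →ₗ[K] M} {c₁ c₂ : R →ₗ[K] Q}
    {h : M →ₗ[K] Q} {h' : P →ₗ[K] R} {F G : P →ₗ[K] Q} (h₁ : c₁ ∘ₗ h' + h ∘ₗ b₁ = F)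
    (h₂ : c₂ ∘ₗ h' + h ∘ₗ b₂ = -G) : F = h ∘ₗ (b₁ + b₂) + (c₁ + c₂) ∘ₗ h' + G := by
  rw [LinearMap.comp_add, LinearMap.add_comp, ← h₁, ← neg_eq_iff_eq_neg.mpr h₂]
  abel

end BarStep

section BarComplex

variable {K : Type} [CommRing K] {A B : Type} [Ring A] [Algebra K A] [Ring B] [Algebra K B]
variable {εA : A →ₐ[K] K} {εB : B →ₐ[K] K}

theorem barB_succ (q : ℕ) : barB K A εA (q + 1) = barStep (barB K A εA q) :=
  TensorProduct.ext' fun _ _ => rfl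

theorem barB_comp_barStep_barB : ∀ q : ℕ, barB K A εA q ∘ₗ barStep (barB K A εA q) = 0
  | 0 => neg_barFace_comp_barStep εA
  | q + 1 => by
    have h := barStep_comp_barStep (barB_comp_barStep_barB q)
    rw [← barB_succ] at h
    exact h

theorem bard_tmul {q : ℕ} (a : A) (x : barC K A q) :
    bard K A εA q (a ⊗ₜ x) = εA a • x + barB K A εA q (a ⊗ₜ x) := rfl

theorem bard_zero : bard K A εA 0 = 0 :=
  add_neg_cancel (barFace K εA)

theorem bard_comp_bard (q : ℕ) : bard K A εA q ∘ₗ bard K A εA (q + 1) = 0 := by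
  have h := barFace_add_comp_barFace_add_barStep εA (barB_comp_barStep_barB (εA := εA) q)
  rw [← barB_succ] at h
  exact h

variable (εA) in
/-- The bar complex, whose homology is `Tor` of the trivial module with itself. -/
def barComplex : ChainComplex (ModuleCat K) ℕ :=
  ChainComplex.of (barC K A) (fun q => ModuleCat.ofHom (bard K A εA q)) fun q =>
    ModuleCat.hom_ext (bard_comp_bard q)

theorem barComplex_d (q : ℕ) : (barComplex εA).d (q + 1) q = ModuleCat.ofHom (bard K A εA q) :=
  ChainComplex.of_d (barC K A) (fun q => ModuleCat.ofHom (bard K A εA q)) q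

/-- The map of bar modules induced by a linear map. -/
def barMapₗ (f : A →ₗ[K] B) : ∀ q : ℕ, barC K A q →ₗ[K] barC K B q
  | 0 => LinearMap.id
  | q + 1 => TensorProduct.map f (barMapₗ f q)

theorem barMap_eq_barMapₗ (φ : A →ₐ[K] B) : ∀ q : ℕ, barMap K φ q = barMapₗ φ.toLinearMap q
  | 0 => rfl
  | q + 1 => congrArg (TensorProduct.map φ.toLinearMap) (barMap_eq_barMapₗ φ q)

variable {f g : A →ₙₐ[K] B}

theorem barMapₗ_comp_barB (hf : ∀ a, εB (f a) = εA a) : ∀ q : ℕ,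
    barMapₗ (f : A →ₗ[K] B) q ∘ₗ barB K A εA q =
      barB K B εB q ∘ₗ TensorProduct.map (f : A →ₗ[K] B) (barMapₗ (f : A →ₗ[K] B) q)
  | 0 => congrArg Neg.neg (comp_barFace (F := LinearMap.id) hf)
  | q + 1 => by
    have h := map_comp_barStep (barMapₗ_comp_barB hf q)
    rw [← barB_succ, ← barB_succ] at h
    exact h

theorem barMapₗ_comp_bard (hf : ∀ a, εB (f a) = εA a) (q : ℕ) :
    barMapₗ (f : A →ₗ[K] B) q ∘ₗ bard K A εA q =
      bard K B εB q ∘ₗ TensorProduct.map (f : A →ₗ[K] B) (barMapₗ (f : A →ₗ[K] B) q) :=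
  (LinearMap.comp_add _ _ _).trans <| (congrArg₂ (· + ·) (comp_barFace hf)
    (barMapₗ_comp_barB hf q)).trans (LinearMap.add_comp _ _ _).symm

/-- The chain map of bar complexes induced by an augmentation-preserving multiplicative linear map,
which need not preserve the unit. -/
def barComplexMap (f : A →ₙₐ[K] B) (hf : ∀ a, εB (f a) = εA a) : barComplex εA ⟶ barComplex εB :=
  ChainComplex.ofHom (fun q => ModuleCat.ofHom (barMapₗ (f : A →ₗ[K] B) q)) fun q => by
    rw [barComplex_d, barComplex_d]
    exact ModuleCat.hom_ext (barMapₗ_comp_bard hf q).symm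

theorem barMapₗ_id : ∀ q : ℕ, barMapₗ (LinearMap.id : A →ₗ[K] A) q = LinearMap.id
  | 0 => rfl
  | q + 1 => by rw [barMapₗ, barMapₗ_id q]; exact TensorProduct.map_id

theorem barMapₗ_comp {C : Type} [Ring C] [Algebra K C] (g : B →ₗ[K] C) (f : A →ₗ[K] B) :
    ∀ q : ℕ, barMapₗ (g ∘ₗ f) q = barMapₗ g q ∘ₗ barMapₗ f q
  | 0 => rfl
  | q + 1 => by rw [barMapₗ, barMapₗ_comp g f q]; exact TensorProduct.map_comp _ _ _ _

theorem barComplexMap_id :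
    barComplexMap (NonUnitalAlgHom.id K A) (fun _ => rfl) = 𝟙 (barComplex εA) := by
  ext q : 1
  exact ModuleCat.hom_ext (barMapₗ_id q)

theorem barComplexMap_comp {C : Type} [Ring C] [Algebra K C] {εC : C →ₐ[K] K} {g : B →ₙₐ[K] C}
    (hf : ∀ a, εB (f a) = εA a) (hg : ∀ b, εC (g b) = εB b) :
    barComplexMap (g.comp f) (fun a => (hg (f a)).trans (hf a)) =
      barComplexMap f hf ≫ barComplexMap g hg := by
  ext q : 1
  exact ModuleCat.hom_ext (barMapₗ_comp (g : B →ₗ[K] C) (f : A →ₗ[K] B) q)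

variable (f g) in
/-- The chain homotopy between the maps of bar complexes induced by two homomorphisms `f` and `g`
that are intertwined by `u`, in the sense that `g a * u = u * f a`. -/
def barHomotopy (u : B) : ∀ q : ℕ, barC K A q →ₗ[K] B ⊗[K] barC K B q
  | 0 => TensorProduct.mk K B K u
  | q + 1 => homotopyStep f g u (barMapₗ (f : A →ₗ[K] B) q) (barHomotopy u q)

variable {u : B}

theorem barB_comp_barHomotopy (hu : εB u = 1) (hfg : ∀ a, g a * u = u * f a)
    (hf : ∀ a, εB (f a) = εA a) (q : ℕ) :
    barStep (barB K B εB q) ∘ₗ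
          homotopyStep f g u (barMapₗ (f : A →ₗ[K] B) q) (barHomotopy f g u q) +
        barHomotopy f g u q ∘ₗ barB K A εA q =
      -TensorProduct.map (g : A →ₗ[K] B) (barMapₗ (g : A →ₗ[K] B) q) := by
  induction q with
  | zero =>
    have h_face (x : barC K B 0) : barB K B εB 0 (u ⊗ₜ x) = -x :=
      (barB_zero_apply K B εB u x).trans (by rw [hu, one_smul])
    exact barStep_comp_mk (M := K) hfg h_face (barMapₗ_comp_barB hf 0)
  | succ q ih =>
    have h := barStep_comp_homotopyStep hfg ih (map_comp_barStep (barMapₗ_comp_barB hf q))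
    rw [← barB_succ, ← barB_succ] at h
    exact h

theorem map_barMapₗ_eq_of_intertwine (hu : εB u = 1) (hfg : ∀ a, g a * u = u * f a)
    (hf : ∀ a, εB (f a) = εA a) (hg : ∀ a, εB (g a) = εA a) (q : ℕ) :
    TensorProduct.map (f : A →ₗ[K] B) (barMapₗ (f : A →ₗ[K] B) q) =
      barHomotopy f g u q ∘ₗ bard K A εA q +
        (barFace _ εB + barStep (barB K B εB q)) ∘ₗ
          homotopyStep f g u (barMapₗ (f : A →ₗ[K] B) q) (barHomotopy f g u q) +
        TensorProduct.map (g : A →ₗ[K] B) (barMapₗ (g : A →ₗ[K] B) q) := by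
  have h_face := barFace_comp_homotopyStep (f := f) (F := barMapₗ (f : A →ₗ[K] B) q)
    (h := barHomotopy f g u q) hu hg
  exact eq_comp_add_of_comp_add_eq h_face (barB_comp_barHomotopy hu hfg hf q)

/-- Conjugation by `u` is chain homotopic to the identity; `u` need not be a unit of `B`. -/
theorem homologyMap_barComplexMap_eq (hu : εB u = 1) (hfg : ∀ a, g a * u = u * f a)
    (hf : ∀ a, εB (f a) = εA a) (hg : ∀ a, εB (g a) = εA a) (q : ℕ) :
    homologyMap (barComplexMap f hf) q = homologyMap (barComplexMap g hg) q := by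
  refine homologyMap_eq_of_homotopy (fun i => ModuleCat.ofHom (barHomotopy f g u i)) ?_
    (fun i => ?_) q
  · rw [barComplex_d]
    refine ModuleCat.hom_ext (LinearMap.ext fun x => ?_)
    exact ((congrArg (· + x) (LinearMap.congr_fun bard_zero (u ⊗ₜ x))).trans (zero_add x)).symm
  · rw [barComplex_d, barComplex_d]
    refine ModuleCat.hom_ext ((map_barMapₗ_eq_of_intertwine hu hfg hf hg i).trans ?_)
    rw [← barB_succ]
    rfl

theorem isIso_homologyMap_barComplexMap {g : B →ₙₐ[K] A} (hf : ∀ a, εB (f a) = εA a)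
    (hg : ∀ b, εA (g b) = εB b) (hfg : f.comp g = NonUnitalAlgHom.id K B) {u : A} (hu : εA u = 1)
    (hgf : ∀ a, a * u = u * g (f a)) (q : ℕ) : IsIso (homologyMap (barComplexMap f hf) q) := by
  refine ⟨homologyMap (barComplexMap g hg) q, ?_, ?_⟩
  · rw [← homologyMap_comp, ← barComplexMap_comp, ← homologyMap_id, ← barComplexMap_id]
    exact homologyMap_barComplexMap_eq hu hgf _ _ q
  · rw [← homologyMap_comp, ← barComplexMap_comp, ← homologyMap_id, ← barComplexMap_id]
    simp only [hfg]

theorem isIso_homologyMap_barComplexMap_of_isIdempotentElem {π : A →ₐ[K] B} {i : B →ₐ[K] A}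
    {z : A} (hπ : ∀ a, εB (π a) = εA a) (hi : π.comp i = AlgHom.id K B) (hz : z ∈ Set.center A)
    (hzz : IsIdempotentElem z) (hπz : π z = 1) (hziπ : ∀ a, z * i (π a) = z * a) (q : ℕ) :
    IsIso (homologyMap (barComplexMap (π : A →ₙₐ[K] B) hπ) q) := by
  have hz_comm (a : A) : z * a = a * z := (Set.mem_center_iff.1 hz).comm a
  have hz_aug : εA z = 1 := by rw [← hπ, hπz, map_one]
  have hi_apply (b : B) : π (i b) = b := AlgHom.congr_fun hi b
  have hi_mul (a b : B) : z * i (a * b) = z * i a * (z * i b) := by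
    rw [map_mul, mul_assoc, ← mul_assoc _ z, ← hz_comm, mul_assoc z, ← mul_assoc z z, hzz.eq]
  let g : B →ₙₐ[K] A :=
    { LinearMap.mulLeft K z ∘ₗ i.toLinearMap with
      map_mul' := hi_mul
      map_zero' := map_zero (LinearMap.mulLeft K z ∘ₗ i.toLinearMap) }
  have hg (b : B) : g b = z * i b := rfl
  refine isIso_homologyMap_barComplexMap (g := g) (u := z) hπ (fun b => ?_)
    (NonUnitalAlgHom.ext fun b => ?_) hz_aug (fun a => ?_) q
  · rw [hg, map_mul, hz_aug, one_mul, ← hπ, hi_apply]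
  · change π (z * i b) = b
    rw [map_mul, hπz, one_mul, hi_apply]
  · change a * z = z * (z * i (π a))
    rw [hziπ, ← mul_assoc, hzz.eq, hz_comm]

end BarComplex

/-! ### Tor as the homology of the bar complex -/

section Tor

/-- The homology of a short complex of modules, presented by submodules known to be the cycles and
the boundaries. -/
def leftHomologyDataOfEq {R : Type} [CommRing R] (S : ShortComplex (ModuleCat.{0} R))
    {Z B : Submodule R S.X₂} (hZ : LinearMap.ker S.g.hom = Z) (hB : LinearMap.range S.f.hom = B) :
    S.LeftHomologyData :=
  have h_ker : LinearMap.ker S.g.hom = LinearMap.range Z.subtype := by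
    rw [Submodule.range_subtype, hZ]
  have hi := ModuleCat.isLimitKernelFork (ModuleCat.ofHom Z.subtype) S.g
    (LinearMap.exact_iff.2 h_ker) Z.subtype_injective
  have h_lift : Z.subtype ∘ₗ (hi.lift (KernelFork.ofι _ S.zero)).hom = S.f.hom :=
    congrArg ModuleCat.Hom.hom (Fork.IsLimit.lift_ι hi)
  have h_im : LinearMap.ker (B.comap Z.subtype).mkQ =
      LinearMap.range (hi.lift (KernelFork.ofι _ S.zero)).hom := by
    rw [Submodule.ker_mkQ, ← hB, ← h_lift, LinearMap.range_comp,
      Submodule.comap_map_eq_of_injective Z.subtype_injective]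
  have hπ := ModuleCat.isColimitCokernelCofork (hi.lift (KernelFork.ofι _ S.zero))
    (ModuleCat.ofHom (B.comap Z.subtype).mkQ) (LinearMap.exact_iff.2 h_im)
    (Submodule.mkQ_surjective _)
  { K := ModuleCat.of R Z
    H := ModuleCat.of R (Z ⧸ B.comap Z.subtype)
    i := ModuleCat.ofHom Z.subtype
    π := ModuleCat.ofHom (B.comap Z.subtype).mkQ
    wi := _
    hi := hi
    wπ := _
    hπ := hπ }

variable {K : Type} [CommRing K] {A B : Type} [Ring A] [Algebra K A] [Ring B] [Algebra K B]
variable (εA : A →ₐ[K] K) (εB : B →ₐ[K] K)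

theorem ker_barComplex_d : ∀ q : ℕ,
    LinearMap.ker ((barComplex εA).d q ((ComplexShape.down ℕ).next q)).hom = barCycles K A εA q
  | 0 => by
    rw [ChainComplex.next_nat_zero, (barComplex εA).shape _ _ (by simp)]
    exact LinearMap.ker_zero
  | q + 1 => by
    rw [ChainComplex.next_nat_succ, barComplex_d]
    rfl

/-- The homology of the bar complex in degree `q`, presented as `barTor`. -/
def barTorLeftHomologyData (q : ℕ) :
    ((barComplex εA).sc' (q + 1) q ((ComplexShape.down ℕ).next q)).LeftHomologyData :=
  leftHomologyDataOfEq _ (ker_barComplex_d εA q)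
    (B := LinearMap.range (bard K A εA q))
    (congrArg (fun d => LinearMap.range (ModuleCat.Hom.hom d)) (barComplex_d q))

theorem bijective_torMap_of_isIso {φ : A →ₐ[K] B} (hφ : εB.comp φ = εA) (q : ℕ)
    (h : IsIso (homologyMap (barComplexMap (φ : A →ₙₐ[K] B) (AlgHom.congr_fun hφ)) q)) :
    Function.Bijective (torMap K εA εB φ hφ q) := by
  let φK : (barTorLeftHomologyData εA q).K ⟶ (barTorLeftHomologyData εB q).K :=
    show ModuleCat.of K (barCycles K A εA q) ⟶ ModuleCat.of K (barCycles K B εB q) from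
      ModuleCat.ofHom ((barMap K φ q).restrict (barMap_cycles K εA εB φ hφ q))
  let φH : (barTorLeftHomologyData εA q).H ⟶ (barTorLeftHomologyData εB q).H :=
    show ModuleCat.of K (barTor K A εA q) ⟶ ModuleCat.of K (barTor K B εB q) from
      ModuleCat.ofHom (torMap K εA εB φ hφ q)
  let Φ := (shortComplexFunctor' _ _ (q + 1) q ((ComplexShape.down ℕ).next q)).map
    (barComplexMap (φ : A →ₙₐ[K] B) (AlgHom.congr_fun hφ))
  have h_cycles : φK ≫ (barTorLeftHomologyData εB q).i = (barTorLeftHomologyData εA q).i ≫ Φ.τ₂ :=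
    ModuleCat.hom_ext <| LinearMap.ext fun x => LinearMap.congr_fun (barMap_eq_barMapₗ φ q) x.1
  let γ : ShortComplex.LeftHomologyMapData Φ (barTorLeftHomologyData εA q)
      (barTorLeftHomologyData εB q) :=
    { φK := φK
      φH := φH
      commi := h_cycles
      commf' := by
        rw [← cancel_mono (barTorLeftHomologyData εB q).i, Category.assoc, h_cycles,
          ShortComplex.LeftHomologyData.f'_i_assoc, Category.assoc,
          ShortComplex.LeftHomologyData.f'_i, Φ.comm₁₂]
      commπ := rfl }
  rw [← quasiIsoAt_iff_isIso_homologyMap,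
    quasiIsoAt_iff' _ (q + 1) q _ (ChainComplex.prev ℕ q) rfl, γ.quasiIso_iff] at h
  exact ConcreteCategory.bijective_of_isIso γ.φH

end Tor

/-! ### The bar complex of a group algebra -/

section GroupAlgebra

variable (K : Type) [CommRing K] (W : Type) [Group W]

open CategoryTheory.SingleObj

instance uniqueEmptyString : Unique (Σ Y : SingleObj W, ArrowString (SingleObj W) 0 Y) where
  default := ⟨star W, .nil _⟩
  uniq
    | ⟨_, .nil _⟩ => rfl

/-- A string of arrows of the one-object category of `W` as its last arrow and the rest. -/
def consEquiv (q : ℕ) : (W × Σ Y : SingleObj W, ArrowString (SingleObj W) q Y) ≃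
    Σ Y : SingleObj W, ArrowString (SingleObj W) (q + 1) Y where
  toFun s := ⟨star W, .cons (X := s.2.1) s.1 s.2.2⟩
  invFun
    | ⟨_, .cons (X := X) w t⟩ => (w, ⟨X, t⟩)
  left_inv _ := rfl
  right_inv
    | ⟨_, .cons _ _⟩ => rfl

/-- The strings of arrows of the one-object category of `W`, as a basis of the bar complex of the
group algebra. -/
def nerveBasis : ∀ q : ℕ, Module.Basis (Σ Y : SingleObj W, ArrowString (SingleObj W) q Y) K
    (barC K (MonoidAlgebra K W) q)
  | 0 => Module.Basis.singleton _ K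
  | q + 1 => ((MonoidAlgebra.basis W K).tensorProduct (nerveBasis q)).reindex (consEquiv W q)

variable {K W}

theorem nerveBasis_nil (Y : SingleObj W) : nerveBasis K W 0 ⟨Y, .nil Y⟩ = (1 : K) :=
  Module.Basis.singleton_apply _ K _

theorem nerveBasis_cons {q : ℕ} {X Y : SingleObj W} (w : X ⟶ Y)
    (t : ArrowString (SingleObj W) q X) :
    nerveBasis K W (q + 1) ⟨Y, .cons w t⟩ =
      MonoidAlgebra.single w 1 ⊗ₜ nerveBasis K W q ⟨X, t⟩ := by
  change ((MonoidAlgebra.basis W K).tensorProduct (nerveBasis K W q)).reindex (consEquiv W q)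
    (consEquiv W q (w, ⟨X, t⟩)) = _
  rw [Module.Basis.reindex_apply, Equiv.symm_apply_apply, Module.Basis.tensorProduct_apply,
    MonoidAlgebra.basis_apply]

variable (K W) in
/-- The linear extension of `nerveBasis`. -/
def nerveToBarₗ (q : ℕ) : ((Σ Y : SingleObj W, ArrowString (SingleObj W) q Y) →₀ K) ≃ₗ[K]
    barC K (MonoidAlgebra K W) q :=
  (nerveBasis K W q).repr.symm

theorem nerveToBarₗ_single {q : ℕ} (t : Σ Y : SingleObj W, ArrowString (SingleObj W) q Y) :
    nerveToBarₗ K W q (Finsupp.single t 1) = nerveBasis K W q t :=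
  (nerveBasis K W q).repr_symm_single_one t

theorem nerveToBarₗ_totalₗ_consₗ {q : ℕ} {X Y : SingleObj W} (w : X ⟶ Y)
    (x : ArrowString (SingleObj W) q X →₀ K) :
    nerveToBarₗ K W (q + 1) (totalₗ K Y (consₗ K w x)) =
      MonoidAlgebra.single w 1 ⊗ₜ nerveToBarₗ K W q (totalₗ K X x) := by
  refine linearMap_ext_single
    (f := (nerveToBarₗ K W (q + 1)).toLinearMap ∘ₗ totalₗ K Y ∘ₗ consₗ K w)
    (g := TensorProduct.mk K (MonoidAlgebra K W) (barC K (MonoidAlgebra K W) q)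
        (MonoidAlgebra.single w 1) ∘ₗ (nerveToBarₗ K W q).toLinearMap ∘ₗ totalₗ K X)
    (fun t => ?_) x
  change nerveToBarₗ K W (q + 1) (totalₗ K Y (consₗ K w (Finsupp.single t 1))) =
    MonoidAlgebra.single w 1 ⊗ₜ nerveToBarₗ K W q (totalₗ K X (Finsupp.single t 1))
  rw [consₗ_single, totalₗ_single, totalₗ_single, nerveToBarₗ_single, nerveToBarₗ_single,
    nerveBasis_cons]

theorem nerveBasis_push {q : ℕ} {X Y : SingleObj W} (w : X ⟶ Y)
    (t : ArrowString (SingleObj W) (q + 1) X) :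
    nerveBasis K W (q + 1) ⟨Y, t.push w⟩ =
      barActT K (MonoidAlgebra K W) (groupAug K W) q (MonoidAlgebra.single w 1)
        (nerveBasis K W (q + 1) ⟨X, t⟩) := by
  obtain _ | ⟨v, t⟩ := t
  rw [nerveBasis_cons]
  refine Eq.trans ?_ (barActT_tmul K _ _ q _ _ _).symm
  rw [ArrowString.push_cons, nerveBasis_cons, MonoidAlgebra.single_mul_single, one_mul, comp_as_mul]

theorem groupAug_single (w : W) : groupAug K W (MonoidAlgebra.single w 1) = 1 := by
  simp [groupAug]

theorem barB_nerveBasis {q : ℕ} {X Y : SingleObj W} (w : X ⟶ Y)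
    (t : ArrowString (SingleObj W) q X) :
    barB K (MonoidAlgebra K W) (groupAug K W) q
        (MonoidAlgebra.single w 1 ⊗ₜ nerveBasis K W q ⟨X, t⟩) =
      nerveToBarₗ K W q (totalₗ K Y (innerBoundary K (.cons w t))) := by
  induction q generalizing X Y with
  | zero =>
    obtain _ | _ := t
    rw [barB_zero_apply, groupAug_single, one_smul, innerBoundary]
    rw [map_neg, map_neg, totalₗ_single, nerveToBarₗ_single, ArrowString.push_nil, nerveBasis_nil,
      nerveBasis_nil]
  | succ q ih =>
    obtain _ | ⟨v, t⟩ := t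
    refine (barB_succ_apply K _ _ q _ _).trans ?_
    have h_push := nerveBasis_push (K := K) w (ArrowString.cons v t)
    rw [innerBoundary, map_sub, map_neg, totalₗ_single, map_sub, map_neg, nerveToBarₗ_single,
      nerveToBarₗ_totalₗ_consₗ, ← ih, h_push, nerveBasis_cons]
    rfl

theorem bard_nerveToBarₗ (q : ℕ) (x : (Σ Y, ArrowString (SingleObj W) (q + 1) Y) →₀ K) :
    bard K (MonoidAlgebra K W) (groupAug K W) q (nerveToBarₗ K W (q + 1) x) =
      nerveToBarₗ K W q (nerveBoundary K (SingleObj W) q x) := by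
  refine linearMap_ext_single
    (f := bard K (MonoidAlgebra K W) (groupAug K W) q ∘ₗ (nerveToBarₗ K W (q + 1)).toLinearMap)
    (g := (nerveToBarₗ K W q).toLinearMap ∘ₗ nerveBoundary K (SingleObj W) q)
    (fun ⟨Y, t⟩ => ?_) x
  obtain _ | ⟨w, t⟩ := t
  change bard K _ (groupAug K W) q (nerveToBarₗ K W (q + 1) (Finsupp.single ⟨Y, .cons w t⟩ 1)) =
    nerveToBarₗ K W q (nerveBoundary K (SingleObj W) q (Finsupp.single ⟨Y, .cons w t⟩ 1))
  rw [nerveBoundary_single, map_add, ← barB_nerveBasis, nerveToBarₗ_single, nerveToBarₗ_single,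
    nerveBasis_cons]
  refine (bard_tmul _ _).trans ?_
  rw [groupAug_single, one_smul]
  rfl

variable (K W) in
/-- The chains on the one-object category of `W` form the bar complex of the group algebra. -/
def nerveBarIso : nerveComplex K (SingleObj W) ≅ barComplex (groupAug K W) :=
  HomologicalComplex.Hom.isoOfComponents (fun q => (nerveToBarₗ K W q).toModuleIso) fun i q h => by
    obtain rfl : q + 1 = i := h
    rw [barComplex_d, nerveComplex_d]
    exact ModuleCat.hom_ext (LinearMap.ext (bard_nerveToBarₗ q))

variable {V : Type} [Group V] (f : V →* W)

theorem groupAug_mapDomainAlgHom (x : MonoidAlgebra K V) :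
    groupAug K W (MonoidAlgebra.mapDomainAlgHom K K f x) = groupAug K V x := by
  refine AlgHom.congr_fun
    (φ₁ := (groupAug K W).comp (MonoidAlgebra.mapDomainAlgHom K K f)) ?_ x
  ext v
  simp [groupAug]

/-- The map of bar complexes of group algebras induced by a group homomorphism. -/
def groupBarMap : barComplex (groupAug K V) ⟶ barComplex (groupAug K W) :=
  barComplexMap (MonoidAlgebra.mapDomainAlgHom K K f : MonoidAlgebra K V →ₙₐ[K] MonoidAlgebra K W)
    (groupAug_mapDomainAlgHom f)

theorem barMapₗ_nerveBasis {q : ℕ} {Y : SingleObj V} (t : ArrowString (SingleObj V) q Y) :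
    barMapₗ (MonoidAlgebra.mapDomainAlgHom K K f).toLinearMap q (nerveBasis K V q ⟨Y, t⟩) =
      nerveBasis K W q ⟨_, t.map f.toFunctor⟩ := by
  induction t with
  | nil Y => rw [ArrowString.map_nil, nerveBasis_nil, nerveBasis_nil]; rfl
  | cons w t ih =>
    rw [ArrowString.map_cons, nerveBasis_cons, nerveBasis_cons, ← ih]
    have h_single : MonoidAlgebra.mapDomainAlgHom K K f (MonoidAlgebra.single w 1) =
        MonoidAlgebra.single (f.toFunctor.map w) 1 := MonoidAlgebra.mapDomain_single
    refine (TensorProduct.map_tmul _ _ _ _).trans ?_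
    rw [AlgHom.toLinearMap_apply, h_single]

theorem nerveMap_comp_nerveBarIso :
    nerveMap K f.toFunctor ≫ (nerveBarIso K W).hom = (nerveBarIso K V).hom ≫ groupBarMap f := by
  ext q : 1
  refine ModuleCat.hom_ext (LinearMap.ext fun x => linearMap_ext_single
    (f := (nerveToBarₗ K W q).toLinearMap ∘ₗ nerveMapₗ K f.toFunctor q)
    (g := barMapₗ (MonoidAlgebra.mapDomainAlgHom K K f).toLinearMap q ∘ₗ
      (nerveToBarₗ K V q).toLinearMap) (fun t => ?_) x)
  simp only [LinearMap.comp_apply, LinearEquiv.coe_coe, nerveMapₗ_single, nerveToBarₗ_single]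
  exact (barMapₗ_nerveBasis f t.2).symm

theorem isIso_homologyMap_groupBarMap {q : ℕ}
    (h : IsIso (homologyMap (nerveMap K f.toFunctor) q)) :
    IsIso (homologyMap (groupBarMap (K := K) f) q) := by
  have h_comp : groupBarMap f =
      (nerveBarIso K V).inv ≫ nerveMap K f.toFunctor ≫ (nerveBarIso K W).hom := by
    rw [nerveMap_comp_nerveBarIso, Iso.inv_hom_id_assoc]
  rw [h_comp, homologyMap_comp, homologyMap_comp]
  infer_instance

end GroupAlgebra

/-! ### A presentation of the wreath product -/

section Presentation

variable {G M : Type*} [Monoid M]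

/-- The relations of the presentation of the wreath product of `G` with the symmetric group on the
letters `0, …, n - 1`: `s i` stands for the exchange of the letters `i` and `i + 1`, and `t g j` for
the multiplication of the label of the letter `j` by `g`. -/
structure WreathRelations [Group G] (n : ℕ) (s : ℕ → M) (t : G → ℕ → M) : Prop where
  swap_sq {i} : i + 1 < n → s i * s i = 1
  swap_braid {i} : i + 2 < n → s i * s (i + 1) * s i = s (i + 1) * s i * s (i + 1)
  swap_swap {i j} : i + 1 < j → j + 1 < n → s i * s j = s j * s i
  label_mul {g h j} : j < n → t g j * t h j = t (g * h) j
  label_one {j} : j < n → t 1 j = 1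
  label_label {g h j l} : j < n → l < n → j ≠ l → t g j * t h l = t h l * t g j
  swap_label {g i l} : i + 1 < n → l < n → l ≠ i → l ≠ i + 1 → s i * t g l = t g l * s i
  swap_label_left {g i} : i + 1 < n → s i * t g i = t g (i + 1) * s i
  swap_label_right {g i} : i + 1 < n → s i * t g (i + 1) = t g i * s i

/-- The word `s i * s (i + 1) * ⋯ * s (i + d - 1)`, a cyclic permutation of the letters
`i, …, i + d`. -/
def cycleWord (s : ℕ → M) : ℕ → ℕ → M
  | 0, _ => 1
  | d + 1, i => s i * cycleWord s d (i + 1)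

/-- The submonoid generated by the exchanges and label multiplications of the first `m` letters. -/
def parabolic (s : ℕ → M) (t : G → ℕ → M) (m : ℕ) : Submonoid M :=
  Submonoid.closure ({x | ∃ i, i + 1 < m ∧ x = s i} ∪ {x | ∃ g j, j < m ∧ x = t g j})

variable {n m d i j : ℕ} {s : ℕ → M} {t : G → ℕ → M} {g h : G}

theorem swap_mem_parabolic (hi : i + 1 < m) : s i ∈ parabolic s t m :=
  Submonoid.subset_closure (Or.inl ⟨i, hi, rfl⟩)

theorem label_mem_parabolic (hj : j < m) : t g j ∈ parabolic s t m :=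
  Submonoid.subset_closure (Or.inr ⟨g, j, hj, rfl⟩)

theorem parabolic_le_iff {P : Submonoid M} :
    parabolic s t m ≤ P ↔ (∀ i, i + 1 < m → s i ∈ P) ∧ ∀ g j, j < m → t g j ∈ P := by
  rw [parabolic, Submonoid.closure_le, Set.union_subset_iff]
  refine and_congr ⟨fun hP i hi => hP ⟨i, hi, rfl⟩, ?_⟩ ⟨fun hP g j hj => hP ⟨g, j, hj, rfl⟩, ?_⟩
  · rintro hP _ ⟨i, hi, rfl⟩
    exact hP i hi
  · rintro hP _ ⟨g, j, hj, rfl⟩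
    exact hP g j hj

theorem parabolic_zero : parabolic s t 0 = ⊥ :=
  eq_bot_iff.2 (parabolic_le_iff.2 ⟨fun _ hi => by omega, fun _ _ hj => by omega⟩)

theorem parabolic_mono {m' : ℕ} (hm : m ≤ m') : parabolic s t m ≤ parabolic s t m' :=
  parabolic_le_iff.2 ⟨fun _ hi => swap_mem_parabolic (by omega),
    fun _ _ hj => label_mem_parabolic (by omega)⟩

theorem cycleWord_mem_parabolic (hd : i + d < m) : cycleWord s d i ∈ parabolic s t m := by
  induction d generalizing i with
  | zero => exact one_mem _
  | succ d ih => exact mul_mem (swap_mem_parabolic (by omega)) (ih (by omega))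

variable [Group G]

namespace WreathRelations

theorem swap_mul_cycleWord_of_lt (R : WreathRelations n s t) (hd : i + d < n) (hj : j + 1 < i) :
    s j * cycleWord s d i = cycleWord s d i * s j := by
  induction d generalizing i with
  | zero => simp [cycleWord]
  | succ d ih =>
    rw [cycleWord, ← mul_assoc, R.swap_swap hj (by omega), mul_assoc, ih (by omega) (by omega),
      mul_assoc]

theorem swap_succ_mul_cycleWord (R : WreathRelations n s t) (hd : i + d < n) (hij : i ≤ j)
    (hj : j + 1 < i + d) : s (j + 1) * cycleWord s d i = cycleWord s d i * s j := by
  induction d generalizing i with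
  | zero => omega
  | succ d ih =>
    obtain rfl | hlt := hij.eq_or_lt
    · obtain ⟨d, rfl⟩ : ∃ e, d = e + 1 := ⟨d - 1, by omega⟩
      calc s (i + 1) * (s i * (s (i + 1) * cycleWord s d (i + 2)))
          = (s (i + 1) * s i * s (i + 1)) * cycleWord s d (i + 2) := by simp only [mul_assoc]
        _ = s i * s (i + 1) * (s i * cycleWord s d (i + 2)) := by
          rw [← R.swap_braid (by omega), mul_assoc]
        _ = s i * (s (i + 1) * cycleWord s d (i + 2)) * s i := by
          rw [R.swap_mul_cycleWord_of_lt (by omega) (by omega)]; simp only [mul_assoc]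
    · rw [cycleWord, ← mul_assoc, ← R.swap_swap (by omega) (by omega), mul_assoc,
        ih (by omega) (by omega) (by omega), mul_assoc]

theorem label_mul_cycleWord_of_lt (R : WreathRelations n s t) (hd : i + d < n) (hj : j < i) :
    t g j * cycleWord s d i = cycleWord s d i * t g j := by
  induction d generalizing i with
  | zero => simp [cycleWord]
  | succ d ih =>
    rw [cycleWord, ← mul_assoc, ← R.swap_label (by omega) (by omega) (by omega) (by omega),
      mul_assoc, ih (by omega) (by omega), mul_assoc]

theorem label_succ_mul_cycleWord (R : WreathRelations n s t) (hd : i + d < n) (hij : i ≤ j)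
    (hj : j < i + d) : t g (j + 1) * cycleWord s d i = cycleWord s d i * t g j := by
  induction d generalizing i with
  | zero => omega
  | succ d ih =>
    obtain rfl | hlt := hij.eq_or_lt
    · rw [cycleWord, ← mul_assoc, ← R.swap_label_left (by omega), mul_assoc,
        R.label_mul_cycleWord_of_lt (by omega) (by omega), mul_assoc]
    · rw [cycleWord, ← mul_assoc, ← R.swap_label (by omega) (by omega) (by omega) (by omega),
        mul_assoc, ih (by omega) (by omega) (by omega), mul_assoc]

theorem exists_swap_mul_cycleWord (R : WreathRelations n s t) (hd : i + d < n) (hj : j + 1 ≤ i + d)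
    (hij : j ≠ i) (hij' : j + 1 ≠ i) :
    ∃ l, l + 1 < i + d ∧ s j * cycleWord s d i = cycleWord s d i * s l := by
  obtain hlt | hlt := lt_or_gt_of_ne hij'
  · exact ⟨j, by omega, R.swap_mul_cycleWord_of_lt hd hlt⟩
  · obtain ⟨l, rfl⟩ : ∃ l, j = l + 1 := ⟨j - 1, by omega⟩
    exact ⟨l, by omega, R.swap_succ_mul_cycleWord hd (by omega) hj⟩

theorem exists_label_mul_cycleWord (R : WreathRelations n s t) (hd : i + d < n) (hj : j ≤ i + d)
    (hij : j ≠ i) (g : G) :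
    ∃ l, l < i + d ∧ t g j * cycleWord s d i = cycleWord s d i * t g l := by
  obtain hlt | hlt := lt_or_gt_of_ne hij
  · exact ⟨j, by omega, R.label_mul_cycleWord_of_lt hd hlt⟩
  · obtain ⟨l, rfl⟩ : ∃ l, j = l + 1 := ⟨j - 1, by omega⟩
    exact ⟨l, by omega, R.label_succ_mul_cycleWord hd (by omega) hj⟩

variable (s t) in
/-- The normal forms of the elements of `parabolic s t (m + 1)`: the coset of `parabolic s t m` is
recorded by the image `(i, g)` of `(m, 1)`. -/
def normalForms (m : ℕ) : Set M :=
  {x | ∃ g i d, i + d = m ∧ ∃ y ∈ parabolic s t m, x = t g i * (cycleWord s d i * y)}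

theorem swap_mul_mem_normalForms (R : WreathRelations n s t) (hm : m < n) (hj : j < m) {x : M}
    (hx : x ∈ normalForms s t m) : s j * x ∈ normalForms s t m := by
  obtain ⟨g, i, d, rfl, y, hy, rfl⟩ := hx
  by_cases hji : j = i
  · subst hji
    obtain ⟨d, rfl⟩ : ∃ e, d = e + 1 := ⟨d - 1, by omega⟩
    refine ⟨g, j + 1, d, by omega, y, hy, ?_⟩
    rw [← mul_assoc, R.swap_label_left (by omega), mul_assoc, cycleWord, ← mul_assoc (s j),
      ← mul_assoc (s j), R.swap_sq (by omega), one_mul]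
  by_cases hji' : j + 1 = i
  · subst hji'
    refine ⟨g, j, d + 1, by omega, y, hy, ?_⟩
    rw [← mul_assoc, R.swap_label_right (by omega), mul_assoc, cycleWord, ← mul_assoc (s j)]
  · obtain ⟨l, hl, hcomm⟩ := R.exists_swap_mul_cycleWord hm hj hji hji'
    refine ⟨g, i, d, rfl, s l * y, mul_mem (swap_mem_parabolic hl) hy, ?_⟩
    rw [← mul_assoc, R.swap_label (by omega) (by omega) (Ne.symm hji) (Ne.symm hji'), mul_assoc,
      ← mul_assoc (s j), hcomm, mul_assoc]

theorem label_mul_mem_normalForms (R : WreathRelations n s t) (hm : m < n) (hj : j ≤ m) {x : M}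
    (hx : x ∈ normalForms s t m) : t h j * x ∈ normalForms s t m := by
  obtain ⟨g, i, d, rfl, y, hy, rfl⟩ := hx
  by_cases hji : j = i
  · subst hji
    exact ⟨h * g, j, d, rfl, y, hy, by rw [← mul_assoc, R.label_mul (by omega)]⟩
  · obtain ⟨l, hl, hcomm⟩ := R.exists_label_mul_cycleWord hm hj hji h
    refine ⟨g, i, d, rfl, t h l * y, mul_mem (label_mem_parabolic hl) hy, ?_⟩
    rw [← mul_assoc, R.label_label (by omega) (by omega) hji, mul_assoc, ← mul_assoc (t h j),
      hcomm, mul_assoc]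

theorem mem_normalForms (R : WreathRelations n s t) (hm : m < n) {x : M}
    (hx : x ∈ parabolic s t (m + 1)) : x ∈ normalForms s t m := by
  induction hx using Submonoid.closure_induction_left with
  | one => exact ⟨1, m, 0, rfl, 1, one_mem _, by simp [cycleWord, R.label_one hm]⟩
  | mul_left x hx y _ hy =>
    rcases hx with ⟨j, hj, rfl⟩ | ⟨h, j, hj, rfl⟩
    · exact R.swap_mul_mem_normalForms hm (by omega) hy
    · exact R.label_mul_mem_normalForms hm (by omega) hy

end WreathRelations

section Representation

variable {Φ : M →* Equiv.Perm (ℕ × G)}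

/-- The homomorphism `Φ` sends `s i` and `t g j` to the elements of the wreath product for which
they stand. -/
structure IsWreathRepresentation (n : ℕ) (s : ℕ → M) (t : G → ℕ → M)
    (Φ : M →* Equiv.Perm (ℕ × G)) : Prop where
  map_swap {i : ℕ} : i + 1 < n → Φ (s i) = letterSwap G i (i + 1)
  map_label {g : G} {j : ℕ} : j < n → Φ (t g j) = labelMul g j

namespace IsWreathRepresentation

theorem map_mem_wreath (hΦ : IsWreathRepresentation n s t Φ) (hm : m ≤ n) {x : M}
    (hx : x ∈ parabolic s t m) : Φ x ∈ wreath G m := by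
  have hle : parabolic s t m ≤ (wreath G m).toSubmonoid.comap Φ := by
    refine parabolic_le_iff.2 ⟨fun i hi => ?_, fun g j hj => ?_⟩
    · rw [Submonoid.mem_comap, hΦ.map_swap (by omega)]
      exact letterSwap_mem (Finset.mem_range.2 (by omega)) (Finset.mem_range.2 hi)
    · rw [Submonoid.mem_comap, hΦ.map_label (by omega)]
      exact labelMul_mem g (Finset.mem_range.2 hj)
  exact hle hx

theorem map_cycleWord_apply (hΦ : IsWreathRepresentation n s t Φ) (hd : i + d < n) :
    Φ (cycleWord s d i) (i + d, g) = (i, g) := by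
  induction d generalizing i with
  | zero => simp [cycleWord]
  | succ d ih =>
    rw [cycleWord, map_mul, Equiv.Perm.mul_apply, show i + (d + 1) = i + 1 + d by omega,
      ih (by omega), hΦ.map_swap (by omega)]
    simp

theorem map_label_mul_cycleWord_apply (hΦ : IsWreathRepresentation n s t Φ) (hd : i + d < n) :
    Φ (t g i * cycleWord s d i) (i + d, 1) = (i, g) := by
  rw [map_mul, Equiv.Perm.mul_apply, hΦ.map_cycleWord_apply hd, hΦ.map_label (by omega)]
  simp [labelMul_apply]

theorem map_normalForm_apply (hΦ : IsWreathRepresentation n s t Φ) (hd : i + d < n) {y : M}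
    (hy : y ∈ parabolic s t (i + d)) :
    Φ (t g i * (cycleWord s d i * y)) (i + d, 1) = (i, g) := by
  rw [← mul_assoc, map_mul, Equiv.Perm.mul_apply,
    (hΦ.map_mem_wreath hd.le hy).2 _ Finset.notMem_range_self,
    hΦ.map_label_mul_cycleWord_apply hd]

theorem injOn_parabolic (hΦ : IsWreathRepresentation n s t Φ) (R : WreathRelations n s t)
    (hm : m ≤ n) : Set.InjOn Φ (parabolic s t m) := by
  induction m with
  | zero =>
    rw [parabolic_zero]
    exact Set.injOn_singleton Φ 1
  | succ m ih =>
    intro x hx x' hx' hxx'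
    obtain ⟨g, i, d, rfl, y, hy, rfl⟩ := R.mem_normalForms hm hx
    obtain ⟨g', i', d', hd', y', hy', rfl⟩ := R.mem_normalForms hm hx'
    have himage := hΦ.map_normalForm_apply hm hy (g := g)
    rw [hxx', ← hd', hΦ.map_normalForm_apply (by omega) (hd' ▸ hy')] at himage
    obtain ⟨rfl, rfl⟩ := Prod.mk.inj himage
    obtain rfl : d' = d := by omega
    simp only [map_mul, mul_right_inj] at hxx'
    rw [ih (by omega) hy hy' hxx']

theorem exists_mem_parabolic_map_eq (hΦ : IsWreathRepresentation n s t Φ) (hm : m ≤ n)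
    {σ : Equiv.Perm (ℕ × G)} (hσ : σ ∈ wreath G m) : ∃ x ∈ parabolic s t m, Φ x = σ := by
  induction m generalizing σ with
  | zero => exact ⟨1, one_mem _, by rw [map_one]; exact Equiv.ext fun a => (hσ.2 a (by simp)).symm⟩
  | succ m ih =>
    rcases hσm : σ (m, 1) with ⟨i, g⟩
    have hi : i < m + 1 := by
      simpa [hσm] using (apply_fst_mem_iff hσ (a := (m, 1))).2 (by simp)
    obtain ⟨d, rfl⟩ := Nat.exists_eq_add_of_le (Nat.lt_succ_iff.1 hi)
    set x := t g i * cycleWord s d i with hx_def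
    have hx : x ∈ parabolic s t (i + d + 1) :=
      mul_mem (label_mem_parabolic hi) (cycleWord_mem_parabolic (Nat.lt_succ_self _))
    have hxσ : ((Φ x)⁻¹ * σ) (i + d, 1) = (i + d, 1) := by
      rw [Equiv.Perm.mul_apply, hσm, Equiv.Perm.inv_eq_iff_eq,
        hΦ.map_label_mul_cycleWord_apply hm]
    obtain ⟨y, hy, hΦy⟩ := ih (Nat.le_of_succ_le hm) <|
      mem_wreathProduct_of_map_eq (T := Finset.range (i + d)) (l := [(i + d, 1)])
        (mul_mem (inv_mem (hΦ.map_mem_wreath hm hx)) hσ) (by rw [List.map_singleton, hxσ])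
        fun l hl hl' => ⟨1, by simp at hl hl' ⊢; omega⟩
    exact ⟨x * y, mul_mem hx (parabolic_mono (Nat.le_succ _) hy), by
      rw [map_mul, hΦy, mul_inv_cancel_left]⟩

end IsWreathRepresentation

end Representation

theorem wreathRelations_perm (n : ℕ) :
    WreathRelations n (fun i => letterSwap G i (i + 1)) (fun g j => labelMul g j) := by
  constructor <;> intros <;> refine Equiv.ext fun a => ?_ <;>
    simp only [Equiv.Perm.mul_apply, Equiv.Perm.one_apply, labelMul_apply, letterSwap_apply,
      Equiv.swap_apply_def] <;>
    grind

theorem WreathRelations.prod {M' : Type*} [Monoid M'] {s' : ℕ → M'} {t' : G → ℕ → M'}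
    (R : WreathRelations n s t) (R' : WreathRelations n s' t') :
    WreathRelations n (fun i => (s i, s' i)) (fun g j => (t g j, t' g j)) where
  swap_sq hi := Prod.ext (R.swap_sq hi) (R'.swap_sq hi)
  swap_braid hi := Prod.ext (R.swap_braid hi) (R'.swap_braid hi)
  swap_swap hij hj := Prod.ext (R.swap_swap hij hj) (R'.swap_swap hij hj)
  label_mul hj := Prod.ext (R.label_mul hj) (R'.label_mul hj)
  label_one hj := Prod.ext (R.label_one hj) (R'.label_one hj)
  label_label hj hl hjl := Prod.ext (R.label_label hj hl hjl) (R'.label_label hj hl hjl)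
  swap_label hi hl h h' := Prod.ext (R.swap_label hi hl h h') (R'.swap_label hi hl h h')
  swap_label_left hi := Prod.ext (R.swap_label_left hi) (R'.swap_label_left hi)
  swap_label_right hi := Prod.ext (R.swap_label_right hi) (R'.swap_label_right hi)

/-- The exchange of the letters `i` and `i + 1`, in the wreath product on `n` letters. -/
def wreathSwap (hi : i + 1 < n) : wreath G n :=
  ⟨letterSwap G i (i + 1),
    letterSwap_mem (Finset.mem_range.2 (by omega)) (Finset.mem_range.2 hi)⟩

/-- The multiplication of the labels of the letter `j` by `g`, in the wreath product on `n`
letters. -/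
def wreathLabel (g : G) (hj : j < n) : wreath G n :=
  ⟨labelMul g j, labelMul_mem g (Finset.mem_range.2 hj)⟩

theorem wreath_induction {p : wreath G n → Prop} (one : p 1)
    (swap : ∀ i (hi : i + 1 < n), p (wreathSwap hi))
    (label : ∀ g j (hj : j < n), p (wreathLabel g hj)) (mul : ∀ v w, p v → p w → p (v * w))
    (w : wreath G n) : p w := by
  have hid : IsWreathRepresentation n (fun i => letterSwap G i (i + 1))
      (fun g j => labelMul g j) (MonoidHom.id _) := ⟨fun _ => rfl, fun _ => rfl⟩
  let P : Submonoid (wreath G n) :=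
    { carrier := {v | p v}, one_mem' := one, mul_mem' := mul _ _ }
  have hle : parabolic (fun i => letterSwap G i (i + 1)) (fun g j => labelMul g j) n ≤
      P.map (wreath G n).subtype :=
    parabolic_le_iff.2 ⟨fun i hi => ⟨_, swap i hi, rfl⟩, fun g j hj => ⟨_, label g j hj, rfl⟩⟩
  obtain ⟨_, hw, rfl⟩ := hid.exists_mem_parabolic_map_eq le_rfl w.2
  obtain ⟨v, hv, hvw⟩ := hle hw
  exact Subtype.ext hvw ▸ hv

/-- The graph of the homomorphism is the parabolic submonoid generated by the pairs of corresponding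
generators. -/
theorem exists_wreath_hom (R : WreathRelations n s t) : ∃ ψ : wreath G n →* M,
    (∀ i (hi : i + 1 < n), ψ (wreathSwap hi) = s i) ∧
    ∀ g j (hj : j < n), ψ (wreathLabel g hj) = t g j := by
  set s' : ℕ → M × Equiv.Perm (ℕ × G) := fun i => (s i, letterSwap G i (i + 1))
  set t' : G → ℕ → M × Equiv.Perm (ℕ × G) := fun g j => (t g j, labelMul g j)
  have hsnd : IsWreathRepresentation n s' t' (MonoidHom.snd M _) := ⟨fun _ => rfl, fun _ => rfl⟩
  have hinj := hsnd.injOn_parabolic (R.prod (wreathRelations_perm n)) le_rfl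
  have hsurj (w : wreath G n) : ∃ x, (x, w.1) ∈ parabolic s' t' n := by
    obtain ⟨⟨x, _⟩, hx, rfl⟩ := hsnd.exists_mem_parabolic_map_eq le_rfl w.2
    exact ⟨x, hx⟩
  choose ψ hψ using hsurj
  have hψ_eq {w : wreath G n} {x : M} (hx : (x, w.1) ∈ parabolic s' t' n) : ψ w = x :=
    congrArg Prod.fst (hinj (hψ w) hx rfl)
  exact ⟨⟨⟨ψ, hψ_eq (one_mem _)⟩, fun v w => hψ_eq (mul_mem (hψ v) (hψ w))⟩,
    fun i hi => hψ_eq (swap_mem_parabolic hi), fun g j hj => hψ_eq (label_mem_parabolic hj)⟩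

end Presentation

/-! ### Rook algebras -/

section Idempotents

variable {R : Type*} [Ring R]

/-- The product `(1 - f 0) * ⋯ * (1 - f (m - 1))`. If the `f j` are commuting idempotents, this is
the idempotent that projects to the common kernel of the `f j`. -/
def kernelIdempotent (f : ℕ → R) : ℕ → R
  | 0 => 1
  | m + 1 => kernelIdempotent f m * (1 - f m)

variable {f : ℕ → R} {m : ℕ} {x : R}

theorem mul_kernelIdempotent_of_mul_eq_zero (hx : ∀ j < m, x * f j = 0) :
    x * kernelIdempotent f m = x := by
  induction m with
  | zero => exact mul_one x
  | succ m ih =>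
    rw [kernelIdempotent, ← mul_assoc, ih fun j hj => hx j (by omega), mul_sub, mul_one,
      hx m (by omega), sub_zero]

theorem kernelIdempotent_mul_of_mul_eq_zero (hx : ∀ j < m, f j * x = 0) :
    kernelIdempotent f m * x = x := by
  induction m with
  | zero => exact one_mul x
  | succ m ih =>
    rw [kernelIdempotent, mul_assoc, sub_mul, one_mul, hx m (by omega), sub_zero,
      ih fun j hj => hx j (by omega)]

theorem map_kernelIdempotent {S : Type*} [Ring S] (φ : R →+* S) (hφ : ∀ j < m, φ (f j) = 0) :
    φ (kernelIdempotent f m) = 1 := by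
  induction m with
  | zero => exact map_one φ
  | succ m ih =>
    rw [kernelIdempotent, map_mul, ih fun j hj => hφ j (by omega), map_sub, hφ m (by omega),
      map_one, sub_zero, mul_one]

theorem commute_kernelIdempotent (hx : ∀ j < m, Commute x (f j)) :
    Commute x (kernelIdempotent f m) := by
  induction m with
  | zero => exact Commute.one_right x
  | succ m ih =>
    exact (ih fun j hj => hx j (by omega)).mul_right
      ((Commute.one_right x).sub_right (hx m (by omega)))

section Commuting

variable (hf : ∀ j < m, IsIdempotentElem (f j)) (hcomm : ∀ i < m, ∀ j < m, Commute (f i) (f j))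
include hf hcomm

theorem kernelIdempotent_mul {j : ℕ} (hj : j < m) : kernelIdempotent f m * f j = 0 := by
  induction m with
  | zero => omega
  | succ m ih =>
    obtain rfl | hlt := (Nat.lt_succ_iff.1 hj).eq_or_lt
    · rw [kernelIdempotent, mul_assoc, (hf j hj).one_sub_mul_self, mul_zero]
    · have hjm : Commute (1 - f m) (f j) :=
        (Commute.one_left _).sub_left (hcomm m (by omega) j hj)
      rw [kernelIdempotent, mul_assoc, hjm.eq, ← mul_assoc,
        ih (fun i hi => hf i (by omega)) (fun i hi l hl => hcomm i (by omega) l (by omega)) hlt,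
        zero_mul]

theorem mul_kernelIdempotent {j : ℕ} (hj : j < m) : f j * kernelIdempotent f m = 0 :=
  (commute_kernelIdempotent (hcomm j hj)).eq.trans (kernelIdempotent_mul hf hcomm hj)

theorem isIdempotentElem_kernelIdempotent : IsIdempotentElem (kernelIdempotent f m) :=
  mul_kernelIdempotent_of_mul_eq_zero fun _ hj => kernelIdempotent_mul hf hcomm hj

theorem commute_kernelIdempotent_of_permutes (hl : ∀ j < m, ∃ i < m, x * f j = f i * x)
    (hr : ∀ j < m, ∃ i < m, f j * x = x * f i) : Commute x (kernelIdempotent f m) := by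
  have hleft : kernelIdempotent f m * x * kernelIdempotent f m = kernelIdempotent f m * x :=
    mul_kernelIdempotent_of_mul_eq_zero fun j hj => by
      obtain ⟨i, hi, hji⟩ := hl j hj
      rw [mul_assoc, hji, ← mul_assoc, kernelIdempotent_mul hf hcomm hi, zero_mul]
  have hright : kernelIdempotent f m * (x * kernelIdempotent f m) = x * kernelIdempotent f m :=
    kernelIdempotent_mul_of_mul_eq_zero fun j hj => by
      obtain ⟨i, hi, hji⟩ := hr j hj
      rw [← mul_assoc, hji, mul_assoc, mul_kernelIdempotent hf hcomm hi, mul_zero]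
  exact hright.symm.trans ((mul_assoc _ _ _).symm.trans hleft)

end Commuting

end Idempotents

section RookAlgebra

variable {K G : Type} [CommRing K] [Group G] {n : ℕ} {e : K}

/-! The generators of the rook algebra are indexed by `ℕ`, with junk values outside the range. -/

variable (K G n e) in
/-- The transposition of the strands `i` and `i + 1`, as an element of the rook algebra. -/
def rookSwap (i : ℕ) : GRAlg K G n e :=
  if hi : i + 1 < n then RingQuot.mkAlgHom K (GRRel K G n e) (GRs K G n ⟨i, by omega⟩) else 1

variable (K n e) in
/-- The identity with the strand `j` labelled by `g`, as an element of the rook algebra. -/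
def rookLabel (g : G) (j : ℕ) : GRAlg K G n e :=
  if hj : j < n then RingQuot.mkAlgHom K (GRRel K G n e) (GRt K G n g ⟨j, hj⟩) else 1

variable (K G n e) in
/-- The identity with the strand `j` deleted, as an element of the rook algebra. -/
def rookDelete (j : ℕ) : GRAlg K G n e :=
  if hj : j < n then RingQuot.mkAlgHom K (GRRel K G n e) (GRp K G n ⟨j, hj⟩) else 0

theorem mkAlgHom_GRs (i : Fin (n - 1)) :
    RingQuot.mkAlgHom K (GRRel K G n e) (GRs K G n i) = rookSwap K G n e i := by
  rw [rookSwap, dif_pos (by omega)]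

theorem mkAlgHom_GRt (g : G) (j : Fin n) :
    RingQuot.mkAlgHom K (GRRel K G n e) (GRt K G n g j) = rookLabel K n e g j := by
  rw [rookLabel, dif_pos j.2]

theorem mkAlgHom_GRp (j : Fin n) :
    RingQuot.mkAlgHom K (GRRel K G n e) (GRp K G n j) = rookDelete K G n e j := by
  rw [rookDelete, dif_pos j.2]

theorem rook_induction {p : GRAlg K G n e → Prop} (scalar : ∀ c, p (algebraMap K _ c))
    (swap : ∀ i, i + 1 < n → p (rookSwap K G n e i))
    (label : ∀ g j, j < n → p (rookLabel K n e g j))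
    (delete : ∀ j, j < n → p (rookDelete K G n e j))
    (add : ∀ a b, p a → p b → p (a + b)) (mul : ∀ a b, p a → p b → p (a * b))
    (a : GRAlg K G n e) : p a := by
  obtain ⟨x, rfl⟩ := RingQuot.mkAlgHom_surjective K (GRRel K G n e) a
  induction x using FreeAlgebra.induction with
  | grade0 c =>
    rw [AlgHom.commutes]
    exact scalar c
  | grade1 x =>
    cases x with
    | s i => exact mkAlgHom_GRs (G := G) (e := e) i ▸ swap i (by omega)
    | p j => exact mkAlgHom_GRp (G := G) (e := e) j ▸ delete j j.2
    | t g j => exact mkAlgHom_GRt (e := e) g j ▸ label g j j.2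
  | mul x y hx hy =>
    rw [map_mul]
    exact mul _ _ hx hy
  | add x y hx hy =>
    rw [map_add]
    exact add _ _ hx hy

section Relations

variable {g h : G} {i j l : ℕ}

theorem mkAlgHom_eq_of_rel {x y : FreeAlgebra K (GRGen n G)} (hxy : GRRel K G n e x y) :
    RingQuot.mkAlgHom K (GRRel K G n e) x = RingQuot.mkAlgHom K (GRRel K G n e) y :=
  RingQuot.mkAlgHom_rel K hxy

theorem wreathRelations_rook : WreathRelations n (rookSwap K G n e) (rookLabel K n e) where
  swap_sq {i} hi := by
    simpa only [map_mul, map_one, mkAlgHom_GRs] using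
      mkAlgHom_eq_of_rel (e := e) (.s_sq (G := G) ⟨i, by omega⟩)
  swap_braid {i} hi := by
    simpa only [map_mul, mkAlgHom_GRs] using
      mkAlgHom_eq_of_rel (e := e) (.s_braid (G := G) ⟨i, by omega⟩ ⟨i + 1, by omega⟩ rfl)
  swap_swap {i j} hij hj := by
    simpa only [map_mul, mkAlgHom_GRs] using
      mkAlgHom_eq_of_rel (e := e) (.ss_comm (G := G) ⟨i, by omega⟩ ⟨j, by omega⟩ hij)
  label_mul {g h j} hj := by
    simpa only [map_mul, mkAlgHom_GRt] using mkAlgHom_eq_of_rel (e := e) (.t_mul g h ⟨j, hj⟩)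
  label_one {j} hj := by
    simpa only [map_one, mkAlgHom_GRt] using
      mkAlgHom_eq_of_rel (e := e) (.t_one (G := G) ⟨j, hj⟩)
  label_label {g h j l} hj hl hjl := by
    simpa only [map_mul, mkAlgHom_GRt] using mkAlgHom_eq_of_rel (e := e)
      (.tt_comm g h ⟨j, hj⟩ ⟨l, hl⟩ fun hjl' => hjl (Fin.val_eq_of_eq hjl'))
  swap_label {g i l} hi hl hli hli' := by
    simpa only [map_mul, mkAlgHom_GRs, mkAlgHom_GRt] using
      mkAlgHom_eq_of_rel (e := e) (.st_comm g ⟨i, by omega⟩ ⟨l, hl⟩ ⟨hli, hli'⟩)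
  swap_label_left {g i} hi := by
    simpa only [map_mul, mkAlgHom_GRs, mkAlgHom_GRt] using mkAlgHom_eq_of_rel (e := e)
      (.st_slide g ⟨i, by omega⟩ ⟨i, by omega⟩ ⟨i + 1, hi⟩ rfl rfl)
  swap_label_right {g i} hi := by
    simpa only [map_mul, mkAlgHom_GRs, mkAlgHom_GRt] using mkAlgHom_eq_of_rel (e := e)
      (.st_slide' g ⟨i, by omega⟩ ⟨i, by omega⟩ ⟨i + 1, hi⟩ rfl rfl)

theorem rookDelete_mul_self (hj : j < n) :
    rookDelete K G n e j * rookDelete K G n e j = e • rookDelete K G n e j := by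
  simpa only [map_mul, map_smul, mkAlgHom_GRp] using
    mkAlgHom_eq_of_rel (.p_sq (G := G) (ε := e) ⟨j, hj⟩)

theorem commute_rookDelete (hj : j < n) (hl : l < n) :
    Commute (rookDelete K G n e j) (rookDelete K G n e l) := by
  wlog hjl : j < l
  · obtain rfl | hlj := (not_lt.1 hjl).eq_or_lt
    · exact Commute.refl _
    · exact (this hl hj hlj).symm
  · simpa only [Commute, SemiconjBy, map_mul, mkAlgHom_GRp] using
      mkAlgHom_eq_of_rel (e := e) (.pp_comm (G := G) ⟨j, hj⟩ ⟨l, hl⟩ hjl)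

theorem commute_rookLabel_rookDelete (hj : j < n) (hl : l < n) :
    Commute (rookLabel K n e g j) (rookDelete K G n e l) := by
  obtain rfl | hjl := eq_or_ne j l
  · simpa only [Commute, SemiconjBy, map_mul, mkAlgHom_GRt, mkAlgHom_GRp] using
      (mkAlgHom_eq_of_rel (e := e) (.tp_absorb g ⟨j, hj⟩)).trans
        (mkAlgHom_eq_of_rel (.pt_absorb g ⟨j, hj⟩)).symm
  · simpa only [Commute, SemiconjBy, map_mul, mkAlgHom_GRt, mkAlgHom_GRp] using
      mkAlgHom_eq_of_rel (e := e)
        (.tp_comm g ⟨j, hj⟩ ⟨l, hl⟩ fun hjl' => hjl (Fin.val_eq_of_eq hjl'))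

theorem rookSwap_mul_rookDelete (hi : i + 1 < n) (hj : j < n) :
    rookSwap K G n e i * rookDelete K G n e j =
      rookDelete K G n e (Equiv.swap i (i + 1) j) * rookSwap K G n e i := by
  obtain rfl | hji := eq_or_ne j i
  · rw [Equiv.swap_apply_left]
    simpa only [map_mul, mkAlgHom_GRs, mkAlgHom_GRp] using mkAlgHom_eq_of_rel (e := e)
      (.sp_slide (G := G) ⟨j, by omega⟩ ⟨j, hj⟩ ⟨j + 1, hi⟩ rfl rfl)
  obtain rfl | hji' := eq_or_ne j (i + 1)
  · rw [Equiv.swap_apply_right]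
    simpa only [map_mul, mkAlgHom_GRs, mkAlgHom_GRp] using mkAlgHom_eq_of_rel (e := e)
      (.sp_slide' (G := G) ⟨i, by omega⟩ ⟨i, by omega⟩ ⟨i + 1, hi⟩ rfl rfl)
  · rw [Equiv.swap_apply_of_ne_of_ne hji hji']
    simpa only [map_mul, mkAlgHom_GRs, mkAlgHom_GRp] using mkAlgHom_eq_of_rel (e := e)
      (.sp_comm (G := G) ⟨i, by omega⟩ ⟨j, hj⟩ ⟨hji, hji'⟩)

theorem swap_succ_lt (hi : i + 1 < n) (hj : j < n) : Equiv.swap i (i + 1) j < n := by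
  rw [Equiv.swap_apply_def]
  split_ifs <;> omega

end Relations

section CentralIdempotent

variable (K G n e) in
/-- The idempotent of the rook algebra that annihilates the diagrams with a missing strand; here
`e' * e = 1`. -/
def rookIdempotent (e' : K) : GRAlg K G n e :=
  kernelIdempotent (fun j => e' • rookDelete K G n e j) n

variable {e' : K}

theorem isIdempotentElem_smul_rookDelete (he : e' * e = 1) {j : ℕ} (hj : j < n) :
    IsIdempotentElem (e' • rookDelete K G n e j) := by
  rw [IsIdempotentElem, smul_mul_smul_comm, rookDelete_mul_self hj, smul_smul, mul_assoc, he,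
    mul_one]

theorem commute_smul_rookDelete {i j : ℕ} (hi : i < n) (hj : j < n) :
    Commute (e' • rookDelete K G n e i) (e' • rookDelete K G n e j) :=
  ((commute_rookDelete hi hj).smul_left e').smul_right e'

theorem isIdempotentElem_rookIdempotent (he : e' * e = 1) :
    IsIdempotentElem (rookIdempotent K G n e e') :=
  isIdempotentElem_kernelIdempotent (fun _ => isIdempotentElem_smul_rookDelete he)
    fun _ hi _ hj => commute_smul_rookDelete hi hj

theorem rookIdempotent_mul_rookDelete (he : e' * e = 1) {j : ℕ} (hj : j < n) :
    rookIdempotent K G n e e' * rookDelete K G n e j = 0 := by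
  have hzero := kernelIdempotent_mul (fun _ => isIdempotentElem_smul_rookDelete (G := G) he)
    (fun _ hi _ hj => commute_smul_rookDelete (e' := e') hi hj) hj
  rw [mul_smul_comm] at hzero
  have := congrArg (e • ·) hzero
  simpa only [rookIdempotent, smul_smul, mul_comm e, he, one_smul, smul_zero] using this

theorem commute_rookSwap_rookIdempotent (he : e' * e = 1) {i : ℕ} (hi : i + 1 < n) :
    Commute (rookSwap K G n e i) (rookIdempotent K G n e e') := by
  refine commute_kernelIdempotent_of_permutes (fun _ => isIdempotentElem_smul_rookDelete he)
    (fun _ hi _ hj => commute_smul_rookDelete hi hj)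
    (fun j hj => ⟨_, swap_succ_lt hi hj, ?_⟩) (fun j hj => ⟨_, swap_succ_lt hi hj, ?_⟩)
  · rw [mul_smul_comm, smul_mul_assoc, rookSwap_mul_rookDelete hi hj]
  · rw [mul_smul_comm, smul_mul_assoc, rookSwap_mul_rookDelete hi (swap_succ_lt hi hj),
      Equiv.swap_apply_self]

theorem rookIdempotent_mem_center (he : e' * e = 1) :
    rookIdempotent K G n e e' ∈ Set.center (GRAlg K G n e) := by
  refine Semigroup.mem_center_iff.2 fun a => ?_
  change Commute a _
  induction a using rook_induction with
  | scalar c => exact Algebra.commute_algebraMap_left c _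
  | swap i hi => exact commute_rookSwap_rookIdempotent he hi
  | label g j hj =>
    exact commute_kernelIdempotent fun l hl =>
      (commute_rookLabel_rookDelete hj hl).smul_right e'
  | delete j hj =>
    exact commute_kernelIdempotent fun l hl => (commute_rookDelete hj hl).smul_right e'
  | add a b ha hb => exact ha.add_left hb
  | mul a b ha hb => exact ha.mul_left hb

end CentralIdempotent

section Projection

variable (K) in
/-- The image in the group algebra of the wreath product of a generator of the rook algebra. -/
def wreathGenerator : GRGen n G → MonoidAlgebra K (wreath G n)
  | .s i => .of K _ (wreathSwap (i := i) (by omega))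
  | .p _ => 0
  | .t g j => .of K _ (wreathLabel g j.2)

theorem lift_wreathGenerator_eq_of_rel {x y : FreeAlgebra K (GRGen n G)}
    (hxy : GRRel K G n e x y) : FreeAlgebra.lift K (wreathGenerator K) x =
      FreeAlgebra.lift K (wreathGenerator K) y := by
  have R := wreathRelations_perm (G := G) n
  induction hxy <;>
    simp only [map_mul, map_one, map_smul, FreeAlgebra.lift_ι_apply, wreathGenerator, mul_zero,
      zero_mul, smul_zero, GRs, GRp, GRt] <;>
    simp only [← map_mul, ← map_one (MonoidAlgebra.of K (wreath G n))] <;>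
    refine congrArg _ (Subtype.ext ?_)
  case s_sq i => exact R.swap_sq (by omega)
  case s_braid i j hij =>
    obtain ⟨j, hj⟩ := j
    obtain rfl : j = i + 1 := hij
    exact R.swap_braid (by omega)
  case ss_comm i j hij => exact R.swap_swap hij (by omega)
  case t_mul g h j => exact R.label_mul j.2
  case t_one j => exact R.label_one j.2
  case tt_comm g h j l hjl => exact R.label_label j.2 l.2 fun hjl' => hjl (Fin.ext hjl')
  case st_comm g i l hl => exact R.swap_label (by omega) l.2 hl.1 hl.2
  case st_slide g i j j' hj hj' =>
    obtain ⟨⟨j, _⟩, ⟨j', _⟩⟩ := j, j'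
    obtain ⟨rfl, rfl⟩ : j = i ∧ j' = i + 1 := ⟨hj, hj'⟩
    exact R.swap_label_left (by omega)
  case st_slide' g i j j' hj hj' =>
    obtain ⟨⟨j, _⟩, ⟨j', _⟩⟩ := j, j'
    obtain ⟨rfl, rfl⟩ : j = i ∧ j' = i + 1 := ⟨hj, hj'⟩
    exact R.swap_label_right (by omega)

variable (K G n e) in
/-- The projection from the rook algebra to the group algebra of the wreath product which kills
the diagrams with a missing strand. -/
def rookToWreath : GRAlg K G n e →ₐ[K] MonoidAlgebra K (wreath G n) :=
  RingQuot.liftAlgHom K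
    ⟨FreeAlgebra.lift K (wreathGenerator K), fun {_ _} hxy => lift_wreathGenerator_eq_of_rel hxy⟩

theorem rookToWreath_mkAlgHom (x : GRGen n G) :
    rookToWreath K G n e (RingQuot.mkAlgHom K (GRRel K G n e) (FreeAlgebra.ι K x)) =
      wreathGenerator K x := by
  rw [rookToWreath, RingQuot.liftAlgHom_mkAlgHom_apply]
  exact FreeAlgebra.lift_ι_apply _ _

theorem rookToWreath_rookSwap {i : ℕ} (hi : i + 1 < n) :
    rookToWreath K G n e (rookSwap K G n e i) = .of K _ (wreathSwap hi) := by
  rw [rookSwap, dif_pos hi]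
  exact rookToWreath_mkAlgHom _

theorem rookToWreath_rookLabel (g : G) {j : ℕ} (hj : j < n) :
    rookToWreath K G n e (rookLabel K n e g j) = .of K _ (wreathLabel g hj) := by
  rw [rookLabel, dif_pos hj]
  exact rookToWreath_mkAlgHom _

theorem rookToWreath_rookDelete {j : ℕ} (hj : j < n) :
    rookToWreath K G n e (rookDelete K G n e j) = 0 := by
  rw [rookDelete, dif_pos hj]
  exact rookToWreath_mkAlgHom _

theorem rookToWreath_rookIdempotent (e' : K) :
    rookToWreath K G n e (rookIdempotent K G n e e') = 1 := by
  refine map_kernelIdempotent (rookToWreath K G n e).toRingHom fun j hj => ?_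
  exact (map_smul (rookToWreath K G n e) e' _).trans
    (by rw [rookToWreath_rookDelete hj, smul_zero])

theorem groupAug_comp_rookToWreath :
    (groupAug K (wreath G n)).comp (rookToWreath K G n e) = GRaug K G n e := by
  refine RingQuot.ringQuot_ext' _ _ _ (FreeAlgebra.hom_ext (funext fun x => ?_))
  change groupAug K _ (rookToWreath K G n e (RingQuot.mkAlgHom K _ _)) =
    GRaug K G n e (RingQuot.mkAlgHom K _ _)
  rw [rookToWreath_mkAlgHom, GRaug, RingQuot.liftAlgHom_mkAlgHom_apply, FreeAlgebra.lift_ι_apply]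
  cases x with
  | s i => exact groupAug_single _
  | p j => exact map_zero _
  | t g j => exact groupAug_single _

variable (K G n e) in
theorem exists_rookToWreath_section :
    ∃ σ : MonoidAlgebra K (wreath G n) →ₐ[K] GRAlg K G n e,
      (∀ i (hi : i + 1 < n), σ (.of K _ (wreathSwap hi)) = rookSwap K G n e i) ∧
        ∀ (g : G) j (hj : j < n), σ (.of K _ (wreathLabel g hj)) = rookLabel K n e g j := by
  obtain ⟨ψ, hswap, hlabel⟩ := exists_wreath_hom (wreathRelations_rook (K := K) (G := G) (e := e))
  refine ⟨MonoidAlgebra.lift K _ _ ψ, fun i hi => ?_, fun g j hj => ?_⟩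
  · rw [MonoidAlgebra.lift_of, hswap]
  · rw [MonoidAlgebra.lift_of, hlabel]

section Section

variable {σ : MonoidAlgebra K (wreath G n) →ₐ[K] GRAlg K G n e}
  (hswap : ∀ i (hi : i + 1 < n), σ (.of K _ (wreathSwap hi)) = rookSwap K G n e i)
  (hlabel : ∀ (g : G) j (hj : j < n), σ (.of K _ (wreathLabel g hj)) = rookLabel K n e g j)
include hswap hlabel

theorem rookToWreath_comp_section : (rookToWreath K G n e).comp σ = AlgHom.id K _ := by
  refine MonoidAlgebra.algHom_ext (fun w => ?_) (Subsingleton.elim _ _)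
  change rookToWreath K G n e (σ (.of K _ w)) = .of K _ w
  induction w using wreath_induction with
  | one => simp only [map_one]
  | swap i hi => rw [hswap, rookToWreath_rookSwap]
  | label g j hj => rw [hlabel, rookToWreath_rookLabel]
  | mul v w hv hw => rw [map_mul, map_mul, map_mul, hv, hw]

theorem rookIdempotent_mul_section {e' : K} (he : e' * e = 1) (a : GRAlg K G n e) :
    rookIdempotent K G n e e' * σ (rookToWreath K G n e a) = rookIdempotent K G n e e' * a := by
  induction a using rook_induction with
  | scalar c => rw [AlgHom.commutes, AlgHom.commutes]
  | swap i hi => rw [rookToWreath_rookSwap hi, hswap]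
  | label g j hj => rw [rookToWreath_rookLabel g hj, hlabel]
  | delete j hj =>
    rw [rookToWreath_rookDelete hj, map_zero, mul_zero, rookIdempotent_mul_rookDelete he hj]
  | add a b ha hb => rw [map_add, map_add, mul_add, mul_add, ha, hb]
  | mul a b ha hb =>
    have hz := Semigroup.mem_center_iff.1 (rookIdempotent_mem_center (G := G) (n := n) he) a
    rw [map_mul, map_mul, ← mul_assoc, ha, ← hz, mul_assoc, hb, ← mul_assoc, hz, mul_assoc]

end Section

end Projection

section BarHomology

variable (K G n e) in
/-- The map of bar complexes induced by `rookToWreath`. -/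
def rookBarMap :
    barComplex (GRaug K G n e) ⟶ barComplex (groupAug K (wreath G n)) :=
  barComplexMap (rookToWreath K G n e : _ →ₙₐ[K] _) (AlgHom.congr_fun groupAug_comp_rookToWreath)

theorem isIso_homologyMap_rookBarMap (he : IsUnit e) (q : ℕ) :
    IsIso (homologyMap (rookBarMap K G n e) q) := by
  obtain ⟨e', he⟩ := he.exists_left_inv
  obtain ⟨σ, hswap, hlabel⟩ := exists_rookToWreath_section K G n e
  exact isIso_homologyMap_barComplexMap_of_isIdempotentElem _
    (rookToWreath_comp_section hswap hlabel) (rookIdempotent_mem_center he)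
    (isIdempotentElem_rookIdempotent he) (rookToWreath_rookIdempotent e')
    (rookIdempotent_mul_section hswap hlabel he) q

theorem rookToWreath_comp_GRincl :
    (rookToWreath K G n e).comp (GRincl K G n e) =
      (MonoidAlgebra.mapDomainAlgHom K K (wreathIncl G (Nat.sub_le n 1))).comp
        (rookToWreath K G (n - 1) e) := by
  refine RingQuot.ringQuot_ext' _ _ _ (FreeAlgebra.hom_ext (funext fun x => ?_))
  change rookToWreath K G n e (GRincl K G n e (RingQuot.mkAlgHom K _ _)) =
    MonoidAlgebra.mapDomainAlgHom K K _ (rookToWreath K G (n - 1) e (RingQuot.mkAlgHom K _ _))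
  have hincl : GRincl K G n e (RingQuot.mkAlgHom K _ (FreeAlgebra.ι K x)) =
      RingQuot.mkAlgHom K (GRRel K G n e) (FreeAlgebra.ι K (GRGenMap G n x)) := by
    simp only [GRincl, RingQuot.liftAlgHom_mkAlgHom_apply, AlgHom.comp_apply,
      FreeAlgebra.lift_ι_apply]
  have hsingle (w : wreath G (n - 1)) :
      MonoidAlgebra.mapDomainAlgHom K K (wreathIncl G (Nat.sub_le n 1)) (.of K _ w) =
        .of K _ (wreathIncl G (Nat.sub_le n 1) w) :=
    MonoidAlgebra.mapDomain_single
  rw [hincl, rookToWreath_mkAlgHom, rookToWreath_mkAlgHom]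
  cases x with
  | s i => exact (hsingle (wreathSwap (i := i) (by omega))).symm
  | p j => exact (map_zero (MonoidAlgebra.mapDomainAlgHom K K (wreathIncl G _))).symm
  | t g j => exact (hsingle (wreathLabel g j.2)).symm

variable (K G n e) in
/-- The map of bar complexes induced by the inclusion of rook algebras. -/
def rookInclBarMap : barComplex (GRaug K G (n - 1) e) ⟶ barComplex (GRaug K G n e) :=
  barComplexMap (GRincl K G n e : GRAlg K G (n - 1) e →ₙₐ[K] GRAlg K G n e)
    (AlgHom.congr_fun (GRaug_incl K G n e))

theorem rookInclBarMap_comp_rookBarMap :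
    rookInclBarMap K G n e ≫ rookBarMap K G n e =
      rookBarMap K G (n - 1) e ≫ groupBarMap (wreathIncl G (Nat.sub_le n 1)) := by
  have hcomp := rookToWreath_comp_GRincl (K := K) (G := G) (n := n) (e := e)
  refine (barComplexMap_comp _ _).symm.trans (Eq.trans ?_ (barComplexMap_comp _ _))
  congr 1
  exact NonUnitalAlgHom.ext (AlgHom.congr_fun hcomp)

theorem isIso_homologyMap_rookInclBarMap (he : IsUnit e) {q : ℕ} (hn : 2 * q + 2 ≤ n) :
    IsIso (homologyMap (rookInclBarMap K G n e) q) := by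
  obtain ⟨m, rfl⟩ : ∃ m, n = m + 1 := ⟨n - 1, by omega⟩
  have hsquare := congrArg (homologyMap · q)
    (rookInclBarMap_comp_rookBarMap (K := K) (G := G) (n := m + 1) (e := e))
  have hsource : IsIso (homologyMap (rookBarMap K G (m + 1 - 1) e) q) :=
    isIso_homologyMap_rookBarMap he q
  have htarget : IsIso (homologyMap (rookBarMap K G (m + 1) e) q) :=
    isIso_homologyMap_rookBarMap he q
  have hwreath : IsIso (homologyMap (groupBarMap (K := K)
      (wreathIncl G (Nat.sub_le (m + 1) 1))) q) :=
    isIso_homologyMap_groupBarMap _ (isIso_homologyMap_wreathIncl (m := m) (by omega))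
  simp only [homologyMap_comp] at hsquare
  exact IsIso.of_isIso_fac_right hsquare

end BarHomology

end RookAlgebra

end RookHomology

/-- **Homological stability for `G`-equivariant rook algebras.**
Let `G` be a group, `k` a commutative `G`-ring, and `ε ∈ k` invertible.  The morphism
`Tor_q^{GR_{n-1}(ε)}(𝟙,𝟙) → Tor_q^{GR_n(ε)}(𝟙,𝟙)` induced by the inclusion
`GR_{n-1}(ε) → GR_n(ε)` is an isomorphism for `n ≥ 2q+2`. -/
theorem equivariant_rook_homological_stability (k G : Type) [CommRing k] [Group G]
    (ρ : G →* RingAut k) (ε : k) (hε : IsUnit ε) (n q : ℕ) (h : 2 * q + 2 ≤ n) :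
    Function.Bijective
      (torMap k (GRaug k G (n - 1) ε) (GRaug k G n ε) (GRincl k G n ε)
        (GRaug_incl k G n ε) q) := by
  have hiso := RookHomology.isIso_homologyMap_rookInclBarMap (K := k) (G := G) hε h
  exact RookHomology.bijective_torMap_of_isIso _ _ (GRaug_incl k G n ε) q hiso
end
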